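/- arXiv:0708.2227 — 2 statements merged into one kernel-verified Lean document; each statement's English description precedes it below -/
import Mathlib

section
/- Let B be a separable Banach space, (S, 𝒮) a measurable space, P a probability measure on S, and let H : S^k → B be a bounded, strongly measurable function, symmetric in its entries and P-canonical (i.e. ∫_S H(x_1, …, x_{k−1}, y) dP(y) = 0 for all x_1, …, x_{k−1} ∈ S). Let X_1, …, X_n be i.i.d. with law P and let X_i^{(j)}, 1 ≤ i ≤ n, 1 ≤ j ≤ k, be i.i.d. with law P. Let κ and χ_n be any numbers with κ ≥ sup_{x_1,…,x_k ∈ S} ‖H(x_1, …, x_k)‖ and χ_n ≥ (E‖ Σ_{(i_1,…,i_k) ∈ I_n^k} H(X_{i_1}^{(1)}, …, X_{i_k}^{(k)}) ‖²)^{1/2}. Then there exists a constant D_0 depending only on k such that for all n ∈ ℕ and all r ≥ 2, E ‖ Σ_{(i_1,…,i_k) ∈ I_n^k} H(X_{i_1}, …, X_{i_k}) ‖^r ≤ D_0^r [ r^{kr/2} χ_n^r + r^{(k+1)r/2} n^{(k−1)r} κ^r + r^{kr} κ^r ]. -/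
open MeasureTheory Finset
open scoped ENNReal
noncomputable section

/-- The set of `k`-tuples of pairwise distinct indices from `{1, …, n}`. -/
def injTuples (k n : ℕ) : Finset (Fin k → Fin n) :=
  Finset.univ.filter Function.Injective

/-!
*Decoupling*: colour `{1, …, n}` at random with `k` colours and keep only the tuples whose `j`-th
entry has colour `j`. For such tuples each variable `X_i` is used in one position only, and the
restricted undecoupled sum is the conditional expectation of a decoupled sum: integrating out the
other variables kills all remaining tuples, by canonicity. An injective tuple survives
`k ^ (n - k)` of the `k ^ n` colourings, so averaging over colourings recovers the full sum at the
cost of a factor `k ^ k`.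

*Decoupled sums*: given all arrays but the first, the sum is one of independent centred variables
with values in `L²(μ; B)`, where `(T, μ)` is a parameter space; the first array then joins the
parameters, which leaves a decoupled sum of order `k - 1`. Such a sum has `r`-th moment of order
`(√r σ + r κ) ^ r`, with `σ²` its second moment; iterating over the `k` arrays gives one factor
`√r` each. For this Rosenthal inequality, symmetrize and fix the summands: by Maurey's inequality
on the discrete cube, the Rademacher sum deviates from its mean on the scale of the weak variance.
Both the Rademacher average and the weak variance are self-bounding functions of the independent
summands, so Talagrand's control by two points bounds their own moments.
-/

open scoped BigOperators

/-- Measurable functions with values in a bounded interval `[0, M]`: the class, stable under all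
operations needed here, in which every integral below is taken, so that integrability is never an
issue. -/
structure BddNonneg {Ω : Type*} [MeasurableSpace Ω] (f : Ω → ℝ) : Prop where
  measurable : Measurable f
  nonneg : ∀ x, 0 ≤ f x
  bddAbove : ∃ M, ∀ x, f x ≤ M

namespace BddNonneg

variable {Ω Ω' : Type*} [MeasurableSpace Ω] [MeasurableSpace Ω'] {f g : Ω → ℝ}

lemma integrable (hf : BddNonneg f) (μ : Measure Ω) [IsFiniteMeasure μ] : Integrable f μ := by
  obtain ⟨M, hM⟩ := hf.bddAbove
  refine .of_bound hf.measurable.aestronglyMeasurable M (.of_forall fun x => ?_)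
  simpa [abs_of_nonneg (hf.nonneg x)] using hM x

lemma integral_nonneg (hf : BddNonneg f) (μ : Measure Ω) : 0 ≤ ∫ x, f x ∂μ :=
  MeasureTheory.integral_nonneg hf.nonneg

lemma integral_mono (hf : BddNonneg f) (hg : BddNonneg g) (h : ∀ x, f x ≤ g x) (μ : Measure Ω)
    [IsFiniteMeasure μ] : ∫ x, f x ∂μ ≤ ∫ x, g x ∂μ :=
  MeasureTheory.integral_mono (hf.integrable μ) (hg.integrable μ) h

lemma comp (hf : BddNonneg f) {u : Ω' → Ω} (hu : Measurable u) : BddNonneg fun x => f (u x) where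
  measurable := hf.measurable.comp hu
  nonneg _ := hf.nonneg _
  bddAbove := hf.bddAbove.imp fun _ hM _ => hM _

lemma comp_monotone (hf : BddNonneg f) {φ : ℝ → ℝ} (hφ : Measurable φ)
    (hmono : MonotoneOn φ (Set.Ici 0)) (h0 : 0 ≤ φ 0) : BddNonneg fun x => φ (f x) where
  measurable := hφ.comp hf.measurable
  nonneg x := h0.trans (hmono Set.self_mem_Ici (hf.nonneg x) (hf.nonneg x))
  bddAbove := hf.bddAbove.imp' φ fun _ hM x =>
    hmono (hf.nonneg x) ((hf.nonneg x).trans (hM x)) (hM x)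

lemma rpow (hf : BddNonneg f) {p : ℝ} (hp : 0 ≤ p) : BddNonneg fun x => f x ^ p :=
  hf.comp_monotone (by fun_prop) (Real.monotoneOn_rpow_Ici_of_exponent_nonneg hp)
    (Real.rpow_nonneg le_rfl p)

lemma exp_mul (hf : BddNonneg f) {c : ℝ} (hc : 0 ≤ c) : BddNonneg fun x => Real.exp (c * f x) :=
  hf.comp_monotone (φ := fun y => Real.exp (c * y)) (by fun_prop)
    (fun _ _ _ _ h => by dsimp only; gcongr) (by positivity)

lemma const_mul (hf : BddNonneg f) {c : ℝ} (hc : 0 ≤ c) : BddNonneg fun x => c * f x :=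
  hf.comp_monotone (by fun_prop) (fun _ _ _ _ h => mul_le_mul_of_nonneg_left h hc) (by simp)

end BddNonneg

/-! ### A concentration inequality for self-bounding functions -/

lemma add_two_mul_le_three {t w : ℝ≥0∞} (hw : w ≤ 1) (htw : t * w ≤ 1) (ht : t ≤ 2) :
    t + 2 * w ≤ 3 := by
  lift t to NNReal using ne_top_of_le_ne_top (by simp) ht
  lift w to NNReal using ne_top_of_le_ne_top (by simp) hw
  norm_cast at *
  simp only [← NNReal.coe_le_coe, NNReal.coe_add, NNReal.coe_mul] at *
  push_cast at *
  obtain h | h := le_total (w : ℝ) (1 / 2)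
  · linarith
  · have hw0 : (0 : ℝ) < w := by linarith
    have := mul_nonneg (sub_nonneg.2 h) (sub_nonneg.2 hw)
    have : (t : ℝ) ≤ 1 / w := (le_div_iff₀ hw0).2 htw
    have : 1 / (w : ℝ) ≤ 3 - 2 * w := (div_le_iff₀ hw0).2 (by linarith)
    linarith

lemma mul_mul_le_one_of_add_le_three {a b c : ℝ≥0∞} (h : a + b + c ≤ 3) : a * b * c ≤ 1 := by
  lift a to NNReal using by rintro rfl; simp at h
  lift b to NNReal using by rintro rfl; simp at h
  lift c to NNReal using by rintro rfl; simp at h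
  norm_cast at *
  have amgm := NNReal.geom_mean_le_arith_mean3_weighted 3⁻¹ 3⁻¹ 3⁻¹ a b c (by norm_num)
  simp only [← NNReal.mul_rpow, ← mul_add] at amgm
  have : (a * b * c) ^ (3⁻¹ : ℝ) ≤ 1 := amgm.trans (by
    calc 3⁻¹ * (a + b + c) ≤ 3⁻¹ * 3 := by gcongr
      _ = 1 := by norm_num)
  simpa [← NNReal.rpow_mul_natCast] using pow_le_one₀ zero_le this (n := 3)

open Classical in
/-- The number of coordinates of `x` that are matched neither by `y` nor by `z`: the combinatorial
distance from `x` to the pair `y, z` in Talagrand's two-point control. -/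
def missCount {ι S : Type*} [Fintype ι] (x y z : ι → S) : ℕ := #{i | x i ≠ y i ∧ x i ≠ z i}

lemma missCount_finCons_le {S : Type*} {n : ℕ} (a b c : S) (x y z : Fin n → S) :
    missCount (Fin.cons a x : Fin (n + 1) → S) (Fin.cons b y) (Fin.cons c z) ≤
      missCount x y z + 1 := by
  classical
  simp only [missCount, card_filter, Fin.sum_univ_succ, Fin.cons_zero, Fin.cons_succ]
  split_ifs <;> omega

lemma missCount_finCons_of_mem {S : Type*} {n : ℕ} {a b c : S} (h : a = b ∨ a = c)
    (x y z : Fin n → S) :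
    missCount (Fin.cons a x : Fin (n + 1) → S) (Fin.cons b y) (Fin.cons c z) =
      missCount x y z := by
  classical
  simp only [missCount, card_filter, Fin.sum_univ_succ, Fin.cons_zero, Fin.cons_succ]
  rcases h with h | h <;> simp [h]

section TwoPoint

variable {S : Type*} [MeasurableSpace S] (P : Measure S) [IsProbabilityMeasure P]

lemma lintegral_mul_mul_le_one_of_le_two {F G K : S → ℝ≥0∞} (hF : Measurable F)
    (hG : Measurable G) (hG1 : ∀ s, G s ≤ 1) (hK1 : ∀ s, K s ≤ 1)
    (hFG : ∀ s, F s * G s ≤ 1) (hFK : ∀ s, F s * K s ≤ 1) (hF2 : ∀ s, F s ≤ 2) :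
    (∫⁻ s, F s ∂P) * (∫⁻ s, G s ∂P) * ∫⁻ s, K s ∂P ≤ 1 := by
  have hsum (s : S) : F s + G s + K s ≤ 3 := by
    have h : 2 * (F s + G s + K s) ≤ 2 * 3 := by
      calc 2 * (F s + G s + K s) = (F s + 2 * G s) + (F s + 2 * K s) := by ring
        _ ≤ 3 + 3 := add_le_add (add_two_mul_le_three (hG1 s) (hFG s) (hF2 s))
          (add_two_mul_le_three (hK1 s) (hFK s) (hF2 s))
        _ = 2 * 3 := by norm_num
    exact (ENNReal.mul_le_mul_iff_right (by simp) (by simp)).1 h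
  refine mul_mul_le_one_of_add_le_three ?_
  calc (∫⁻ s, F s ∂P) + (∫⁻ s, G s ∂P) + ∫⁻ s, K s ∂P = ∫⁻ s, F s + G s + K s ∂P := by
        rw [lintegral_add_left (by fun_prop), lintegral_add_left hF]
    _ ≤ ∫⁻ _, 3 ∂P := lintegral_mono hsum
    _ = 3 := by simp

lemma lintegral_mul_mul_le_one {F G K : S → ℝ≥0∞} (hF : Measurable F) (hG : Measurable G)
    (hK : Measurable K) (hG1 : ∀ s, G s ≤ 1) (hK1 : ∀ s, K s ≤ 1)
    (hFG : ∀ s s', F s * G s * K s' ≤ 1) (hFK : ∀ s s', F s * G s' * K s ≤ 1)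
    (hF2 : ∀ s s' s'', F s * G s' * K s'' ≤ 2) :
    (∫⁻ s, F s ∂P) * (∫⁻ s, G s ∂P) * ∫⁻ s, K s ∂P ≤ 1 := by
  set g := ⨆ s, G s
  set k := ⨆ s, K s
  have hg_top : g ≠ ∞ := ne_top_of_le_ne_top (by simp) (iSup_le hG1)
  have hk_top : k ≠ ∞ := ne_top_of_le_ne_top (by simp) (iSup_le hK1)
  obtain hg | hg := eq_or_ne g 0
  · simp [ENNReal.iSup_eq_zero.1 hg]
  obtain hk | hk := eq_or_ne k 0
  · simp [ENNReal.iSup_eq_zero.1 hk]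
  have hscaled := lintegral_mul_mul_le_one_of_le_two P (F := fun s => F s * g * k)
    (G := fun s => G s * g⁻¹) (K := fun s => K s * k⁻¹) (by fun_prop) (by fun_prop)
    (fun s => ENNReal.div_le_of_le_mul (by simpa using le_iSup G s))
    (fun s => ENNReal.div_le_of_le_mul (by simpa using le_iSup K s))
    (fun s => by
      calc F s * g * k * (G s * g⁻¹) = F s * G s * k * (g * g⁻¹) := by ring
        _ = F s * G s * k := by rw [ENNReal.mul_inv_cancel hg hg_top, mul_one]
        _ ≤ 1 := by rw [ENNReal.mul_iSup]; exact iSup_le (hFG s))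
    (fun s => by
      calc F s * g * k * (K s * k⁻¹) = F s * g * K s * (k * k⁻¹) := by ring
        _ = F s * g * K s := by rw [ENNReal.mul_inv_cancel hk hk_top, mul_one]
        _ ≤ 1 := by rw [ENNReal.mul_iSup, ENNReal.iSup_mul]; exact iSup_le (hFK s))
    (fun s => by
      simp only [g, k, ENNReal.mul_iSup, ENNReal.iSup_mul]
      exact iSup_le fun s'' => iSup_le fun s' => hF2 s s' s'')
  rw [lintegral_mul_const _ (by fun_prop), lintegral_mul_const _ hF, lintegral_mul_const _ hG,
    lintegral_mul_const _ hK] at hscaled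
  calc (∫⁻ s, F s ∂P) * (∫⁻ s, G s ∂P) * ∫⁻ s, K s ∂P
      = (∫⁻ s, F s ∂P) * (∫⁻ s, G s ∂P) * (∫⁻ s, K s ∂P) * (g * g⁻¹) * (k * k⁻¹) := by
        rw [ENNReal.mul_inv_cancel hg hg_top, ENNReal.mul_inv_cancel hk hk_top, mul_one, mul_one]
    _ = (∫⁻ s, F s ∂P) * g * k * ((∫⁻ s, G s ∂P) * g⁻¹) * ((∫⁻ s, K s ∂P) * k⁻¹) := by ring
    _ ≤ 1 := hscaled

lemma measurable_finCons (n : ℕ) :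
    Measurable fun p : S × (Fin n → S) => (Fin.cons p.1 p.2 : Fin (n + 1) → S) :=
  measurable_pi_lambda _ (Fin.cases measurable_fst fun j => by
    simpa only [Fin.cons_succ] using measurable_snd.eval)

lemma measurePreserving_finCons (n : ℕ) :
    MeasurePreserving (fun p : S × (Fin n → S) => (Fin.cons p.1 p.2 : Fin (n + 1) → S))
      (P.prod (Measure.pi fun _ => P)) (Measure.pi fun _ => P) := by
  convert (measurePreserving_piFinSuccAbove (fun _ : Fin (n + 1) => P) 0).symm using 2
  simp [MeasurableEquiv.piFinSuccAbove, Fin.insertNthEquiv, Fin.insertNth_zero']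

/-- Talagrand's two-point control, as an inequality for three functions. -/
theorem lintegral_pi_mul_mul_le_one {n : ℕ} {f g h : (Fin n → S) → ℝ≥0∞} (hf : Measurable f)
    (hg : Measurable g) (hh : Measurable h) (hg1 : ∀ x, g x ≤ 1) (hh1 : ∀ x, h x ≤ 1)
    (H : ∀ x y z, f x * g y * h z ≤ 2 ^ missCount x y z) :
    (∫⁻ x, f x ∂(Measure.pi fun _ => P)) * (∫⁻ x, g x ∂(Measure.pi fun _ => P)) *
      ∫⁻ x, h x ∂(Measure.pi fun _ => P) ≤ 1 := by
  induction n with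
  | zero =>
    simpa [lintegral_unique, missCount, Subsingleton.elim _ (default : Fin 0 → S)] using
      H default default default
  | succ n ih =>
    have hcons {u : (Fin (n + 1) → S) → ℝ≥0∞} (hu : Measurable u) :
        Measurable fun p : S × (Fin n → S) => u (Fin.cons p.1 p.2) := hu.comp (measurable_finCons n)
    have hfibre {u : (Fin (n + 1) → S) → ℝ≥0∞} (hu : Measurable u) (s : S) :
        Measurable fun x : Fin n → S => u (Fin.cons s x) := (hcons hu).comp measurable_prodMk_left
    have hfubini {u : (Fin (n + 1) → S) → ℝ≥0∞} (hu : Measurable u) :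
        ∫⁻ x, u x ∂(Measure.pi fun _ => P) =
          ∫⁻ s, ∫⁻ x, u (Fin.cons s x) ∂(Measure.pi fun _ => P) ∂P := by
      rw [← (measurePreserving_finCons P n).lintegral_comp hu,
        lintegral_prod _ (hcons hu).aemeasurable]
    have hle_one {u : (Fin (n + 1) → S) → ℝ≥0∞} (hu : ∀ x, u x ≤ 1) (s : S) :
        ∫⁻ x, u (Fin.cons s x) ∂(Measure.pi fun _ => P) ≤ 1 :=
      (lintegral_mono fun x => hu _).trans (by simp)
    rw [hfubini hf, hfubini hg, hfubini hh]
    refine lintegral_mul_mul_le_one P (hcons hf).lintegral_prod_right'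
      (hcons hg).lintegral_prod_right' (hcons hh).lintegral_prod_right' (hle_one hg1)
      (hle_one hh1) (fun s s' => ?_) (fun s s' => ?_) (fun s s' s'' => ?_)
    · refine ih (hfibre hf s) (hfibre hg s) (hfibre hh s') (fun _ => hg1 _) (fun _ => hh1 _)
        fun x y z => (H _ _ _).trans_eq ?_
      rw [missCount_finCons_of_mem (.inl rfl)]
    · refine ih (hfibre hf s) (hfibre hg s') (hfibre hh s) (fun _ => hg1 _) (fun _ => hh1 _)
        fun x y z => (H _ _ _).trans_eq ?_
      rw [missCount_finCons_of_mem (.inr rfl)]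
    · have hhalf := ih ((hfibre hf s).const_mul 2⁻¹) (hfibre hg s') (hfibre hh s'')
        (fun _ => hg1 _) (fun _ => hh1 _) fun x y z => by
          rw [mul_assoc, mul_assoc, ENNReal.inv_mul_le_iff (by simp) (by simp), ← mul_assoc,
            ← pow_succ']
          exact (H _ _ _).trans (pow_le_pow_right₀ (by simp) (missCount_finCons_le _ _ _ _ _ _))
      rwa [lintegral_const_mul _ (hfibre hf s), mul_assoc, mul_assoc,
        ENNReal.inv_mul_le_iff (by simp) (by simp), mul_one, ← mul_assoc] at hhalf

lemma integral_pi_mul_mul_le_one {n : ℕ} {f g h : (Fin n → S) → ℝ} (hf : BddNonneg f)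
    (hg : BddNonneg g) (hh : BddNonneg h) (hg1 : ∀ x, g x ≤ 1) (hh1 : ∀ x, h x ≤ 1)
    (H : ∀ x y z, f x * g y * h z ≤ 2 ^ missCount x y z) :
    (∫ x, f x ∂(Measure.pi fun _ => P)) * (∫ x, g x ∂(Measure.pi fun _ => P)) *
      ∫ x, h x ∂(Measure.pi fun _ => P) ≤ 1 := by
  have key := lintegral_pi_mul_mul_le_one P hf.measurable.ennreal_ofReal
    hg.measurable.ennreal_ofReal hh.measurable.ennreal_ofReal
    (fun x => ENNReal.ofReal_le_one.2 (hg1 x)) (fun x => ENNReal.ofReal_le_one.2 (hh1 x))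
    fun x y z => by
      rw [← ENNReal.ofReal_mul (hf.nonneg x),
        ← ENNReal.ofReal_mul (mul_nonneg (hf.nonneg x) (hg.nonneg y)), ← ENNReal.ofReal_ofNat 2,
        ← ENNReal.ofReal_pow zero_le_two]
      exact ENNReal.ofReal_le_ofReal (H x y z)
  rwa [← ofReal_integral_eq_lintegral_ofReal (hf.integrable _) (.of_forall hf.nonneg),
    ← ofReal_integral_eq_lintegral_ofReal (hg.integrable _) (.of_forall hg.nonneg),
    ← ofReal_integral_eq_lintegral_ofReal (hh.integrable _) (.of_forall hh.nonneg),
    ← ENNReal.ofReal_mul (hf.integral_nonneg _),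
    ← ENNReal.ofReal_mul (mul_nonneg (hf.integral_nonneg _) (hg.integral_nonneg _)),
    ENNReal.ofReal_le_one] at key

end TwoPoint

lemma rpow_le_mul_exp {x s c : ℝ} (hx : 0 ≤ x) (hs : 0 < s) (hc : 0 < c) :
    x ^ s ≤ (s / c) ^ s * Real.exp (c * x) := by
  have hlin : x ≤ s / c * Real.exp (c * x / s) := by
    calc x = s / c * (c * x / s) := by field_simp
      _ ≤ s / c * Real.exp (c * x / s) := by
        gcongr; linarith [Real.add_one_le_exp (c * x / s)]
  calc x ^ s ≤ (s / c * Real.exp (c * x / s)) ^ s := by gcongr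
    _ = (s / c) ^ s * Real.exp (c * x) := by
      rw [Real.mul_rpow (by positivity) (by positivity), ← Real.exp_mul, div_mul_cancel₀ _ hs.ne']

/-- The two-point form of self-boundedness: up to `κ` per coordinate of `x` that neither `y` nor `z`
matches, the value at `x` is controlled by the values at `y` and `z`. Norms of sums of independent
terms and weak variances are of this kind. -/
def IsSelfBounding {ι S : Type*} [Fintype ι] (κ : ℝ) (F : (ι → S) → ℝ) : Prop :=
  ∀ x y z, F x ≤ F y + F z + κ * missCount x y z

section SelfBounding

variable {S : Type*} [MeasurableSpace S] (P : Measure S) [IsProbabilityMeasure P] {n : ℕ}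
  {F : (Fin n → S) → ℝ} {κ : ℝ}

lemma IsSelfBounding.integral_exp_le (h : IsSelfBounding κ F) (hF : BddNonneg F) {c : ℝ}
    (hc : 0 ≤ c) (hcκ : c * κ ≤ Real.log 2) :
    ∫ x, Real.exp (c * F x) ∂(Measure.pi fun _ => P) ≤
      Real.exp (2 * (c * ∫ x, F x ∂(Measure.pi fun _ => P))) := by
  set μ := Measure.pi fun _ : Fin n => P
  set E := ∫ x, F x ∂μ
  have hcF (x) : 0 ≤ c * F x := mul_nonneg hc (hF.nonneg x)
  have hneg : BddNonneg fun x => Real.exp (-(c * F x)) :=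
    ⟨by have := hF.measurable; fun_prop, fun x => by positivity,
      1, fun x => Real.exp_le_one_iff.2 (neg_nonpos.2 (hcF x))⟩
  have hjensen : Real.exp (-(c * E)) ≤ ∫ x, Real.exp (-(c * F x)) ∂μ := by
    have := convexOn_exp.map_integral_le Real.continuous_exp.continuousOn isClosed_univ (μ := μ)
      (f := fun x => -(c * F x)) (by simp) ((hF.integrable μ).const_mul c).neg
      (hneg.integrable μ)
    rwa [integral_neg, integral_const_mul] at this
  have key : (∫ x, Real.exp (c * F x) ∂μ) * (∫ x, Real.exp (-(c * F x)) ∂μ) *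
      ∫ x, Real.exp (-(c * F x)) ∂μ ≤ 1 := by
    refine integral_pi_mul_mul_le_one P (hF.exp_mul hc) hneg hneg (fun x => ?_) (fun x => ?_)
      fun x y z => ?_
    · simpa using hcF x
    · simpa using hcF x
    · calc Real.exp (c * F x) * Real.exp (-(c * F y)) * Real.exp (-(c * F z))
          = Real.exp (c * F x + -(c * F y) + -(c * F z)) := by rw [Real.exp_add, Real.exp_add]
        _ ≤ Real.exp (missCount x y z * Real.log 2) := by
          gcongr
          nlinarith [mul_le_mul_of_nonneg_left (h x y z) hc,
            mul_le_mul_of_nonneg_left hcκ (missCount x y z).cast_nonneg (α := ℝ)]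
        _ = 2 ^ missCount x y z := by rw [Real.exp_nat_mul, Real.exp_log two_pos]
  have hE : (∫ x, Real.exp (c * F x) ∂μ) * Real.exp (-(c * E)) * Real.exp (-(c * E)) ≤ 1 :=
    le_trans (by gcongr) key
  rwa [mul_assoc, ← Real.exp_add, ← le_div_iff₀ (by positivity), one_div, ← Real.exp_neg,
    ← neg_add, neg_neg, ← two_mul] at hE

theorem IsSelfBounding.integral_rpow_le (h : IsSelfBounding κ F) (hF : BddNonneg F) (hκ : 0 < κ)
    {s : ℝ} (hs : 0 < s) :
    ∫ x, F x ^ s ∂(Measure.pi fun _ => P) ≤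
      (8 * (∫ x, F x ∂(Measure.pi fun _ => P) + s * κ)) ^ s := by
  set μ := Measure.pi fun _ : Fin n => P
  set E := ∫ x, F x ∂μ
  have hE : 0 ≤ E := hF.integral_nonneg μ
  set D := E + s * κ
  have hD : 0 < D := by positivity
  have hlog : 0 < Real.log 2 := Real.log_pos one_lt_two
  set c := s * Real.log 2 / D
  have hc : 0 < c := by positivity
  have hexp : ∫ x, Real.exp (c * F x) ∂μ ≤ 4 ^ s := by
    calc ∫ x, Real.exp (c * F x) ∂μ ≤ Real.exp (2 * (c * E)) :=
          h.integral_exp_le P hF hc.le (by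
            rw [div_mul_eq_mul_div, div_le_iff₀ hD]; nlinarith)
      _ ≤ Real.exp (Real.log 4 * s) := by
          have : c * E ≤ s * Real.log 2 := by
            rw [div_mul_eq_mul_div, div_le_iff₀ hD]
            gcongr
            exact le_add_of_nonneg_right (by positivity)
          rw [show (4 : ℝ) = 2 ^ 2 by norm_num, Real.log_pow]
          refine Real.exp_le_exp.2 ?_
          push_cast; linarith
      _ = 4 ^ s := (Real.rpow_def_of_pos (by norm_num) s).symm
  calc ∫ x, F x ^ s ∂μ ≤ ∫ x, (s / c) ^ s * Real.exp (c * F x) ∂μ :=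
        (hF.rpow hs.le).integral_mono ((hF.exp_mul hc.le).const_mul (by positivity))
          (fun x => rpow_le_mul_exp (hF.nonneg x) hs hc) μ
    _ = (s / c) ^ s * ∫ x, Real.exp (c * F x) ∂μ := integral_const_mul _ _
    _ ≤ (s / c) ^ s * 4 ^ s := by gcongr
    _ = (s / c * 4) ^ s := (Real.mul_rpow (by positivity) (by norm_num)).symm
    _ ≤ (8 * D) ^ s := by
      refine Real.rpow_le_rpow (by positivity) ?_ hs.le
      calc s / c * 4 = 4 / Real.log 2 * D := by simp only [c]; field_simp
        _ ≤ 8 * D := by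
          gcongr
          rw [div_le_iff₀ hlog]
          linarith [Real.log_two_gt_d9]

end SelfBounding

/-! ### Maurey's inequality on the discrete cube -/

lemma expect_rpow_mul_rpow_le {ι : Type*} [Fintype ι] [Nonempty ι] {f g : ι → ℝ}
    (hf : ∀ i, 0 < f i) (hg : ∀ i, 0 < g i) {θ : ℝ} (h0 : 0 ≤ θ) (h1 : θ ≤ 1) :
    𝔼 i, f i ^ (1 - θ) * g i ^ θ ≤ (𝔼 i, f i) ^ (1 - θ) * (𝔼 i, g i) ^ θ := by
  have hA : 0 < 𝔼 i, f i := expect_pos (fun i _ => hf i) univ_nonempty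
  have hB : 0 < 𝔼 i, g i := expect_pos (fun i _ => hg i) univ_nonempty
  set A := 𝔼 i, f i
  set B := 𝔼 i, g i
  have hyoung (i : ι) : f i ^ (1 - θ) * g i ^ θ ≤
      A ^ (1 - θ) * B ^ θ * ((1 - θ) / A * f i + θ / B * g i) := by
    calc f i ^ (1 - θ) * g i ^ θ
        = A ^ (1 - θ) * B ^ θ * ((f i / A) ^ (1 - θ) * (g i / B) ^ θ) := by
          rw [Real.div_rpow (hf i).le hA.le, Real.div_rpow (hg i).le hB.le]
          field_simp
      _ ≤ A ^ (1 - θ) * B ^ θ * ((1 - θ) * (f i / A) + θ * (g i / B)) := by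
          gcongr
          exact Real.geom_mean_le_arith_mean2_weighted (sub_nonneg.2 h1) h0
            (div_pos (hf i) hA).le (div_pos (hg i) hB).le (by ring)
      _ = A ^ (1 - θ) * B ^ θ * ((1 - θ) / A * f i + θ / B * g i) := by ring
  calc 𝔼 i, f i ^ (1 - θ) * g i ^ θ
      ≤ 𝔼 i, A ^ (1 - θ) * B ^ θ * ((1 - θ) / A * f i + θ / B * g i) :=
        expect_le_expect fun i _ => hyoung i
    _ = A ^ (1 - θ) * B ^ θ * ((1 - θ) / A * A + θ / B * B) := by
        rw [← mul_expect, expect_add_distrib, ← mul_expect, ← mul_expect]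
    _ = A ^ (1 - θ) * B ^ θ := by
        rw [div_mul_cancel₀ _ hA.ne', div_mul_cancel₀ _ hB.ne']; ring

lemma map_expect_le {s : Set ℝ} {φ : ℝ → ℝ} (hφ : ConvexOn ℝ s φ) {ι : Type*} [Fintype ι]
    [Nonempty ι] {u : ι → ℝ} (hu : ∀ i, u i ∈ s) : φ (𝔼 i, u i) ≤ 𝔼 i, φ (u i) := by
  have := hφ.map_sum_le (t := univ) (w := fun _ : ι => (Fintype.card ι : ℝ)⁻¹) (p := u)
    (fun _ _ => by positivity) (by simp) (fun i _ => hu i)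
  simpa only [smul_eq_mul, ← mul_sum, Fintype.expect_eq_sum_div_card, div_eq_inv_mul] using this

/-- Inf-convolution with the quadratic cost `|·|² / 16`, the cost for which Maurey's inequality
holds for convex functions and signs. -/
def infConv {ι : Type*} [Fintype ι] (b : (ι → ℝ) → ℝ) (x : ι → ℝ) : ℝ :=
  ⨅ y, b y + (∑ i, (x i - y i) ^ 2) / 16

lemma infConv_le {ι : Type*} [Fintype ι] {b : (ι → ℝ) → ℝ} (hb : ∀ y, 0 ≤ b y) (x y : ι → ℝ) :
    infConv b x ≤ b y + (∑ i, (x i - y i) ^ 2) / 16 :=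
  ciInf_le ⟨0, by rintro _ ⟨z, rfl⟩; have := hb z; positivity⟩ y

lemma smul_finCons_add_smul_finCons {n : ℕ} (p q s t : ℝ) (y z : Fin n → ℝ) :
    p • (Fin.cons s y : Fin (n + 1) → ℝ) + q • (Fin.cons t z : Fin (n + 1) → ℝ) =
      Fin.cons (p * s + q * t) (p • y + q • z) := by
  ext i
  cases i using Fin.cases <;> simp

lemma convexOn_comp_finCons {n : ℕ} {b : (Fin (n + 1) → ℝ) → ℝ} (hb : ConvexOn ℝ Set.univ b)
    (s : ℝ) : ConvexOn ℝ Set.univ fun y : Fin n → ℝ => b (Fin.cons s y) := by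
  refine ⟨convex_univ, fun y _ z _ p q hp hq hpq => ?_⟩
  have := hb.2 (Set.mem_univ (Fin.cons s y)) (Set.mem_univ (Fin.cons s z)) hp hq hpq
  rwa [smul_finCons_add_smul_finCons, ← add_mul, hpq, one_mul] at this

lemma infConv_finCons_le {n : ℕ} {b : (Fin (n + 1) → ℝ) → ℝ} (hb : ConvexOn ℝ Set.univ b)
    (hb0 : ∀ y, 0 ≤ b y) (s t : ℝ) (x : Fin n → ℝ) {θ : ℝ} (h0 : 0 ≤ θ) (h1 : θ ≤ 1) :
    infConv b (Fin.cons s x) ≤ (1 - θ) * infConv (fun y => b (Fin.cons s y)) x +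
      θ * infConv (fun y => b (Fin.cons t y)) x + θ ^ 2 * (s - t) ^ 2 / 16 := by
  refine le_of_forall_pos_le_add fun δ hδ => ?_
  obtain ⟨y, hy⟩ := exists_lt_of_ciInf_lt
    (lt_add_of_pos_right (infConv (fun y => b (Fin.cons s y)) x) hδ)
  obtain ⟨z, hz⟩ := exists_lt_of_ciInf_lt
    (lt_add_of_pos_right (infConv (fun y => b (Fin.cons t y)) x) hδ)
  have hinf := infConv_le hb0 (Fin.cons s x)
    (Fin.cons ((1 - θ) * s + θ * t) ((1 - θ) • y + θ • z))
  have hconv := hb.2 (Set.mem_univ (Fin.cons s y)) (Set.mem_univ (Fin.cons t z))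
    (sub_nonneg.2 h1) h0 (by ring)
  rw [smul_finCons_add_smul_finCons, smul_eq_mul, smul_eq_mul] at hconv
  have hquad : (∑ i, (x i - ((1 - θ) • y + θ • z) i) ^ 2) ≤
      (1 - θ) * (∑ i, (x i - y i) ^ 2) + θ * (∑ i, (x i - z i) ^ 2) := by
    rw [mul_sum, mul_sum, ← sum_add_distrib]
    refine sum_le_sum fun i _ => ?_
    simp only [Pi.add_apply, Pi.smul_apply, smul_eq_mul]
    nlinarith [mul_nonneg (mul_nonneg h0 (sub_nonneg.2 h1)) (sq_nonneg (y i - z i))]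
  have hhead : (s - ((1 - θ) * s + θ * t)) ^ 2 = θ ^ 2 * (s - t) ^ 2 := by ring
  simp only [Fin.sum_univ_succ, Fin.cons_zero, Fin.cons_succ, hhead] at hinf
  have hy' := mul_le_mul_of_nonneg_left hy.le (sub_nonneg.2 h1)
  have hz' := mul_le_mul_of_nonneg_left hz.le h0
  linarith

lemma exists_one_add_exp_mul_le {a : ℝ} (ha : 0 ≤ a) : ∃ θ, 0 ≤ θ ∧ θ ≤ 1 ∧
    (1 + Real.exp (-a)) * (1 + Real.exp (θ ^ 2 / 4 + (1 - θ) * a)) ≤ 4 := by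
  have hneg {x : ℝ} (h0 : 0 ≤ x) : Real.exp (-x) ≤ 1 - x + x ^ 2 / 2 := by
    rw [Real.exp_neg, inv_le_comm₀ (Real.exp_pos _) (by nlinarith [sq_nonneg (x - 1)])]
    refine le_trans ?_ (Real.quadratic_le_exp_of_nonneg h0)
    rw [inv_le_iff_one_le_mul₀ (by nlinarith [sq_nonneg (x - 1)])]
    nlinarith [sq_nonneg (x ^ 2)]
  have hpos {x : ℝ} (h0 : 0 ≤ x) (h1 : x ≤ 1) : Real.exp x ≤ 1 + x + x ^ 2 := by
    linarith [(abs_le.1 (Real.abs_exp_sub_one_sub_id_le (abs_le.2 ⟨by linarith, h1⟩))).2]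
  obtain h | h := le_total a (1 / 2)
  · refine ⟨2 * a, by linarith, by linarith, ?_⟩
    have hexp : (2 * a) ^ 2 / 4 + (1 - 2 * a) * a = a - a ^ 2 := by ring
    rw [hexp]
    calc (1 + Real.exp (-a)) * (1 + Real.exp (a - a ^ 2))
        ≤ (1 + (1 - a + a ^ 2 / 2)) * (1 + (1 + (a - a ^ 2) + (a - a ^ 2) ^ 2)) := by
          gcongr
          · nlinarith [sq_nonneg a]
          · exact hneg ha
          · exact hpos (by nlinarith) (by nlinarith)
      _ ≤ 4 := by
          have h3 : 0 ≤ a ^ 3 := by positivity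
          nlinarith [mul_nonneg h3 ha, mul_nonneg h3 (sub_nonneg.2 h),
            mul_nonneg (mul_nonneg h3 ha) (sub_nonneg.2 h),
            mul_nonneg (mul_nonneg (mul_nonneg h3 ha) ha) (sub_nonneg.2 h)]
  · refine ⟨1, zero_le_one, le_rfl, ?_⟩
    calc (1 + Real.exp (-a)) * (1 + Real.exp (1 ^ 2 / 4 + (1 - 1) * a))
        ≤ (1 + Real.exp (-(1 / 2))) * (1 + Real.exp (1 / 4)) := by
          gcongr; linarith
      _ ≤ (1 + (1 - 1 / 2 + (1 / 2) ^ 2 / 2)) * (1 + (1 + 1 / 4 + (1 / 4) ^ 2)) := by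
          gcongr
          · exact hneg (by norm_num)
          · exact hpos (by norm_num) (by norm_num)
      _ ≤ 4 := by norm_num

/-- The Rademacher sign encoded by a Boolean. -/
def sgn (σ : Bool) : ℝ := if σ then 1 else -1

lemma expect_finCons {n : ℕ} (f : (Fin (n + 1) → Bool) → ℝ) :
    𝔼 ε, f ε = (𝔼 ε : Fin n → Bool, f (Fin.cons true ε) +
      𝔼 ε : Fin n → Bool, f (Fin.cons false ε)) / 2 := by
  rw [← Fintype.expect_equiv (Fin.consEquiv fun _ : Fin (n + 1) => Bool)
      (fun p => f (Fin.cons p.1 p.2)) f fun _ => rfl,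
    ← univ_product_univ, expect_product, Fintype.expect_eq_sum_div_card, Fintype.sum_bool]
  simp

/-- The two-point case of Maurey's inequality: `A`, `B` are the Laplace transforms of the two
restrictions of `b`, `pA`, `pB` those of their inf-convolutions, `sA`, `sB` the two halves of that
of the inf-convolution of `b`. -/
lemma maurey_two_point {A B pA pB sA sB : ℝ} (hA : 0 < A) (hB : 0 < B) (hBA : B ≤ A)
    (hpA0 : 0 ≤ pA) (hpB0 : 0 ≤ pB) (hpA : pA * A ≤ 1) (hpB : pB * B ≤ 1)
    (hsA : sA ≤ pA)
    (hsB : ∀ θ : ℝ, 0 ≤ θ → θ ≤ 1 → sB ≤ Real.exp (θ ^ 2 / 4) * (pB ^ (1 - θ) * pA ^ θ)) :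
    (sA + sB) * (A + B) ≤ 4 := by
  obtain ⟨a, ha⟩ : ∃ a, A / B = Real.exp a := ⟨_, (Real.exp_log (div_pos hA hB)).symm⟩
  obtain ⟨θ, h0, h1, hθ⟩ := exists_one_add_exp_mul_le
    (Real.one_le_exp_iff.1 (ha ▸ (one_le_div hB).2 hBA))
  have hA_inv : pA ≤ 1 / A := (le_div_iff₀ hA).2 hpA
  have hB_inv : pB ≤ 1 / A * Real.exp a := by
    rw [← ha, one_div, inv_mul_eq_div, div_div_cancel_left' hA.ne']
    simpa using (le_div_iff₀ hB).2 hpB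
  have hpow : pB ^ (1 - θ) * pA ^ θ ≤ 1 / A * Real.exp ((1 - θ) * a) := by
    have := sub_nonneg.2 h1
    calc pB ^ (1 - θ) * pA ^ θ ≤ (1 / A * Real.exp a) ^ (1 - θ) * (1 / A) ^ θ := by gcongr
      _ = 1 / A * Real.exp ((1 - θ) * a) := by
        rw [Real.mul_rpow (by positivity) (by positivity), mul_right_comm,
          ← Real.rpow_add (by positivity), sub_add_cancel, Real.rpow_one, ← Real.exp_mul,
          mul_comm a]
  calc (sA + sB) * (A + B)
      ≤ (1 / A + Real.exp (θ ^ 2 / 4) * (1 / A * Real.exp ((1 - θ) * a))) * (A + B) := by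
        gcongr
        · exact hsA.trans hA_inv
        · exact (hsB θ h0 h1).trans (by gcongr)
    _ = (1 + Real.exp (-a)) * (1 + Real.exp (θ ^ 2 / 4 + (1 - θ) * a)) := by
        rw [Real.exp_neg, ← ha, Real.exp_add]; field_simp
    _ ≤ 4 := hθ

lemma expect_exp_infConv_finCons_le {n : ℕ} {b : (Fin (n + 1) → ℝ) → ℝ}
    (hb : ConvexOn ℝ Set.univ b) (hb0 : ∀ y, 0 ≤ b y) (σ : Bool) {θ : ℝ} (h0 : 0 ≤ θ)
    (h1 : θ ≤ 1) :
    𝔼 ε : Fin n → Bool, Real.exp (infConv b (Fin.cons (sgn σ) (sgn ∘ ε))) ≤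
      Real.exp (θ ^ 2 / 4) *
        ((𝔼 ε : Fin n → Bool, Real.exp (infConv (fun y => b (Fin.cons (sgn σ) y)) (sgn ∘ ε)))
            ^ (1 - θ) *
          (𝔼 ε : Fin n → Bool, Real.exp (infConv (fun y => b (Fin.cons (sgn (!σ)) y)) (sgn ∘ ε)))
            ^ θ) := by
  have hsq : (sgn σ - sgn (!σ)) ^ 2 = 4 := by cases σ <;> norm_num [sgn]
  refine le_trans ?_ (mul_le_mul_of_nonneg_left
    (expect_rpow_mul_rpow_le (fun _ => Real.exp_pos _) (fun _ => Real.exp_pos _) h0 h1)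
    (Real.exp_pos _).le)
  rw [mul_expect]
  refine expect_le_expect fun ε _ => ?_
  rw [← Real.exp_mul, ← Real.exp_mul, ← Real.exp_add, ← Real.exp_add]
  gcongr
  have := infConv_finCons_le hb hb0 (sgn σ) (sgn (!σ)) (sgn ∘ ε) h0 h1
  rw [hsq] at this
  linarith

lemma comp_sgn_finCons {n : ℕ} (σ : Bool) (ε : Fin n → Bool) :
    sgn ∘ (Fin.cons σ ε : Fin (n + 1) → Bool) = Fin.cons (sgn σ) (sgn ∘ ε) :=
  Fin.comp_cons sgn σ ε

theorem expect_exp_infConv_mul_le_one {n : ℕ} {b : (Fin n → ℝ) → ℝ}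
    (hb : ConvexOn ℝ Set.univ b) (hb0 : ∀ y, 0 ≤ b y) :
    (𝔼 ε : Fin n → Bool, Real.exp (infConv b (sgn ∘ ε))) *
      𝔼 ε : Fin n → Bool, Real.exp (-b (sgn ∘ ε)) ≤ 1 := by
  induction n with
  | zero =>
    have hle (x : Fin 0 → ℝ) : infConv b x ≤ b x := by simpa using infConv_le hb0 x x
    rw [Fintype.expect_eq_sum_div_card, Fintype.expect_eq_sum_div_card]
    simp only [Fintype.sum_unique, Fintype.card_unique, Nat.cast_one, div_one, ← Real.exp_add,
      Real.exp_le_one_iff, ← sub_eq_add_neg, sub_nonpos]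
    exact hle _
  | succ n ih =>
    set p : Bool → ℝ := fun σ =>
      𝔼 ε : Fin n → Bool, Real.exp (infConv (fun y => b (Fin.cons (sgn σ) y)) (sgn ∘ ε))
    set A : Bool → ℝ := fun σ =>
      𝔼 ε : Fin n → Bool, Real.exp (-b (Fin.cons (sgn σ) (sgn ∘ ε)))
    set s : Bool → ℝ := fun σ =>
      𝔼 ε : Fin n → Bool, Real.exp (infConv b (Fin.cons (sgn σ) (sgn ∘ ε)))
    have hp (σ : Bool) : 0 ≤ p σ := expect_nonneg fun _ _ => (Real.exp_pos _).le
    have hA (σ : Bool) : 0 < A σ := expect_pos (fun _ _ => Real.exp_pos _) univ_nonempty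
    have hpA (σ : Bool) : p σ * A σ ≤ 1 := ih (convexOn_comp_finCons hb _) fun _ => hb0 _
    have hs (σ : Bool) (θ : ℝ) (h0 : 0 ≤ θ) (h1 : θ ≤ 1) :
        s σ ≤ Real.exp (θ ^ 2 / 4) * (p σ ^ (1 - θ) * p (!σ) ^ θ) :=
      expect_exp_infConv_finCons_le hb hb0 σ h0 h1
    have hs0 (σ : Bool) : s σ ≤ p σ := by simpa using hs σ 0 le_rfl zero_le_one
    have hmain : (s true + s false) * (A true + A false) ≤ 4 := by
      obtain h | h := le_total (A false) (A true)
      · exact maurey_two_point (hA _) (hA _) h (hp _) (hp _) (hpA _) (hpA _) (hs0 _) (hs false)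
      · rw [add_comm (s true), add_comm (A true)]
        exact maurey_two_point (hA _) (hA _) h (hp _) (hp _) (hpA _) (hpA _) (hs0 _) (hs true)
    rw [expect_finCons, expect_finCons]
    simp only [comp_sgn_finCons]
    change (s true + s false) / 2 * ((A true + A false) / 2) ≤ 1
    linarith

/-! ### Rademacher sums -/

section Rademacher

variable {V : Type*} [NormedAddCommGroup V] [NormedSpace ℝ V]

lemma convexOn_norm_sum_smul {ι : Type*} [Fintype ι] (v : ι → V) :
    ConvexOn ℝ Set.univ fun a : ι → ℝ => ‖∑ i, a i • v i‖ := by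
  simpa only [Function.comp_def, Fintype.linearCombination_apply, Set.preimage_univ] using
    (convexOn_norm (convex_univ (𝕜 := ℝ) (E := V))).comp_linearMap
      (Fintype.linearCombination ℝ v)

lemma le_infConv_norm_sum_smul {ι : Type*} [Fintype ι] {v : ι → V} {W : ℝ} (hW0 : 0 ≤ W)
    (hW : ∀ a : ι → ℝ, ‖∑ i, a i • v i‖ ^ 2 ≤ W * ∑ i, a i ^ 2) {c : ℝ} (hc : 0 ≤ c)
    (x : ι → ℝ) :
    c * ‖∑ i, x i • v i‖ - 4 * c ^ 2 * W ≤ infConv (fun a => c * ‖∑ i, a i • v i‖) x := by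
  refine le_ciInf fun y => ?_
  have htri : ‖∑ i, x i • v i‖ ≤ ‖∑ i, y i • v i‖ + ‖∑ i, (x i - y i) • v i‖ := by
    simp only [sub_smul, sum_sub_distrib]
    exact norm_le_norm_add_norm_sub' _ _
  have hdiff := mul_le_mul_of_nonneg_left (hW fun i => x i - y i) (sq_nonneg c)
  set t := ‖∑ i, (x i - y i) • v i‖
  set Q := ∑ i, (x i - y i) ^ 2
  have : 0 ≤ Q := sum_nonneg fun i _ => sq_nonneg _
  have hamgm : c * t ≤ 4 * c ^ 2 * W + Q / 16 :=
    le_of_sq_le_sq (by linarith [sq_nonneg (4 * c ^ 2 * W - Q / 16)]) (by positivity)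
  linarith [mul_le_mul_of_nonneg_left htri hc]

variable {n : ℕ} {v : Fin n → V} {W : ℝ}

lemma expect_exp_mul_norm_le (hW0 : 0 ≤ W)
    (hW : ∀ a : Fin n → ℝ, ‖∑ i, a i • v i‖ ^ 2 ≤ W * ∑ i, a i ^ 2) {c : ℝ} (hc : 0 ≤ c) :
    𝔼 ε : Fin n → Bool, Real.exp (c * ‖∑ i, sgn (ε i) • v i‖) ≤
      Real.exp (4 * c ^ 2 * W + c * 𝔼 ε : Fin n → Bool, ‖∑ i, sgn (ε i) • v i‖) := by
  set b : (Fin n → ℝ) → ℝ := fun a => c * ‖∑ i, a i • v i‖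
  have hmaurey := expect_exp_infConv_mul_le_one
    ((convexOn_norm_sum_smul v).smul hc : ConvexOn ℝ Set.univ b) fun _ => by positivity
  have hlower : Real.exp (-(4 * c ^ 2 * W)) *
      𝔼 ε : Fin n → Bool, Real.exp (c * ‖∑ i, sgn (ε i) • v i‖) ≤
        𝔼 ε : Fin n → Bool, Real.exp (infConv b (sgn ∘ ε)) := by
    rw [mul_expect]
    refine expect_le_expect fun ε _ => ?_
    rw [← Real.exp_add, neg_add_eq_sub]
    gcongr
    exact le_infConv_norm_sum_smul hW0 hW hc _
  have hjensen : Real.exp (-(c * 𝔼 ε : Fin n → Bool, ‖∑ i, sgn (ε i) • v i‖)) ≤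
      𝔼 ε : Fin n → Bool, Real.exp (-b (sgn ∘ ε)) := by
    rw [mul_expect, ← expect_neg_distrib]
    exact map_expect_le convexOn_exp fun _ => Set.mem_univ _
  have hprod := (mul_le_mul hlower hjensen (Real.exp_pos _).le
    (expect_nonneg fun _ _ => (Real.exp_pos _).le)).trans hmaurey
  rwa [mul_right_comm, ← Real.exp_add, ← neg_add, Real.exp_neg,
    inv_mul_le_one₀ (Real.exp_pos _)] at hprod

lemma expect_norm_rpow_le (hW0 : 0 ≤ W)
    (hW : ∀ a : Fin n → ℝ, ‖∑ i, a i • v i‖ ^ 2 ≤ W * ∑ i, a i ^ 2) {r D : ℝ} (hr : 0 < r)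
    (hD : 0 < D) (hYD : 𝔼 ε : Fin n → Bool, ‖∑ i, sgn (ε i) • v i‖ ≤ D) (hWD : r * W ≤ D ^ 2) :
    𝔼 ε : Fin n → Bool, ‖∑ i, sgn (ε i) • v i‖ ^ r ≤ (Real.exp 5 * D) ^ r := by
  have hexponent : 4 * (r / D) ^ 2 * W + r / D * 𝔼 ε : Fin n → Bool, ‖∑ i, sgn (ε i) • v i‖ ≤
      5 * r := by
    have hquad : 4 * (r / D) ^ 2 * W ≤ 4 * r := by
      rw [show 4 * (r / D) ^ 2 * W = 4 * r * (r * W / D ^ 2) by ring]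
      exact mul_le_of_le_one_right (by positivity) ((div_le_one (by positivity)).2 hWD)
    have hlin : r / D * 𝔼 ε : Fin n → Bool, ‖∑ i, sgn (ε i) • v i‖ ≤ r := by
      rw [div_mul_eq_mul_div]
      exact div_le_of_le_mul₀ hD.le hr.le (by gcongr)
    linarith
  calc 𝔼 ε : Fin n → Bool, ‖∑ i, sgn (ε i) • v i‖ ^ r
      ≤ 𝔼 ε : Fin n → Bool, D ^ r * Real.exp (r / D * ‖∑ i, sgn (ε i) • v i‖) := by
        refine expect_le_expect fun ε _ => ?_
        simpa [div_div_cancel₀ hr.ne'] using rpow_le_mul_exp (norm_nonneg _) hr (div_pos hr hD)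
    _ ≤ D ^ r * Real.exp (5 * r) := by
        rw [← mul_expect]
        gcongr
        exact (expect_exp_mul_norm_le hW0 hW (by positivity)).trans (by gcongr)
    _ = (Real.exp 5 * D) ^ r := by
        rw [Real.mul_rpow (Real.exp_pos _).le hD.le, ← Real.exp_mul, mul_comm]

end Rademacher

/-! ### Rademacher averages and weak variances -/

lemma abs_sgn (σ : Bool) : |sgn σ| = 1 := by cases σ <;> simp [sgn]

lemma sgn_mul_self (σ : Bool) : sgn σ * sgn σ = 1 := by cases σ <;> simp [sgn]

lemma expect_sq_sum_sgn_mul {n : ℕ} (x : Fin n → ℝ) :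
    𝔼 ε : Fin n → Bool, (∑ i, sgn (ε i) * x i) ^ 2 = ∑ i, x i ^ 2 := by
  induction n with
  | zero => simp
  | succ n ih =>
    rw [expect_finCons, ← expect_add_distrib, Fin.sum_univ_succ, ← ih]
    simp only [Fin.sum_univ_succ, Fin.cons_zero, Fin.cons_succ, sgn, if_true, Bool.false_eq_true,
      if_false]
    rw [eq_comm, eq_div_iff two_ne_zero, add_mul, expect_mul,
      ← Fintype.expect_const (ι := Fin n → Bool) (x 0 ^ 2 * 2), ← expect_add_distrib]
    exact expect_congr rfl fun ε _ => by ring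

lemma expect_sgn_flip {ι : Type*} [Fintype ι] [DecidableEq ι] (p : ι → Prop) [DecidablePred p]
    (f : (ι → Bool) → ℝ) : 𝔼 ε : ι → Bool, f (fun i => if p i then ε i else !ε i) = 𝔼 ε, f ε := by
  have hinv : Function.Involutive fun (ε : ι → Bool) i => if p i then ε i else !ε i := by
    intro ε
    funext i
    by_cases hi : p i <;> simp [hi]
  exact Fintype.expect_bijective _ hinv.bijective _ _ fun _ => rfl

lemma isSelfBounding_of_indicator {ι S V : Type*} [Fintype ι] [Zero V] {Φ : (ι → V) → ℝ}
    {ψ : V → ℝ} {κ : ℝ}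
    (hadd : ∀ v (A : Set ι), Φ v ≤ Φ (A.indicator v) + Φ (Aᶜ.indicator v))
    (hmono : ∀ v (A : Set ι), Φ (A.indicator v) ≤ Φ v) (hle : ∀ v, Φ v ≤ ∑ i, ψ (v i))
    (hψ : ψ 0 = 0) {Z : ι → S → V} (hZ : ∀ i x, ψ (Z i x) ≤ κ) :
    IsSelfBounding κ fun ω : ι → S => Φ fun i => Z i (ω i) := by
  classical
  intro x y z
  set v : (ι → S) → ι → V := fun ω i => Z i (ω i)
  have hrestrict {ω ω' : ι → S} {A : Set ι} (h : ∀ i ∈ A, ω i = ω' i) :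
      Φ (A.indicator (v ω)) ≤ Φ (v ω') := by
    rw [Set.indicator_congr fun i hi => congrArg (Z i) (h i hi)]
    exact hmono _ _
  set A : Set ι := {i | x i = y i}
  set B : Set ι := {i | x i = z i}
  have hmiss : Φ (Bᶜ.indicator (Aᶜ.indicator (v x))) ≤ κ * missCount x y z := by
    rw [missCount, card_filter, Nat.cast_sum, mul_sum]
    refine (hle _).trans (sum_le_sum fun i _ => ?_)
    by_cases hA : x i = y i <;> by_cases hB : x i = z i <;>
      simp [Set.indicator_apply, A, B, v, hA, hB, hψ, hZ]
  calc Φ (v x) ≤ Φ (A.indicator (v x)) + Φ (Aᶜ.indicator (v x)) := hadd _ A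
    _ ≤ Φ (A.indicator (v x)) + (Φ (B.indicator (Aᶜ.indicator (v x))) +
          Φ (Bᶜ.indicator (Aᶜ.indicator (v x)))) := by
        gcongr
        exact hadd _ B
    _ ≤ Φ (v y) + (Φ (v z) + κ * missCount x y z) := by
        gcongr
        · exact hrestrict fun i hi => hi
        · rw [Set.indicator_indicator]
          exact hrestrict fun i hi => hi.1
    _ = Φ (v y) + Φ (v z) + κ * missCount x y z := (add_assoc _ _ _).symm

section RademacherMean

variable {V : Type*} [NormedAddCommGroup V] [NormedSpace ℝ V]

/-- The Rademacher average `𝔼 ‖∑ ± v i‖` of a finite family. -/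
def rademacherMean {ι : Type*} [Fintype ι] [DecidableEq ι] (v : ι → V) : ℝ :=
  𝔼 ε : ι → Bool, ‖∑ i, sgn (ε i) • v i‖

/-- The weak variance of a finite family: the squared operator norm of `a ↦ ∑ a i • v i` on
`ℓ²`. The supremum runs over rational coefficients only, so that it is a measurable function of `v`
as soon as the norms of the linear combinations are. -/
def weakVar {ι : Type*} [Fintype ι] (v : ι → V) : ℝ :=
  ⨆ a : ι → ℚ, ‖∑ i, (a i : ℝ) • v i‖ ^ 2 / ∑ i, (a i : ℝ) ^ 2

variable {ι : Type*} [Fintype ι]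

lemma sq_norm_sum_smul_le (v : ι → V) (a : ι → ℝ) :
    ‖∑ i, a i • v i‖ ^ 2 ≤ (∑ i, ‖v i‖ ^ 2) * ∑ i, a i ^ 2 := by
  calc ‖∑ i, a i • v i‖ ^ 2 ≤ (∑ i, ‖v i‖ * |a i|) ^ 2 := by
        gcongr
        exact norm_sum_le_of_le _ fun i _ => by rw [norm_smul, Real.norm_eq_abs, mul_comm]
    _ ≤ (∑ i, ‖v i‖ ^ 2) * ∑ i, |a i| ^ 2 := sum_mul_sq_le_sq_mul_sq _ _ _
    _ = (∑ i, ‖v i‖ ^ 2) * ∑ i, a i ^ 2 := by simp only [sq_abs]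

lemma weakVar_le {v : ι → V} {C : ℝ} (hC : 0 ≤ C)
    (h : ∀ a : ι → ℝ, ‖∑ i, a i • v i‖ ^ 2 ≤ C * ∑ i, a i ^ 2) : weakVar v ≤ C :=
  ciSup_le fun _ => div_le_of_le_mul₀ (sum_nonneg fun _ _ => sq_nonneg _) hC (h _)

lemma weakVar_le_sum_sq (v : ι → V) : weakVar v ≤ ∑ i, ‖v i‖ ^ 2 :=
  weakVar_le (sum_nonneg fun _ _ => sq_nonneg _) (sq_norm_sum_smul_le v)

lemma weakVar_nonneg (v : ι → V) : 0 ≤ weakVar v :=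
  Real.iSup_nonneg fun _ => by positivity

lemma sq_norm_sum_smul_le_weakVar_mul (v : ι → V) (a : ι → ℝ) :
    ‖∑ i, a i • v i‖ ^ 2 ≤ weakVar v * ∑ i, a i ^ 2 := by
  have hbdd : BddAbove (Set.range fun b : ι → ℚ =>
      ‖∑ i, (b i : ℝ) • v i‖ ^ 2 / ∑ i, (b i : ℝ) ^ 2) := by
    refine ⟨∑ i, ‖v i‖ ^ 2, ?_⟩
    rintro _ ⟨b, rfl⟩
    exact div_le_of_le_mul₀ (by positivity) (by positivity) (sq_norm_sum_smul_le v _)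
  have hdense : DenseRange fun (b : ι → ℚ) (i : ι) => (b i : ℝ) :=
    DenseRange.piMap fun _ => Rat.denseRange_cast
  refine hdense.induction_on a (isClosed_le (by fun_prop) (by fun_prop)) fun b => ?_
  obtain h | h := (sum_nonneg fun i (_ : i ∈ univ) => sq_nonneg (b i : ℝ)).eq_or_lt
  · simpa [← h] using sq_norm_sum_smul_le v fun i => (b i : ℝ)
  · exact (div_le_iff₀ h).1 (le_ciSup hbdd b)

lemma weakVar_indicator_le (v : ι → V) (A : Set ι) : weakVar (A.indicator v) ≤ weakVar v := by
  refine weakVar_le (weakVar_nonneg v) fun a => ?_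
  have hsum : ∑ i, a i • A.indicator v i = ∑ i, A.indicator a i • v i :=
    sum_congr rfl fun i _ => by by_cases hi : i ∈ A <;> simp [hi]
  calc ‖∑ i, a i • A.indicator v i‖ ^ 2 ≤ weakVar v * ∑ i, A.indicator a i ^ 2 :=
        hsum ▸ sq_norm_sum_smul_le_weakVar_mul _ _
    _ ≤ weakVar v * ∑ i, a i ^ 2 := by
        refine mul_le_mul_of_nonneg_left (sum_le_sum fun i _ => ?_) (weakVar_nonneg v)
        by_cases hi : i ∈ A <;> simp [hi, sq_nonneg]

lemma add_sq_le_mul_of_sq_le {s t a b c d : ℝ} (ha : 0 ≤ a) (hb : 0 ≤ b) (hc : 0 ≤ c) (hd : 0 ≤ d)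
    (hs : s ^ 2 ≤ a * b) (ht : t ^ 2 ≤ c * d) : (s + t) ^ 2 ≤ (a + c) * (b + d) := by
  have hcross : 2 * (s * t) ≤ a * d + c * b := by
    refine le_of_sq_le_sq ?_ (by positivity)
    calc (2 * (s * t)) ^ 2 = 4 * (s ^ 2 * t ^ 2) := by ring
      _ ≤ 4 * (a * b * (c * d)) := by gcongr
      _ ≤ (a * d + c * b) ^ 2 := by linarith [sq_nonneg (a * d - c * b)]
  linarith

lemma weakVar_le_add_indicator (v : ι → V) (A : Set ι) :
    weakVar v ≤ weakVar (A.indicator v) + weakVar (Aᶜ.indicator v) := by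
  have hW := weakVar_nonneg (A.indicator v)
  have hW' := weakVar_nonneg (Aᶜ.indicator v)
  refine weakVar_le (add_nonneg hW hW') fun a => ?_
  have hsum : ∑ i, a i • v i =
      ∑ i, A.indicator a i • A.indicator v i + ∑ i, Aᶜ.indicator a i • Aᶜ.indicator v i := by
    rw [← sum_add_distrib]
    refine sum_congr rfl fun i _ => ?_
    by_cases hi : i ∈ A <;> simp [hi]
  have hsq : ∑ i, a i ^ 2 = ∑ i, A.indicator a i ^ 2 + ∑ i, Aᶜ.indicator a i ^ 2 := by
    rw [← sum_add_distrib]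
    refine sum_congr rfl fun i _ => ?_
    by_cases hi : i ∈ A <;> simp [hi]
  rw [hsum, hsq]
  exact (pow_le_pow_left₀ (norm_nonneg _) (norm_add_le _ _) 2).trans
    (add_sq_le_mul_of_sq_le hW (by positivity) hW' (by positivity)
      (sq_norm_sum_smul_le_weakVar_mul _ _) (sq_norm_sum_smul_le_weakVar_mul _ _))

-- By duality this reduces to real coefficients, where the second moment is the sum of squares.
lemma weakVar_le_expect_sq {n : ℕ} (v : Fin n → V) :
    weakVar v ≤ 𝔼 ε : Fin n → Bool, ‖∑ i, sgn (ε i) • v i‖ ^ 2 := by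
  refine weakVar_le (expect_nonneg fun _ _ => sq_nonneg _) fun a => ?_
  obtain ⟨g, hg, hga⟩ := exists_dual_vector'' ℝ (∑ i, a i • v i)
  have hga' : ‖∑ i, a i • v i‖ = ∑ i, g (v i) * a i := by
    simpa [mul_comm] using hga.symm
  have hvar : ∑ i, g (v i) ^ 2 ≤ 𝔼 ε : Fin n → Bool, ‖∑ i, sgn (ε i) • v i‖ ^ 2 := by
    rw [← expect_sq_sum_sgn_mul]
    refine expect_le_expect fun ε _ => ?_
    have hgε : ∑ i, sgn (ε i) * g (v i) = g (∑ i, sgn (ε i) • v i) := by simp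
    rw [hgε, ← sq_abs]
    gcongr
    exact (g.le_opNorm _).trans (mul_le_of_le_one_left (norm_nonneg _) hg)
  rw [hga']
  exact (sum_mul_sq_le_sq_mul_sq _ _ _).trans (by gcongr)

variable [DecidableEq ι]

lemma rademacherMean_le_sum_norm (v : ι → V) : rademacherMean v ≤ ∑ i, ‖v i‖ :=
  expect_le univ_nonempty fun ε _ => (norm_sum_le _ _).trans_eq <|
    sum_congr rfl fun i _ => by rw [norm_smul, Real.norm_eq_abs, abs_sgn, one_mul]

lemma rademacherMean_add_le (v w : ι → V) :
    rademacherMean (v + w) ≤ rademacherMean v + rademacherMean w := by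
  rw [rademacherMean, rademacherMean, rademacherMean, ← expect_add_distrib]
  refine expect_le_expect fun ε _ => ?_
  simp only [Pi.add_apply, smul_add, sum_add_distrib]
  exact norm_add_le _ _

lemma rademacherMean_flip (v : ι → V) (p : ι → Prop) [DecidablePred p] :
    rademacherMean (fun i => if p i then v i else -v i) = rademacherMean v := by
  rw [rademacherMean, rademacherMean, ← expect_sgn_flip p]
  refine expect_congr rfl fun ε _ => ?_
  congr! 2 with i
  by_cases hi : p i
  · simp [hi]
  · cases h : ε i <;> simp [hi, h, sgn]

lemma rademacherMean_smul (c : ℝ) (v : ι → V) :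
    rademacherMean (c • v) = |c| * rademacherMean v := by
  simp only [rademacherMean, mul_expect, Pi.smul_apply, smul_comm _ c, ← smul_sum, norm_smul,
    Real.norm_eq_abs]

lemma rademacherMean_indicator_le (v : ι → V) (A : Set ι) :
    rademacherMean (A.indicator v) ≤ rademacherMean v := by
  classical
  have hdouble : (2 : ℝ) • A.indicator v = v + fun i => if i ∈ A then v i else -v i := by
    funext i
    by_cases hi : i ∈ A <;> simp [hi, two_smul]
  have hadd := rademacherMean_add_le v fun i => if i ∈ A then v i else -v i
  rw [← hdouble, rademacherMean_smul, rademacherMean_flip, abs_two] at hadd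
  linarith

lemma rademacherMean_le_add_indicator (v : ι → V) (A : Set ι) :
    rademacherMean v ≤ rademacherMean (A.indicator v) + rademacherMean (Aᶜ.indicator v) := by
  have hv : v = A.indicator v + Aᶜ.indicator v := by
    funext i
    by_cases hi : i ∈ A <;> simp [hi]
  exact (congrArg rademacherMean hv).trans_le (rademacherMean_add_le _ _)

end RademacherMean

/-! ### Moments of bounded functions -/

namespace BddNonneg

variable {Ω Ω' : Type*} [MeasurableSpace Ω] [MeasurableSpace Ω'] {f g : Ω → ℝ}

lemma const {c : ℝ} (hc : 0 ≤ c) : BddNonneg fun _ : Ω => c :=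
  ⟨measurable_const, fun _ => hc, c, fun _ => le_rfl⟩

lemma add (hf : BddNonneg f) (hg : BddNonneg g) : BddNonneg fun x => f x + g x where
  measurable := hf.measurable.add hg.measurable
  nonneg x := add_nonneg (hf.nonneg x) (hg.nonneg x)
  bddAbove := by
    obtain ⟨M, hM⟩ := hf.bddAbove
    obtain ⟨N, hN⟩ := hg.bddAbove
    exact ⟨M + N, fun x => add_le_add (hM x) (hN x)⟩

lemma sum {ι : Type*} {s : Finset ι} {f : ι → Ω → ℝ} (hf : ∀ i ∈ s, BddNonneg (f i)) :
    BddNonneg fun x => ∑ i ∈ s, f i x := by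
  classical
  induction s using Finset.induction_on with
  | empty => simpa using const le_rfl
  | insert i s hi ih =>
    simp only [sum_insert hi]
    exact (hf i (mem_insert_self i s)).add (ih fun j hj => hf j (mem_insert_of_mem hj))

lemma expect {ι : Type*} [Fintype ι] {f : ι → Ω → ℝ} (hf : ∀ i, BddNonneg (f i)) :
    BddNonneg fun x => 𝔼 i, f i x := by
  simp only [Fintype.expect_eq_sum_div_card, div_eq_inv_mul]
  exact (sum fun i _ => hf i).const_mul (by positivity)

lemma sqrt (hf : BddNonneg f) : BddNonneg fun x => √(f x) :=
  hf.comp_monotone Real.continuous_sqrt.measurable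
    (fun _ _ _ _ h => Real.sqrt_le_sqrt h) (by simp)

lemma pow (hf : BddNonneg f) (k : ℕ) : BddNonneg fun x => f x ^ k := by
  simpa using hf.rpow k.cast_nonneg

lemma integral_prod_right (ν : Measure Ω') [IsFiniteMeasure ν] {g : Ω × Ω' → ℝ}
    (hg : BddNonneg g) : BddNonneg fun x => ∫ y, g (x, y) ∂ν where
  measurable := hg.measurable.stronglyMeasurable.integral_prod_right'.measurable
  nonneg x := MeasureTheory.integral_nonneg fun y => hg.nonneg (x, y)
  bddAbove := by
    obtain ⟨M, hM⟩ := hg.bddAbove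
    refine ⟨ν.real Set.univ * M, fun x => ?_⟩
    calc ∫ y, g (x, y) ∂ν ≤ ∫ _, M ∂ν :=
          MeasureTheory.integral_mono ((hg.comp measurable_prodMk_left).integrable ν)
            (integrable_const M) fun y => hM (x, y)
      _ = ν.real Set.univ * M := by simp

lemma integral_prod (μ : Measure Ω) (ν : Measure Ω') [IsFiniteMeasure μ] [IsFiniteMeasure ν]
    {g : Ω × Ω' → ℝ} (hg : BddNonneg g) :
    ∫ z, g z ∂μ.prod ν = ∫ x, ∫ y, g (x, y) ∂ν ∂μ :=
  MeasureTheory.integral_prod g (hg.integrable _)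

lemma integral_expect (μ : Measure Ω) [IsFiniteMeasure μ] {ι : Type*} [Fintype ι] {f : ι → Ω → ℝ}
    (hf : ∀ i, BddNonneg (f i)) : ∫ x, 𝔼 i, f i x ∂μ = 𝔼 i, ∫ x, f i x ∂μ := by
  simp only [Fintype.expect_eq_sum_div_card, integral_div]
  rw [integral_finsetSum _ fun i _ => (hf i).integrable μ]

variable {μ : Measure Ω}

lemma integral_comp_measurePreserving {ν : Measure Ω'} {u : Ω' → Ω} (hf : BddNonneg f)
    (hu : MeasurePreserving u ν μ) : ∫ y, f (u y) ∂ν = ∫ x, f x ∂μ := by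
  rw [← hu.map_eq, integral_map hu.measurable.aemeasurable hf.measurable.aestronglyMeasurable]

variable [IsProbabilityMeasure μ]

lemma rpow_integral_le (hf : BddNonneg f) {p : ℝ} (hp : 1 ≤ p) :
    (∫ x, f x ∂μ) ^ p ≤ ∫ x, f x ^ p ∂μ :=
  (convexOn_rpow hp).map_integral_le
    (Real.continuous_rpow_const (zero_le_one.trans hp)).continuousOn isClosed_Ici
    (.of_forall hf.nonneg) (hf.integrable μ) ((hf.rpow (zero_le_one.trans hp)).integrable μ)

lemma integral_rpow_le_integral_prod {ν : Measure Ω'} [IsProbabilityMeasure ν] {g : Ω × Ω' → ℝ}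
    (hf : BddNonneg f) (hg : BddNonneg g) (h : ∀ x, f x ≤ ∫ y, g (x, y) ∂ν) {p : ℝ}
    (hp : 1 ≤ p) : ∫ x, f x ^ p ∂μ ≤ ∫ z, g z ^ p ∂μ.prod ν := by
  have hp0 := zero_le_one.trans hp
  rw [(hg.rpow hp0).integral_prod μ ν]
  refine (hf.rpow hp0).integral_mono ((hg.rpow hp0).integral_prod_right ν) (fun x => ?_) μ
  exact (Real.rpow_le_rpow (hf.nonneg x) (h x) hp0).trans
    ((hg.comp measurable_prodMk_left).rpow_integral_le hp)

lemma integral_rpow_le_iff_eLpNorm_le (hf : BddNonneg f) {r a : ℝ} (hr : 0 < r) (ha : 0 ≤ a) :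
    ∫ x, f x ^ r ∂μ ≤ a ^ r ↔ eLpNorm f (ENNReal.ofReal r) μ ≤ ENNReal.ofReal a := by
  have hmem : MemLp f (ENNReal.ofReal r) μ := by
    obtain ⟨M, hM⟩ := hf.bddAbove
    refine .of_bound hf.measurable.aestronglyMeasurable M (.of_forall fun x => ?_)
    simpa [abs_of_nonneg (hf.nonneg x)] using hM x
  have hI := (hf.rpow hr.le).integral_nonneg μ
  rw [hmem.eLpNorm_eq_integral_rpow_norm (by simpa using hr) ENNReal.ofReal_ne_top,
    ENNReal.ofReal_le_ofReal_iff ha, ENNReal.toReal_ofReal hr.le]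
  simp only [Real.norm_of_nonneg (hf.nonneg _)]
  exact (Real.rpow_inv_le_iff_of_pos hI ha hr).symm

lemma integral_add_rpow_le (hf : BddNonneg f) (hg : BddNonneg g) {r a b : ℝ} (hr : 1 ≤ r)
    (ha : 0 ≤ a) (hb : 0 ≤ b) (hfa : ∫ x, f x ^ r ∂μ ≤ a ^ r) (hgb : ∫ x, g x ^ r ∂μ ≤ b ^ r) :
    ∫ x, (f x + g x) ^ r ∂μ ≤ (a + b) ^ r := by
  have hr0 := zero_lt_one.trans_le hr
  rw [integral_rpow_le_iff_eLpNorm_le ‹_› hr0 ‹_›] at hfa hgb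
  rw [(hf.add hg).integral_rpow_le_iff_eLpNorm_le hr0 (add_nonneg ha hb), ENNReal.ofReal_add ha hb]
  exact (eLpNorm_add_le hf.measurable.aestronglyMeasurable hg.measurable.aestronglyMeasurable
    (ENNReal.one_le_ofReal.2 hr)).trans (add_le_add hfa hgb)

end BddNonneg

/-! ### Moments of sums of independent centred summands -/

lemma measurePreserving_pi_prod {ι X : Type*} [Fintype ι] [MeasurableSpace X] (μ : Measure X)
    [IsProbabilityMeasure μ] {f : ι → X × X → X} (hf : ∀ i, MeasurePreserving (f i) (μ.prod μ) μ) :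
    MeasurePreserving (fun p : (ι → X) × (ι → X) => fun i => f i (p.1 i, p.2 i))
      ((Measure.pi fun _ => μ).prod (Measure.pi fun _ => μ)) (Measure.pi fun _ => μ) :=
  (measurePreserving_pi (fun _ : ι => μ.prod μ) (fun _ => μ) hf).comp
    (measurePreserving_arrowProdEquivProdArrow X X ι (fun _ => μ) fun _ => μ).symm

lemma measurePreserving_piecewise {ι X : Type*} [Fintype ι] [DecidableEq ι] [MeasurableSpace X]
    (μ : Measure X) [IsProbabilityMeasure μ] (A : Finset ι) :
    MeasurePreserving (fun p : (ι → X) × (ι → X) => A.piecewise p.1 p.2)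
      ((Measure.pi fun _ => μ).prod (Measure.pi fun _ => μ)) (Measure.pi fun _ => μ) := by
  refine measurePreserving_pi_prod μ (f := fun i q => if i ∈ A then q.1 else q.2) fun i => ?_
  by_cases hi : i ∈ A
  · simpa only [hi, if_true] using measurePreserving_fst
  · simpa only [hi, if_false] using measurePreserving_snd

lemma sq_rpow_half {x : ℝ} (hx : 0 ≤ x) (p : ℝ) : (x ^ 2) ^ (p / 2) = x ^ p := by
  rw [Real.rpow_div_two_eq_sqrt _ (sq_nonneg x), Real.sqrt_sq hx]

/-- The summands `Z i (X i)`, for independent `X i` with law `P`, are bounded by `κ` and centred.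
Centring is recorded as the conditional Jensen inequality it implies, and only norms have to be
measurable, so that nonseparable spaces `V` such as `L²(μ; B)` are allowed. -/
structure IsCentred {S V : Type*} [MeasurableSpace S] [NormedAddCommGroup V] [NormedSpace ℝ V]
    (P : Measure S) {n : ℕ} (Z : Fin n → S → V) (κ : ℝ) : Prop where
  measurable_norm (a : Fin n → ℝ) : Measurable fun ω : Fin n → S => ‖∑ i, a i • Z i (ω i)‖
  norm_le (i : Fin n) (x : S) : ‖Z i x‖ ≤ κ
  jensen (a : Fin n → ℝ) (A : Finset (Fin n)) (ω : Fin n → S) :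
    ‖∑ i ∈ A, a i • Z i (ω i)‖ ^ 2 ≤
      ∫ ω', ‖∑ i, a i • Z i (A.piecewise ω ω' i)‖ ^ 2 ∂(Measure.pi fun _ : Fin n => P)

namespace IsCentred

variable {S V : Type*} [MeasurableSpace S] [NormedAddCommGroup V] [NormedSpace ℝ V]
  {P : Measure S} {n : ℕ} {Z : Fin n → S → V} {κ : ℝ}

lemma bddNonneg_norm (h : IsCentred P Z κ) (a : Fin n → ℝ) :
    BddNonneg fun ω : Fin n → S => ‖∑ i, a i • Z i (ω i)‖ where
  measurable := h.measurable_norm a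
  nonneg _ := norm_nonneg _
  bddAbove := by
    refine ⟨∑ i, ‖a i‖ * κ, fun ω => norm_sum_le_of_le _ fun i _ => ?_⟩
    rw [norm_smul]
    gcongr
    exact h.norm_le i _

lemma bddNonneg_norm_sum_mem (h : IsCentred P Z κ) (a : Fin n → ℝ) (A : Finset (Fin n)) :
    BddNonneg fun ω : Fin n → S => ‖∑ i ∈ A, a i • Z i (ω i)‖ := by
  simpa only [ite_smul, zero_smul, sum_ite_mem, univ_inter] using
    h.bddNonneg_norm fun i => if i ∈ A then a i else 0

lemma bddNonneg_norm_sum (h : IsCentred P Z κ) :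
    BddNonneg fun ω : Fin n → S => ‖∑ i, Z i (ω i)‖ := by
  simpa using h.bddNonneg_norm fun _ => 1

variable [IsProbabilityMeasure P]

lemma integral_norm_sum_mem_rpow_le (h : IsCentred P Z κ) (a : Fin n → ℝ) (A : Finset (Fin n))
    {p : ℝ} (hp : 2 ≤ p) :
    ∫ ω, ‖∑ i ∈ A, a i • Z i (ω i)‖ ^ p ∂(Measure.pi fun _ : Fin n => P) ≤
      ∫ ω, ‖∑ i, a i • Z i (ω i)‖ ^ p ∂(Measure.pi fun _ : Fin n => P) := by
  have hmp := measurePreserving_piecewise P A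
  have hjensen := ((h.bddNonneg_norm_sum_mem a A).pow 2).integral_rpow_le_integral_prod
    (μ := Measure.pi fun _ => P) (((h.bddNonneg_norm a).pow 2).comp hmp.measurable) (h.jensen a A)
    (p := p / 2) (by linarith)
  simp only [sq_rpow_half (norm_nonneg _)] at hjensen
  exact hjensen.trans_eq
    (((h.bddNonneg_norm a).rpow (by linarith)).integral_comp_measurePreserving hmp)

lemma integral_norm_sum_sgn_mul_smul_rpow_le (h : IsCentred P Z κ) (a : Fin n → ℝ)
    (ε : Fin n → Bool) {p : ℝ} (hp : 2 ≤ p) :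
    ∫ ω, ‖∑ i, (sgn (ε i) * a i) • Z i (ω i)‖ ^ p ∂(Measure.pi fun _ : Fin n => P) ≤
      2 ^ p * ∫ ω, ‖∑ i, a i • Z i (ω i)‖ ^ p ∂(Measure.pi fun _ : Fin n => P) := by
  set μ := Measure.pi fun _ : Fin n => P
  set A : Finset (Fin n) := {i | ε i}
  have hp0 : 0 < p := by linarith
  have hI : 0 ≤ ∫ ω, ‖∑ i, a i • Z i (ω i)‖ ^ p ∂μ :=
    ((h.bddNonneg_norm a).rpow hp0.le).integral_nonneg μ
  obtain ⟨c, hc, hcI⟩ : ∃ c, 0 ≤ c ∧ c ^ p = ∫ ω, ‖∑ i, a i • Z i (ω i)‖ ^ p ∂μ :=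
    ⟨_, Real.rpow_nonneg hI _, Real.rpow_inv_rpow hI hp0.ne'⟩
  have htri (ω : Fin n → S) : ‖∑ i, (sgn (ε i) * a i) • Z i (ω i)‖ ≤
      ‖∑ i ∈ A, a i • Z i (ω i)‖ + ‖∑ i ∈ Aᶜ, a i • Z i (ω i)‖ := by
    have hsplit : ∑ i, (sgn (ε i) * a i) • Z i (ω i) =
        ∑ i ∈ A, a i • Z i (ω i) - ∑ i ∈ Aᶜ, a i • Z i (ω i) := by
      rw [← sum_add_sum_compl A, sub_eq_add_neg, ← sum_neg_distrib]
      congr 1 <;> exact sum_congr rfl fun i hi => by simp_all [A, sgn]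
    exact hsplit ▸ norm_sub_le _ _
  have hA := h.bddNonneg_norm_sum_mem a A
  have hAc := h.bddNonneg_norm_sum_mem a Aᶜ
  rw [← hcI, ← Real.mul_rpow zero_le_two hc, two_mul]
  calc _ ≤ ∫ ω, (‖∑ i ∈ A, a i • Z i (ω i)‖ + ‖∑ i ∈ Aᶜ, a i • Z i (ω i)‖) ^ p ∂μ :=
        ((h.bddNonneg_norm _).rpow hp0.le).integral_mono ((hA.add hAc).rpow hp0.le)
          (fun ω => Real.rpow_le_rpow (norm_nonneg _) (htri ω) hp0.le) μ
    _ ≤ (c + c) ^ p := hA.integral_add_rpow_le hAc (by linarith) hc hc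
        (hcI ▸ h.integral_norm_sum_mem_rpow_le a A hp)
        (hcI ▸ h.integral_norm_sum_mem_rpow_le a Aᶜ hp)

lemma integral_norm_sum_sgn_smul_rpow_le (h : IsCentred P Z κ) (ε : Fin n → Bool) {p : ℝ}
    (hp : 2 ≤ p) :
    ∫ ω, ‖∑ i, sgn (ε i) • Z i (ω i)‖ ^ p ∂(Measure.pi fun _ : Fin n => P) ≤
      2 ^ p * ∫ ω, ‖∑ i, Z i (ω i)‖ ^ p ∂(Measure.pi fun _ : Fin n => P) := by
  simpa using h.integral_norm_sum_sgn_mul_smul_rpow_le (fun _ => 1) ε hp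

lemma integral_norm_sum_rpow_le_expect (h : IsCentred P Z κ) {p : ℝ} (hp : 2 ≤ p) :
    ∫ ω, ‖∑ i, Z i (ω i)‖ ^ p ∂(Measure.pi fun _ : Fin n => P) ≤
      2 ^ p * ∫ ω, 𝔼 ε : Fin n → Bool, ‖∑ i, sgn (ε i) • Z i (ω i)‖ ^ p
        ∂(Measure.pi fun _ : Fin n => P) := by
  rw [BddNonneg.integral_expect _ fun ε => (h.bddNonneg_norm _).rpow (by linarith), mul_expect]
  refine le_expect univ_nonempty fun ε _ => ?_
  simpa [sgn_mul_self] using h.integral_norm_sum_sgn_mul_smul_rpow_le (fun i => sgn (ε i)) ε hp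

lemma integral_expect_sq_le (h : IsCentred P Z κ) :
    ∫ ω, 𝔼 ε : Fin n → Bool, ‖∑ i, sgn (ε i) • Z i (ω i)‖ ^ 2 ∂(Measure.pi fun _ : Fin n => P) ≤
      4 * ∫ ω, ‖∑ i, Z i (ω i)‖ ^ 2 ∂(Measure.pi fun _ : Fin n => P) := by
  rw [BddNonneg.integral_expect _ fun ε => (h.bddNonneg_norm _).pow 2]
  refine expect_le univ_nonempty fun ε _ => ?_
  have h2 := h.integral_norm_sum_sgn_smul_rpow_le ε le_rfl
  norm_num at h2
  exact h2

end IsCentred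

/-- The size `√r σ + r κ` of the `r`-th moment of `∑ i, Z i (X i)`: a Gaussian part, with `σ` the
`L²` norm of the sum, and a Poissonian part. -/
def momentScale {S V : Type*} [MeasurableSpace S] [NormedAddCommGroup V] (P : Measure S) {n : ℕ}
    (Z : Fin n → S → V) (κ r : ℝ) : ℝ :=
  √r * √(∫ ω, ‖∑ i, Z i (ω i)‖ ^ 2 ∂(Measure.pi fun _ : Fin n => P)) + r * κ

lemma momentScale_pos {S V : Type*} [MeasurableSpace S] [NormedAddCommGroup V] (P : Measure S)
    {n : ℕ} (Z : Fin n → S → V) {κ r : ℝ} (hκ : 0 < κ) (hr : 0 < r) : 0 < momentScale P Z κ r := by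
  rw [momentScale]
  positivity

namespace IsCentred

variable {S V : Type*} [MeasurableSpace S] [NormedAddCommGroup V] [NormedSpace ℝ V]
  {P : Measure S} {n : ℕ} {Z : Fin n → S → V} {κ : ℝ}

lemma bddNonneg_rademacherMean (h : IsCentred P Z κ) :
    BddNonneg fun ω : Fin n → S => rademacherMean fun i => Z i (ω i) :=
  BddNonneg.expect fun _ => h.bddNonneg_norm _

lemma bddNonneg_weakVar (h : IsCentred P Z κ) :
    BddNonneg fun ω : Fin n → S => weakVar fun i => Z i (ω i) where
  measurable := .iSup fun _ => ((h.measurable_norm _).pow_const 2).div_const _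
  nonneg _ := weakVar_nonneg _
  bddAbove := ⟨∑ _i : Fin n, κ ^ 2, fun _ => (weakVar_le_sum_sq _).trans <|
    sum_le_sum fun i _ => pow_le_pow_left₀ (norm_nonneg _) (h.norm_le i _) 2⟩

lemma isSelfBounding_rademacherMean (h : IsCentred P Z κ) :
    IsSelfBounding κ fun ω : Fin n → S => rademacherMean fun i => Z i (ω i) :=
  isSelfBounding_of_indicator rademacherMean_le_add_indicator rademacherMean_indicator_le
    rademacherMean_le_sum_norm norm_zero h.norm_le

lemma isSelfBounding_weakVar (h : IsCentred P Z κ) :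
    IsSelfBounding (κ ^ 2) fun ω : Fin n → S => weakVar fun i => Z i (ω i) :=
  isSelfBounding_of_indicator (ψ := fun v => ‖v‖ ^ 2) weakVar_le_add_indicator weakVar_indicator_le
    weakVar_le_sum_sq (by simp) fun i x => pow_le_pow_left₀ (norm_nonneg _) (h.norm_le i x) 2

variable [IsProbabilityMeasure P]

lemma integral_weakVar_le (h : IsCentred P Z κ) :
    ∫ ω, weakVar (fun i => Z i (ω i)) ∂(Measure.pi fun _ : Fin n => P) ≤
      4 * ∫ ω, ‖∑ i, Z i (ω i)‖ ^ 2 ∂(Measure.pi fun _ : Fin n => P) :=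
  (h.bddNonneg_weakVar.integral_mono (BddNonneg.expect fun _ => (h.bddNonneg_norm _).pow 2)
    (fun _ => weakVar_le_expect_sq _) _).trans h.integral_expect_sq_le

lemma integral_rademacherMean_le (h : IsCentred P Z κ) :
    ∫ ω, rademacherMean (fun i => Z i (ω i)) ∂(Measure.pi fun _ : Fin n => P) ≤
      2 * √(∫ ω, ‖∑ i, Z i (ω i)‖ ^ 2 ∂(Measure.pi fun _ : Fin n => P)) := by
  set μ := Measure.pi fun _ : Fin n => P
  have hY := h.bddNonneg_rademacherMean
  refine le_of_sq_le_sq ?_ (by positivity)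
  calc (∫ ω, rademacherMean (fun i => Z i (ω i)) ∂μ) ^ 2
      ≤ ∫ ω, rademacherMean (fun i => Z i (ω i)) ^ 2 ∂μ := by
        simpa using hY.rpow_integral_le (μ := μ) one_le_two
    _ ≤ ∫ ω, 𝔼 ε : Fin n → Bool, ‖∑ i, sgn (ε i) • Z i (ω i)‖ ^ 2 ∂μ :=
        (hY.pow 2).integral_mono (BddNonneg.expect fun _ => (h.bddNonneg_norm _).pow 2)
          (fun ω => map_expect_le (convexOn_pow 2) fun ε => norm_nonneg _) μ
    _ ≤ 4 * ∫ ω, ‖∑ i, Z i (ω i)‖ ^ 2 ∂μ := h.integral_expect_sq_le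
    _ = (2 * √(∫ ω, ‖∑ i, Z i (ω i)‖ ^ 2 ∂μ)) ^ 2 := by
        rw [mul_pow, Real.sq_sqrt ((h.bddNonneg_norm_sum.pow 2).integral_nonneg μ)]
        norm_num

lemma integral_rademacherMean_rpow_le (h : IsCentred P Z κ) (hκ : 0 < κ) {r : ℝ} (hr : 1 ≤ r) :
    ∫ ω, rademacherMean (fun i => Z i (ω i)) ^ r ∂(Measure.pi fun _ : Fin n => P) ≤
      (16 * momentScale P Z κ r) ^ r := by
  have hr0 : 0 < r := by linarith
  have hY := h.bddNonneg_rademacherMean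
  refine (h.isSelfBounding_rademacherMean.integral_rpow_le P hY hκ hr0).trans ?_
  have hEY := hY.integral_nonneg (Measure.pi fun _ => P)
  refine Real.rpow_le_rpow (by positivity) ?_ hr0.le
  have hEY_le := h.integral_rademacherMean_le
  have hσ := le_mul_of_one_le_left (Real.sqrt_nonneg
    (∫ ω, ‖∑ i, Z i (ω i)‖ ^ 2 ∂(Measure.pi fun _ : Fin n => P))) (Real.one_le_sqrt.2 hr)
  have hrκ : 0 < r * κ := by positivity
  rw [momentScale]
  linarith

lemma integral_sqrt_weakVar_rpow_le (h : IsCentred P Z κ) (hκ : 0 < κ) {r : ℝ} (hr : 0 < r) :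
    ∫ ω, √(r * weakVar fun i => Z i (ω i)) ^ r ∂(Measure.pi fun _ : Fin n => P) ≤
      (16 * momentScale P Z κ r) ^ r := by
  set μ := Measure.pi fun _ : Fin n => P
  set σ2 := ∫ ω, ‖∑ i, Z i (ω i)‖ ^ 2 ∂μ
  have hσ2 : 0 ≤ σ2 := (h.bddNonneg_norm_sum.pow 2).integral_nonneg μ
  have hW := h.bddNonneg_weakVar
  have hEW := hW.integral_nonneg μ
  have hscale : r * σ2 + r ^ 2 * κ ^ 2 ≤ momentScale P Z κ r ^ 2 := by
    calc r * σ2 + r ^ 2 * κ ^ 2 = (√r * √σ2) ^ 2 + (r * κ) ^ 2 := by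
          rw [mul_pow, mul_pow, Real.sq_sqrt hr.le, Real.sq_sqrt hσ2]
      _ ≤ (√r * √σ2 + r * κ) ^ 2 := by
          rw [add_sq', le_add_iff_nonneg_right]
          positivity
  calc ∫ ω, √(r * weakVar fun i => Z i (ω i)) ^ r ∂μ
      = ∫ ω, r ^ (r / 2) * weakVar (fun i => Z i (ω i)) ^ (r / 2) ∂μ :=
        integral_congr_ae <| .of_forall fun ω => by
          beta_reduce
          rw [← Real.mul_rpow hr.le (hW.nonneg ω),
            Real.rpow_div_two_eq_sqrt _ (mul_nonneg hr.le (hW.nonneg ω))]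
    _ = r ^ (r / 2) * ∫ ω, weakVar (fun i => Z i (ω i)) ^ (r / 2) ∂μ := integral_const_mul _ _
    _ ≤ r ^ (r / 2) * (8 * (∫ ω, weakVar (fun i => Z i (ω i)) ∂μ + r / 2 * κ ^ 2)) ^ (r / 2) := by
        gcongr
        exact h.isSelfBounding_weakVar.integral_rpow_le P hW (by positivity) (by positivity)
    _ = (r * (8 * (∫ ω, weakVar (fun i => Z i (ω i)) ∂μ + r / 2 * κ ^ 2))) ^ (r / 2) :=
        (Real.mul_rpow hr.le (by positivity)).symm
    _ ≤ ((16 * momentScale P Z κ r) ^ 2) ^ (r / 2) := by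
        gcongr
        have hEW_le : r * ∫ ω, weakVar (fun i => Z i (ω i)) ∂μ ≤ r * (4 * σ2) :=
          mul_le_mul_of_nonneg_left h.integral_weakVar_le hr.le
        have hrσ : 0 ≤ r * σ2 := by positivity
        have hrκ : 0 ≤ r ^ 2 * κ ^ 2 := by positivity
        linarith
    _ = (16 * momentScale P Z κ r) ^ r :=
        sq_rpow_half (mul_nonneg (by norm_num) (momentScale_pos P Z hκ hr).le) r

/-- A Rosenthal-type inequality: after symmetrization, Maurey's inequality bounds the conditional
moment given the summands in terms of their Rademacher average and weak variance, and both of these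
are self-bounding. -/
theorem integral_norm_sum_rpow_le (h : IsCentred P Z κ) (hκ : 0 < κ) {r : ℝ} (hr : 2 ≤ r) :
    ∫ ω, ‖∑ i, Z i (ω i)‖ ^ r ∂(Measure.pi fun _ : Fin n => P) ≤
      (66 * Real.exp 5 * momentScale P Z κ r) ^ r := by
  set μ := Measure.pi fun _ : Fin n => P
  have hr0 : 0 < r := by linarith
  set G := momentScale P Z κ r
  have hG : 0 < G := momentScale_pos P Z hκ hr0
  set Y : (Fin n → S) → ℝ := fun ω => rademacherMean fun i => Z i (ω i)
  set W : (Fin n → S) → ℝ := fun ω => weakVar fun i => Z i (ω i)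
  have hY : BddNonneg Y := h.bddNonneg_rademacherMean
  have hrW : BddNonneg fun ω => √(r * W ω) := (h.bddNonneg_weakVar.const_mul hr0.le).sqrt
  have hD : BddNonneg fun ω => Y ω + √(r * W ω) + G := (hY.add hrW).add (.const hG.le)
  have hD_moment : ∫ ω, (Y ω + √(r * W ω) + G) ^ r ∂μ ≤ (16 * G + 16 * G + G) ^ r :=
    (hY.add hrW).integral_add_rpow_le (.const hG.le) (by linarith) (by positivity) hG.le
      (hY.integral_add_rpow_le hrW (by linarith) (by positivity) (by positivity)
        (h.integral_rademacherMean_rpow_le hκ (by linarith))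
        (h.integral_sqrt_weakVar_rpow_le hκ hr0)) (by simp)
  have hcond (ω : Fin n → S) : 𝔼 ε : Fin n → Bool, ‖∑ i, sgn (ε i) • Z i (ω i)‖ ^ r ≤
      (Real.exp 5 * (Y ω + √(r * W ω) + G)) ^ r := by
    have := hY.nonneg ω
    have := hrW.nonneg ω
    refine expect_norm_rpow_le (weakVar_nonneg _) (sq_norm_sum_smul_le_weakVar_mul _) hr0
      (by positivity) (by rw [add_assoc]; exact le_add_of_nonneg_right (by positivity)) ?_
    exact (Real.sqrt_le_left (by positivity)).1 (by linarith)
  calc ∫ ω, ‖∑ i, Z i (ω i)‖ ^ r ∂μ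
      ≤ 2 ^ r * ∫ ω, 𝔼 ε : Fin n → Bool, ‖∑ i, sgn (ε i) • Z i (ω i)‖ ^ r ∂μ :=
        h.integral_norm_sum_rpow_le_expect hr
    _ ≤ 2 ^ r * ∫ ω, (Real.exp 5 * (Y ω + √(r * W ω) + G)) ^ r ∂μ :=
        mul_le_mul_of_nonneg_left
          ((BddNonneg.expect fun ε => (h.bddNonneg_norm _).rpow hr0.le).integral_mono
            ((hD.const_mul (by positivity)).rpow hr0.le) hcond μ) (by positivity)
    _ = 2 ^ r * (Real.exp 5 ^ r * ∫ ω, (Y ω + √(r * W ω) + G) ^ r ∂μ) := by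
        simp only [Real.mul_rpow (Real.exp_pos 5).le (hD.nonneg _), integral_const_mul]
    _ ≤ 2 ^ r * (Real.exp 5 ^ r * (16 * G + 16 * G + G) ^ r) := by gcongr
    _ = (66 * Real.exp 5 * G) ^ r := by
        rw [← Real.mul_rpow (by positivity) (by positivity),
          ← Real.mul_rpow (by positivity) (by positivity)]
        ring_nf

end IsCentred

/-! ### Centred summands with values in `L²` -/

lemma sq_norm_toLp_two {T B : Type*} [MeasurableSpace T] {μ : Measure T} [NormedAddCommGroup B]
    {f : T → B} (hf : MemLp f 2 μ) : ‖hf.toLp f‖ ^ 2 = ∫ t, ‖f t‖ ^ 2 ∂μ := by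
  have hI : 0 ≤ ∫ t, ‖f t‖ ^ 2 ∂μ := integral_nonneg fun t => sq_nonneg _
  rw [Lp.norm_toLp, hf.eLpNorm_eq_integral_rpow_norm two_ne_zero ENNReal.ofNat_ne_top,
    ENNReal.toReal_ofReal (by positivity)]
  simp only [ENNReal.toReal_ofNat, Real.rpow_two]
  rw [← Real.rpow_natCast, ← Real.rpow_mul hI]
  norm_num

lemma sum_smul_toLp {ι T B : Type*} [MeasurableSpace T] {μ : Measure T} [NormedAddCommGroup B]
    [NormedSpace ℝ B] {p : ℝ≥0∞} (s : Finset ι) (a : ι → ℝ) {f : ι → T → B}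
    (hf : ∀ i, MemLp (f i) p μ) :
    ∑ i ∈ s, a i • (hf i).toLp (f i) =
      (memLp_finsetSum s fun i _ => (hf i).const_smul (a i)).toLp
        (fun t => ∑ i ∈ s, a i • f i t) := by
  classical
  induction s using Finset.induction_on with
  | empty => rfl
  | insert i s hi ih =>
    rw [sum_insert hi, ih, ← MemLp.toLp_const_smul, ← MemLp.toLp_add]
    simp only [sum_insert hi]
    rfl

lemma sq_norm_le_integral_sq_norm_add {Ω B : Type*} [MeasurableSpace Ω] (ν : Measure Ω)
    [IsProbabilityMeasure ν] [NormedAddCommGroup B] [NormedSpace ℝ B] [CompleteSpace B] (u : B)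
    {w : Ω → B} (hw : MemLp w 2 ν) (hw0 : ∫ ω, w ω ∂ν = 0) :
    ‖u‖ ^ 2 ≤ ∫ ω, ‖u + w ω‖ ^ 2 ∂ν := by
  have hw1 : Integrable w ν := hw.integrable one_le_two
  have huw : MemLp (fun ω => u + w ω) 2 ν := (memLp_const u).add hw
  have hu : u = ∫ ω, u + w ω ∂ν := by
    rw [integral_add (integrable_const u) hw1, hw0]
    simp
  calc ‖u‖ ^ 2 = ‖∫ ω, u + w ω ∂ν‖ ^ 2 := by rw [← hu]
    _ ≤ ∫ ω, ‖u + w ω‖ ^ 2 ∂ν :=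
      ((convexOn_norm convex_univ).pow (fun _ _ => norm_nonneg _) 2).map_integral_le
        (by fun_prop) isClosed_univ (.of_forall fun _ => Set.mem_univ _)
        ((integrable_const u).add hw1) huw.integrable_norm_pow'

/-- The functions `f i (X i) : T → B`, for independent `X i` with law `P`, are bounded by `κ` and
centred. -/
structure IsCentredKernel {S T B : Type*} [MeasurableSpace S] [MeasurableSpace T]
    [NormedAddCommGroup B] [NormedSpace ℝ B] (P : Measure S) {n : ℕ} (f : Fin n → S → T → B)
    (κ : ℝ) : Prop where
  stronglyMeasurable (i : Fin n) : StronglyMeasurable fun p : S × T => f i p.1 p.2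
  norm_le (i : Fin n) (x : S) (t : T) : ‖f i x t‖ ≤ κ
  integral_eq_zero (i : Fin n) (t : T) : ∫ x, f i x t ∂P = 0

namespace IsCentredKernel

variable {S T B : Type*} [MeasurableSpace S] [MeasurableSpace T] [NormedAddCommGroup B]
  [NormedSpace ℝ B] {P : Measure S} {n : ℕ} {f : Fin n → S → T → B} {κ : ℝ}

lemma stronglyMeasurable_sum (h : IsCentredKernel P f κ) (a : Fin n → ℝ) (A : Finset (Fin n)) :
    StronglyMeasurable fun p : (Fin n → S) × T => ∑ i ∈ A, a i • f i (p.1 i) p.2 :=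
  Finset.stronglyMeasurable_fun_sum _ fun i _ => .const_smul
    ((h.stronglyMeasurable i).comp_measurable (g := fun p : (Fin n → S) × T => (p.1 i, p.2))
      (by fun_prop)) _

lemma norm_sum_le (h : IsCentredKernel P f κ) (a : Fin n → ℝ) (A : Finset (Fin n))
    (ω : Fin n → S) (t : T) : ‖∑ i ∈ A, a i • f i (ω i) t‖ ≤ ∑ i ∈ A, ‖a i‖ * κ :=
  norm_sum_le_of_le _ fun i _ => by
    rw [norm_smul]
    gcongr
    exact h.norm_le _ _ _

lemma bddNonneg_norm_sum (h : IsCentredKernel P f κ) (a : Fin n → ℝ) (A : Finset (Fin n)) :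
    BddNonneg fun p : (Fin n → S) × T => ‖∑ i ∈ A, a i • f i (p.1 i) p.2‖ where
  measurable := (h.stronglyMeasurable_sum a A).norm.measurable
  nonneg _ := norm_nonneg _
  bddAbove := ⟨_, fun p => h.norm_sum_le a A p.1 p.2⟩

variable (μ : Measure T) [IsProbabilityMeasure μ]

lemma memLp (h : IsCentredKernel P f κ) (i : Fin n) (x : S) : MemLp (f i x) 2 μ :=
  .of_bound ((h.stronglyMeasurable i).comp_measurable measurable_prodMk_left).aestronglyMeasurable κ
    (.of_forall (h.norm_le i x))

/-- The summands of a centred kernel as elements of `L²(μ; B)`. -/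
def toL2 (h : IsCentredKernel P f κ) (i : Fin n) (x : S) : Lp B 2 μ :=
  (h.memLp μ i x).toLp (f i x)

lemma sq_norm_sum_toL2 (h : IsCentredKernel P f κ) (a : Fin n → ℝ) (A : Finset (Fin n))
    (ω : Fin n → S) :
    ‖∑ i ∈ A, a i • h.toL2 μ i (ω i)‖ ^ 2 = ∫ t, ‖∑ i ∈ A, a i • f i (ω i) t‖ ^ 2 ∂μ := by
  simp only [toL2]
  rw [sum_smul_toLp A a fun i => h.memLp μ i (ω i), sq_norm_toLp_two]

lemma norm_sum_toL2 (h : IsCentredKernel P f κ) (a : Fin n → ℝ) (ω : Fin n → S) :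
    ‖∑ i, a i • h.toL2 μ i (ω i)‖ = √(∫ t, ‖∑ i, a i • f i (ω i) t‖ ^ 2 ∂μ) := by
  rw [← h.sq_norm_sum_toL2 μ, Real.sqrt_sq (norm_nonneg _)]

variable [IsProbabilityMeasure P]

lemma integral_sum_eq_zero (h : IsCentredKernel P f κ) (a : Fin n → ℝ) (A : Finset (Fin n))
    (t : T) :
    ∫ ω : Fin n → S, ∑ i ∈ A, a i • f i (ω i) t ∂(Measure.pi fun _ => P) = 0 := by
  have hint (i : Fin n) : Integrable (fun x => f i x t) P :=
    .of_bound
      ((h.stronglyMeasurable i).comp_measurable measurable_prodMk_right).aestronglyMeasurable κ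
      (.of_forall fun x => h.norm_le i x t)
  rw [integral_finsetSum]
  · refine sum_eq_zero fun i _ => ?_
    rw [integral_smul, integral_comp_eval (μ := fun _ => P) (i := i) (hint i).aestronglyMeasurable,
      h.integral_eq_zero, smul_zero]
  · exact fun i _ => (integrable_comp_eval (μ := fun _ => P) (i := i) (hint i)).smul (a i)

lemma sq_norm_sum_mem_le [CompleteSpace B] (h : IsCentredKernel P f κ) (a : Fin n → ℝ)
    (A : Finset (Fin n)) (ω : Fin n → S) (t : T) : ‖∑ i ∈ A, a i • f i (ω i) t‖ ^ 2 ≤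
      ∫ ω', ‖∑ i, a i • f i (A.piecewise ω ω' i) t‖ ^ 2 ∂(Measure.pi fun _ : Fin n => P) := by
  have hsplit (ω' : Fin n → S) : ∑ i, a i • f i (A.piecewise ω ω' i) t =
      ∑ i ∈ A, a i • f i (ω i) t + ∑ i ∈ Aᶜ, a i • f i (ω' i) t := by
    rw [← sum_add_sum_compl A]
    congr 1 <;> exact sum_congr rfl fun i hi => by simp_all
  simp only [hsplit]
  refine sq_norm_le_integral_sq_norm_add _ _ (.of_bound ?_ _ (.of_forall fun ω' =>
    h.norm_sum_le a Aᶜ ω' t)) (h.integral_sum_eq_zero a Aᶜ t)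
  exact ((h.stronglyMeasurable_sum a Aᶜ).comp_measurable
    measurable_prodMk_right).aestronglyMeasurable

lemma isCentred_toL2 [CompleteSpace B] (h : IsCentredKernel P f κ) (hκ : 0 ≤ κ) :
    IsCentred P (h.toL2 μ) κ where
  measurable_norm a := by
    simp only [h.norm_sum_toL2 μ]
    exact (((h.bddNonneg_norm_sum a univ).pow 2).integral_prod_right μ).sqrt.measurable
  norm_le i x := by
    refine (Lp.norm_le_of_ae_bound hκ ?_).trans_eq (by simp [measureUnivNNReal])
    filter_upwards [(h.memLp μ i x).coeFn_toLp] with t ht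
    exact ht ▸ h.norm_le i x t
  jensen a A ω := by
    have hpw : Measurable fun p : (Fin n → S) × T => (A.piecewise ω p.1, p.2) := by
      refine .prodMk (measurable_pi_lambda _ fun i => ?_) measurable_snd
      by_cases hi : i ∈ A
      · simp only [hi, piecewise_eq_of_mem, measurable_const]
      · simpa only [hi, not_false_eq_true, piecewise_eq_of_notMem] using measurable_fst.eval
    have hF := ((h.bddNonneg_norm_sum a univ).pow 2).comp hpw
    simp only [h.sq_norm_sum_toL2 μ]
    rw [integral_integral_swap (hF.integrable _)]
    refine (((h.bddNonneg_norm_sum a A).pow 2).comp measurable_prodMk_left).integral_mono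
      ((hF.comp measurable_swap).integral_prod_right _) (h.sq_norm_sum_mem_le a A ω) μ

theorem integral_sqrt_rpow_le [CompleteSpace B] (h : IsCentredKernel P f κ) (hκ : 0 < κ) {r : ℝ}
    (hr : 2 ≤ r) :
    ∫ ω, √(∫ t, ‖∑ i, f i (ω i) t‖ ^ 2 ∂μ) ^ r ∂(Measure.pi fun _ : Fin n => P) ≤
      (66 * Real.exp 5 * (√r * √(∫ ω, ∫ t, ‖∑ i, f i (ω i) t‖ ^ 2 ∂μ
        ∂(Measure.pi fun _ : Fin n => P)) + r * κ)) ^ r := by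
  have hsq := fun ω => h.sq_norm_sum_toL2 μ (fun _ => 1) univ ω
  have hnorm := h.norm_sum_toL2 μ fun _ => 1
  simp only [one_smul] at hsq hnorm
  have hmoment := (h.isCentred_toL2 μ hκ.le).integral_norm_sum_rpow_le hκ hr
  simp only [momentScale, hsq] at hmoment
  simpa only [hnorm] using hmoment

end IsCentredKernel

/-! ### Decoupled sums -/

lemma BddNonneg.integral_pi_succ {X : Type*} [MeasurableSpace X] (P : Measure X)
    [IsProbabilityMeasure P] {k : ℕ} {f : (Fin (k + 1) → X) → ℝ} (hf : BddNonneg f) :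
    ∫ x, f x ∂(Measure.pi fun _ => P) =
      ∫ x, ∫ s, f (Fin.cons s x) ∂P ∂(Measure.pi fun _ : Fin k => P) := by
  have hmp := (measurePreserving_finCons P k).comp Measure.measurePreserving_swap
  rw [← hf.integral_comp_measurePreserving hmp, (hf.comp hmp.measurable).integral_prod _ _]
  rfl

/-- A family of kernels `H i t : S^k → B`, indexed by `i ∈ {1, …, n}^k` and depending measurably on
a parameter `t`, that are bounded by `κ` and `P`-canonical. The parameter makes room for the random
variables that have already been averaged over when `k` is reduced by one. -/
structure IsCanonical {S T B : Type*} [MeasurableSpace S] [MeasurableSpace T]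
    [NormedAddCommGroup B] [NormedSpace ℝ B] (P : Measure S) {k n : ℕ}
    (H : (Fin k → Fin n) → T → (Fin k → S) → B) (κ : ℝ) : Prop where
  stronglyMeasurable (i : Fin k → Fin n) :
    StronglyMeasurable fun p : T × (Fin k → S) => H i p.1 p.2
  norm_le (i : Fin k → Fin n) (t : T) (x : Fin k → S) : ‖H i t x‖ ≤ κ
  integral_update (i : Fin k → Fin n) (t : T) (j : Fin k) (x : Fin k → S) :
    ∫ y, H i t (Function.update x j y) ∂P = 0

section DecoupledSum

variable {S T B : Type*} [NormedAddCommGroup B] {k n : ℕ}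

/-- The decoupled sum `∑ i, H i t (X_{i_1}^{(1)}, …, X_{i_k}^{(k)})` over all of `{1, …, n}^k`, with
the array `X_m^{(j)}` encoded as `ω j m`. -/
def decoupledSum (H : (Fin k → Fin n) → T → (Fin k → S) → B) (ω : Fin k → Fin n → S) (t : T) : B :=
  ∑ i, H i t fun j => ω j (i j)

/-- The `L²(μ)`-norm of the decoupled sum as a function of the parameter `t`. -/
def decoupledNorm [MeasurableSpace T] (μ : Measure T) (H : (Fin k → Fin n) → T → (Fin k → S) → B)
    (ω : Fin k → Fin n → S) : ℝ :=
  √(∫ t, ‖decoupledSum H ω t‖ ^ 2 ∂μ)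

/-- The decoupled sum as a sum over the first index `i₀` only: its summands, with all arrays but the
first one frozen at `ω`. -/
def headKernel (H : (Fin (k + 1) → Fin n) → T → (Fin (k + 1) → S) → B) (ω : Fin k → Fin n → S)
    (i₀ : Fin n) (x : S) (t : T) : B :=
  ∑ i, H (Fin.cons i₀ i) t (Fin.cons x fun j => ω j (i j))

/-- The decoupled sum as a decoupled sum of order `k`: its kernels, with the first array moved into
the parameter. -/
def tailKernel (H : (Fin (k + 1) → Fin n) → T → (Fin (k + 1) → S) → B) (i : Fin k → Fin n)
    (p : T × (Fin n → S)) (x : Fin k → S) : B :=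
  ∑ i₀, H (Fin.cons i₀ i) p.1 (Fin.cons (p.2 i₀) x)

lemma decoupledSum_finCons (H : (Fin (k + 1) → Fin n) → T → (Fin (k + 1) → S) → B)
    (ω₀ : Fin n → S) (ω : Fin k → Fin n → S) (t : T) :
    decoupledSum H (Fin.cons ω₀ ω) t = ∑ i₀, headKernel H ω i₀ (ω₀ i₀) t := by
  simp only [decoupledSum, headKernel]
  rw [← (Fin.consEquiv fun _ : Fin (k + 1) => Fin n).sum_comp, Fintype.sum_prod_type]
  refine sum_congr rfl fun i₀ _ => sum_congr rfl fun i _ => congrArg _ (funext fun j => ?_)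
  cases j using Fin.cases <;> rfl

lemma decoupledSum_tailKernel (H : (Fin (k + 1) → Fin n) → T → (Fin (k + 1) → S) → B)
    (ω₀ : Fin n → S) (ω : Fin k → Fin n → S) (t : T) :
    decoupledSum (tailKernel H) ω (t, ω₀) = decoupledSum H (Fin.cons ω₀ ω) t := by
  rw [decoupledSum_finCons]
  exact sum_comm

lemma sq_decoupledNorm [MeasurableSpace T] (μ : Measure T)
    (H : (Fin k → Fin n) → T → (Fin k → S) → B) (ω : Fin k → Fin n → S) :
    decoupledNorm μ H ω ^ 2 = ∫ t, ‖decoupledSum H ω t‖ ^ 2 ∂μ :=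
  Real.sq_sqrt (integral_nonneg fun _ => sq_nonneg _)

end DecoupledSum

namespace IsCanonical

variable {S T B : Type*} [MeasurableSpace S] [MeasurableSpace T] [NormedAddCommGroup B]
  [NormedSpace ℝ B] {P : Measure S} {k n : ℕ} {κ : ℝ}

section Basic

variable {H : (Fin k → Fin n) → T → (Fin k → S) → B}

lemma integrable_update [IsFiniteMeasure P] (h : IsCanonical P H κ) (i : Fin k → Fin n) (t : T)
    (j : Fin k) (x : Fin k → S) : Integrable (fun y => H i t (Function.update x j y)) P :=
  .of_bound ((h.stronglyMeasurable i).comp_measurable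
    (measurable_const.prodMk (measurable_update x))).aestronglyMeasurable κ
    (.of_forall fun _ => h.norm_le i t _)

lemma bddNonneg_norm_decoupledSum (h : IsCanonical P H κ) :
    BddNonneg fun p : (Fin k → Fin n → S) × T => ‖decoupledSum H p.1 p.2‖ where
  measurable := (Finset.stronglyMeasurable_fun_sum _ fun i _ =>
    (h.stronglyMeasurable i).comp_measurable (g := fun p : (Fin k → Fin n → S) × T =>
      (p.2, fun j => p.1 j (i j))) (by fun_prop)).norm.measurable
  nonneg _ := norm_nonneg _
  bddAbove := ⟨∑ _ : Fin k → Fin n, κ, fun _ => norm_sum_le_of_le _ fun i _ => h.norm_le i _ _⟩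

lemma bddNonneg_decoupledNorm (h : IsCanonical P H κ) (μ : Measure T) [IsFiniteMeasure μ] :
    BddNonneg (decoupledNorm μ H) :=
  ((h.bddNonneg_norm_decoupledSum.pow 2).integral_prod_right μ).sqrt

end Basic

variable {H : (Fin (k + 1) → Fin n) → T → (Fin (k + 1) → S) → B} [IsProbabilityMeasure P]

lemma isCanonical_tailKernel (h : IsCanonical P H κ) : IsCanonical P (tailKernel H) (n * κ) where
  stronglyMeasurable i := by
    refine Finset.stronglyMeasurable_fun_sum _ fun i₀ _ =>
      (h.stronglyMeasurable _).comp_measurable (g := fun p : (T × (Fin n → S)) × (Fin k → S) =>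
        (p.1.1, (Fin.cons (p.1.2 i₀) p.2 : Fin (k + 1) → S))) (.prodMk (by fun_prop) ?_)
    exact (measurable_finCons k).comp (measurable_fst.snd.eval.prodMk measurable_snd)
  norm_le i p x := (norm_sum_le_of_le _ fun i₀ _ => h.norm_le _ _ _).trans_eq (by simp)
  integral_update i p j x := by
    simp only [tailKernel, Fin.cons_update]
    rw [integral_finsetSum _ fun i₀ _ => h.integrable_update _ _ _ _]
    exact sum_eq_zero fun i₀ _ => h.integral_update _ _ _ _

lemma isCentredKernel_headKernel (h : IsCanonical P H κ) {R : ℝ} (hκR : n ^ k * κ ≤ R)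
    (ω : Fin k → Fin n → S) : IsCentredKernel P (headKernel H ω) R where
  stronglyMeasurable i₀ := by
    refine Finset.stronglyMeasurable_fun_sum _ fun i _ =>
      (h.stronglyMeasurable _).comp_measurable (g := fun p : S × T =>
        (p.2, (Fin.cons p.1 fun j => ω j (i j) : Fin (k + 1) → S))) (measurable_snd.prodMk ?_)
    exact (measurable_finCons k).comp (measurable_fst.prodMk measurable_const)
  norm_le i₀ x t := (norm_sum_le_of_le _ fun i _ => h.norm_le _ _ _).trans (by simpa using hκR)
  integral_eq_zero i₀ t := by
    obtain ⟨s⟩ := nonempty_of_isProbabilityMeasure P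
    have hint (i : Fin k → Fin n) :
        Integrable (fun y => H (Fin.cons i₀ i) t (Fin.cons y fun j => ω j (i j))) P := by
      simpa only [Fin.update_cons_zero] using
        h.integrable_update (Fin.cons i₀ i) t 0 (Fin.cons s fun j => ω j (i j))
    simp only [headKernel]
    rw [integral_finsetSum _ fun i _ => hint i]
    refine sum_eq_zero fun i _ => ?_
    simpa only [Fin.update_cons_zero] using
      h.integral_update (Fin.cons i₀ i) t 0 (Fin.cons s fun j => ω j (i j))

variable (μ : Measure T) [IsProbabilityMeasure μ]

lemma sq_decoupledNorm_tailKernel (h : IsCanonical P H κ) (ω : Fin k → Fin n → S) :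
    decoupledNorm (μ.prod (Measure.pi fun _ : Fin n => P)) (tailKernel H) ω ^ 2 =
      ∫ ω₀, decoupledNorm μ H (Fin.cons ω₀ ω) ^ 2 ∂(Measure.pi fun _ : Fin n => P) := by
  have hF := (h.isCanonical_tailKernel.bddNonneg_norm_decoupledSum.pow 2).comp
    (measurable_prodMk_left (x := ω))
  simp only [sq_decoupledNorm]
  rw [hF.integral_prod _ _, integral_integral_swap (hF.integrable _)]
  simp only [decoupledSum_tailKernel]

lemma integral_sq_decoupledNorm_tailKernel (h : IsCanonical P H κ) :
    ∫ ω, decoupledNorm (μ.prod (Measure.pi fun _ : Fin n => P)) (tailKernel H) ω ^ 2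
        ∂(Measure.pi fun _ => Measure.pi fun _ => P) =
      ∫ ω, decoupledNorm μ H ω ^ 2 ∂(Measure.pi fun _ => Measure.pi fun _ => P) := by
  rw [((h.bddNonneg_decoupledNorm μ).pow 2).integral_pi_succ (Measure.pi fun _ => P)]
  simp only [h.sq_decoupledNorm_tailKernel μ]

variable [CompleteSpace B]

lemma integral_decoupledNorm_finCons_rpow_le (h : IsCanonical P H κ) {R : ℝ} (hR : 0 < R)
    (hκR : n ^ k * κ ≤ R) {r : ℝ} (hr : 2 ≤ r) (ω : Fin k → Fin n → S) :
    ∫ ω₀, decoupledNorm μ H (Fin.cons ω₀ ω) ^ r ∂(Measure.pi fun _ : Fin n => P) ≤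
      (66 * Real.exp 5 * (√r * decoupledNorm (μ.prod (Measure.pi fun _ : Fin n => P))
        (tailKernel H) ω + r * R)) ^ r := by
  have hcentred := (h.isCentredKernel_headKernel hκR ω).integral_sqrt_rpow_le μ hR hr
  simp only [← decoupledSum_finCons] at hcentred
  have htail := h.sq_decoupledNorm_tailKernel μ ω
  simp only [sq_decoupledNorm μ] at htail
  have hsqrt := Real.sqrt_sq (Real.sqrt_nonneg (∫ t, ‖decoupledSum (tailKernel H) ω t‖ ^ 2
    ∂μ.prod (Measure.pi fun _ : Fin n => P)))
  rwa [← htail, decoupledNorm, hsqrt] at hcentred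

lemma integral_decoupledNorm_rpow_le_of_tailKernel (h : IsCanonical P H κ) {R : ℝ} (hR : 0 < R)
    (hκR : n ^ k * κ ≤ R) {r : ℝ} (hr : 2 ≤ r) {X : ℝ} (hX : 0 ≤ X)
    (htail : ∫ ω, decoupledNorm (μ.prod (Measure.pi fun _ : Fin n => P)) (tailKernel H) ω ^ r
      ∂(Measure.pi fun _ => Measure.pi fun _ => P) ≤ X ^ r) :
    ∫ ω, decoupledNorm μ H ω ^ r ∂(Measure.pi fun _ => Measure.pi fun _ => P) ≤
      (66 * Real.exp 5 * (√r * X + r * R)) ^ r := by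
  set ν : Measure (Fin n → S) := Measure.pi fun _ => P
  set N := decoupledNorm (μ.prod ν) (tailKernel H)
  set C := 66 * Real.exp 5
  have hr0 : 0 < r := by linarith
  have hH := h.bddNonneg_decoupledNorm μ
  have hHcons : BddNonneg fun p : (Fin k → Fin n → S) × (Fin n → S) =>
      decoupledNorm μ H (Fin.cons p.2 p.1) := hH.comp ((measurable_finCons k).comp measurable_swap)
  have hN : BddNonneg N := h.isCanonical_tailKernel.bddNonneg_decoupledNorm _
  have hCN : ∫ ω, (C * √r * N ω) ^ r ∂(Measure.pi fun _ => ν) ≤ (C * √r * X) ^ r := by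
    rw [Real.mul_rpow (by positivity) hX]
    simp only [Real.mul_rpow (by positivity : 0 ≤ C * √r) (hN.nonneg _), integral_const_mul]
    gcongr
  calc ∫ ω, decoupledNorm μ H ω ^ r ∂(Measure.pi fun _ => ν)
    _ = ∫ ω, ∫ ω₀, decoupledNorm μ H (Fin.cons ω₀ ω) ^ r ∂ν ∂(Measure.pi fun _ => ν) :=
      (hH.rpow hr0.le).integral_pi_succ ν
    _ ≤ ∫ ω, (C * √r * N ω + C * (r * R)) ^ r ∂(Measure.pi fun _ => ν) := by
      refine ((hHcons.rpow hr0.le).integral_prod_right ν).integral_mono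
        (((hN.const_mul (by positivity)).add (.const (by positivity))).rpow hr0.le) (fun ω => ?_) _
      simpa only [C, mul_add, mul_assoc] using
        h.integral_decoupledNorm_finCons_rpow_le μ hR hκR hr ω
    _ ≤ (C * √r * X + C * (r * R)) ^ r :=
      (hN.const_mul (by positivity)).integral_add_rpow_le (.const (by positivity)) (by linarith)
        (by positivity) (by positivity) hCN (by simp)
    _ = (C * (√r * X + r * R)) ^ r := by rw [mul_add, mul_assoc]

end IsCanonical

/-- The constant in the moment inequality for decoupled sums of order `k`. -/
def decoupledConst : ℕ → ℝ
  | 0 => 1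
  | k + 1 => 66 * Real.exp 5 * (decoupledConst k + 1)

lemma decoupledConst_pos : ∀ k, 0 < decoupledConst k
  | 0 => one_pos
  | k + 1 => mul_pos (by positivity) (add_pos (decoupledConst_pos k) one_pos)

lemma mul_sqrt_mul_add_le_decoupledConst_succ (k : ℕ) {r : ℝ} (hr : 1 ≤ r) {a R : ℝ} (ha : 0 ≤ a)
    (hR : 0 ≤ R) :
    66 * Real.exp 5 * (√r * (decoupledConst k * (√r ^ k * a + √r ^ (k + 1) * R)) + r * R) ≤
      decoupledConst (k + 1) * (√r ^ (k + 1) * a + √r ^ (k + 2) * R) := by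
  have hsqrt : r ≤ √r ^ (k + 2) := by
    rw [pow_add, Real.sq_sqrt (zero_le_one.trans hr)]
    exact le_mul_of_one_le_left (zero_le_one.trans hr) (one_le_pow₀ (Real.one_le_sqrt.2 hr))
  rw [decoupledConst, mul_assoc (66 * Real.exp 5)]
  gcongr
  calc √r * (decoupledConst k * (√r ^ k * a + √r ^ (k + 1) * R)) + r * R
    _ = decoupledConst k * (√r ^ (k + 1) * a + √r ^ (k + 2) * R) + r * R := by ring
    _ ≤ decoupledConst k * (√r ^ (k + 1) * a + √r ^ (k + 2) * R) +
        (√r ^ (k + 1) * a + √r ^ (k + 2) * R) := by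
      gcongr
      exact le_add_of_nonneg_of_le (by positivity) (by gcongr)
    _ = _ := by ring

section Moments

universe v

variable {S : Type v} {B : Type*} [MeasurableSpace S] [NormedAddCommGroup B] [NormedSpace ℝ B]
  [CompleteSpace B] {P : Measure S} [IsProbabilityMeasure P] {n : ℕ}

theorem IsCanonical.integral_decoupledNorm_rpow_le (hn : n ≠ 0) {R : ℝ} (hR : 0 < R) {r : ℝ}
    (hr : 2 ≤ r) {k : ℕ} {T : Type v} [MeasurableSpace T] (μ : Measure T) [IsProbabilityMeasure μ]
    {H : (Fin k → Fin n) → T → (Fin k → S) → B} {κ : ℝ} (h : IsCanonical P H κ)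
    (hκR : n ^ k * κ ≤ n * R) :
    ∫ ω, decoupledNorm μ H ω ^ r ∂(Measure.pi fun _ => Measure.pi fun _ => P) ≤
      (decoupledConst k * (√r ^ k * √(∫ ω, decoupledNorm μ H ω ^ 2
        ∂(Measure.pi fun _ => Measure.pi fun _ => P)) + √r ^ (k + 1) * R)) ^ r := by
  induction k generalizing T κ with
  | zero =>
    have hconst (ω : Fin 0 → Fin n → S) : decoupledNorm μ H ω = decoupledNorm μ H default :=
      congrArg _ (Subsingleton.elim _ _)
    have h0 : 0 ≤ decoupledNorm μ H default := Real.sqrt_nonneg _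
    simp only [hconst, integral_const, probReal_univ, one_smul, Real.sqrt_sq h0, decoupledConst,
      pow_zero, one_mul]
    gcongr
    exact le_add_of_nonneg_right (by positivity)
  | succ k ih =>
    have hκR' : n ^ k * κ ≤ R := by
      rw [pow_succ', mul_assoc] at hκR
      exact le_of_mul_le_mul_left hκR (by positivity)
    have htail := ih (μ.prod (Measure.pi fun _ : Fin n => P)) h.isCanonical_tailKernel
      (hκR.trans_eq' (by ring))
    rw [h.integral_sq_decoupledNorm_tailKernel μ] at htail
    set E := ∫ ω, decoupledNorm μ H ω ^ 2 ∂(Measure.pi fun _ => Measure.pi fun _ => P)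
    have hX : 0 ≤ decoupledConst k * (√r ^ k * √E + √r ^ (k + 1) * R) :=
      mul_nonneg (decoupledConst_pos k).le (by positivity)
    refine (h.integral_decoupledNorm_rpow_le_of_tailKernel μ hR hκR' hr hX htail).trans ?_
    exact Real.rpow_le_rpow (by positivity)
      (mul_sqrt_mul_add_le_decoupledConst_succ k (by linarith) (Real.sqrt_nonneg E) hR.le)
      (by linarith)

end Moments

/-! ### Decoupling -/

lemma card_filter_leftInverse {α β : Type*} [Fintype α] [Fintype β] [DecidableEq α]
    [DecidableEq β] {i : α → β} (hi : Function.Injective i) :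
    #{δ : β → α | Function.LeftInverse δ i} =
      Fintype.card α ^ (Fintype.card β - Fintype.card α) := by
  have hpi : ({δ : β → α | Function.LeftInverse δ i} : Finset (β → α)) =
      Fintype.piFinset fun m => {j' : α | ∀ j, i j = m → j' = j} := by
    ext δ
    simp only [Function.LeftInverse, mem_filter, mem_univ, true_and, Fintype.mem_piFinset]
    exact ⟨fun h m j hj => hj ▸ h j, fun h j => h _ j rfl⟩
  have hcard (m : β) : #{j' : α | ∀ j, i j = m → j' = j} =
      if m ∈ univ.image i then 1 else Fintype.card α := by
    split_ifs with hm
    · obtain ⟨j, -, rfl⟩ := mem_image.1 hm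
      simp [hi.eq_iff, filter_eq']
    · simp only [mem_image, mem_univ, true_and, not_exists] at hm
      simp [hm]
  rw [hpi, Fintype.card_piFinset]
  simp only [hcard]
  rw [prod_ite, prod_const_one, one_mul, prod_const, filter_not, filter_univ_mem,
    ← compl_eq_univ_sdiff, card_compl, card_image_of_injective _ hi, card_univ]

lemma integral_pi_eq_zero_of_integral_update {ι X B : Type*} [Fintype ι] [DecidableEq ι]
    [MeasurableSpace X] [NormedAddCommGroup B] [NormedSpace ℝ B] {μ : Measure X}
    [IsProbabilityMeasure μ] {f : (ι → X) → B} (hf : StronglyMeasurable f)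
    (hint : Integrable f (Measure.pi fun _ => μ)) (j : ι)
    (h : ∀ x, ∫ y, f (Function.update x j y) ∂μ = 0) : ∫ x, f x ∂(Measure.pi fun _ => μ) = 0 := by
  have hmp := measurePreserving_piecewise μ {j}
  have hzero (x : ι → X) : ∫ y, f (Function.update x j (y j)) ∂(Measure.pi fun _ => μ) = 0 :=
    (integral_comp_eval (μ := fun _ : ι => μ) (f := fun y => f (Function.update x j y))
      (hf.comp_measurable (measurable_update x)).aestronglyMeasurable).trans (h x)
  rw [← hmp.map_eq, integral_map hmp.measurable.aemeasurable hf.aestronglyMeasurable,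
    integral_prod_symm (fun p : (ι → X) × (ι → X) => f (Finset.piecewise {j} p.1 p.2))
      (hmp.integrable_comp_of_integrable hint)]
  simp only [piecewise_singleton, hzero, integral_zero]

section Colouring

variable {S T B : Type*} {k n : ℕ}

/-- The array which agrees with `ω` where the colouring `δ` assigns the index `m` to the `j`-th
array, and with `ω'` elsewhere. -/
def colourMix (δ : Fin n → Fin k) (ω ω' : Fin k → Fin n → S) : Fin k → Fin n → S :=
  fun j m => if δ m = j then ω j m else ω' j m

variable [NormedAddCommGroup B]

/-- The restriction of a family of kernels to the indices `i` for which the colouring `δ` assigns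
each `i_j` to the `j`-th array. -/
def colourRestrict (δ : Fin n → Fin k) (H : (Fin k → Fin n) → T → (Fin k → S) → B)
    (i : Fin k → Fin n) : T → (Fin k → S) → B :=
  if Function.LeftInverse δ i then H i else 0

lemma decoupledSum_colourRestrict_diag (δ : Fin n → Fin k)
    (H : (Fin k → Fin n) → T → (Fin k → S) → B) (ω : Fin k → Fin n → S) (t : T) :
    decoupledSum (colourRestrict δ H) (fun _ m => ω (δ m) m) t =
      decoupledSum (colourRestrict δ H) ω t := by
  refine sum_congr rfl fun i _ => ?_
  by_cases hi : Function.LeftInverse δ i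
  · simp only [hi _]
  · simp only [colourRestrict, if_neg hi, Pi.zero_apply]

lemma sum_decoupledSum_colourRestrict {H : (Fin k → Fin n) → T → (Fin k → S) → B}
    (hH : ∀ i, ¬ Function.Injective i → H i = 0) (ω : Fin k → Fin n → S) (t : T) :
    ∑ δ, decoupledSum (colourRestrict δ H) ω t = k ^ (n - k) • decoupledSum H ω t := by
  simp only [decoupledSum]
  rw [sum_comm, smul_sum]
  refine sum_congr rfl fun i _ => ?_
  by_cases hi : Function.Injective i
  · simp only [colourRestrict, ite_apply, Pi.zero_apply]
    rw [← sum_filter, sum_const, card_filter_leftInverse hi, Fintype.card_fin, Fintype.card_fin]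
  · simp [colourRestrict, hH i hi]

lemma norm_decoupledSum_le_expect_colourRestrict [NeZero k] [NormedSpace ℝ B]
    {H : (Fin k → Fin n) → T → (Fin k → S) → B} (hH : ∀ i, ¬ Function.Injective i → H i = 0)
    (ω : Fin k → Fin n → S) (t : T) :
    ‖decoupledSum H ω t‖ ≤
      k ^ k * 𝔼 δ : Fin n → Fin k, ‖decoupledSum (colourRestrict δ H) ω t‖ := by
  have hk : (0 : ℝ) < k := mod_cast Nat.pos_of_neZero k
  by_cases hkn : k ≤ n
  · have hnorm : k ^ (n - k) * ‖decoupledSum H ω t‖ ≤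
        ∑ δ : Fin n → Fin k, ‖decoupledSum (colourRestrict δ H) ω t‖ := by
      simpa [sum_decoupledSum_colourRestrict hH, ← Nat.cast_smul_eq_nsmul ℝ, norm_smul] using
        norm_sum_le univ fun δ : Fin n → Fin k => decoupledSum (colourRestrict δ H) ω t
    have hpow : (k : ℝ) ^ n = k ^ k * k ^ (n - k) := by rw [← pow_add, Nat.add_sub_cancel' hkn]
    rw [Fintype.expect_eq_sum_div_card, Fintype.card_fun, Fintype.card_fin, Fintype.card_fin,
      Nat.cast_pow, hpow, ← mul_div_assoc, mul_div_mul_left _ _ (by positivity),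
      le_div_iff₀' (by positivity)]
    exact hnorm
  · have hzero (i : Fin k → Fin n) : H i = 0 := hH i fun hi =>
      hkn (by simpa using Fintype.card_le_of_injective i hi)
    simp only [decoupledSum, hzero, Pi.zero_apply, sum_const_zero, norm_zero]
    exact mul_nonneg (by positivity) (expect_nonneg fun _ _ => norm_nonneg _)

section MeasurePreserving

variable [MeasurableSpace S] (P : Measure S) [IsProbabilityMeasure P] (δ : Fin n → Fin k)

lemma measurePreserving_colourMix :
    MeasurePreserving (fun p : (Fin k → Fin n → S) × (Fin k → Fin n → S) => colourMix δ p.1 p.2)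
      ((Measure.pi fun _ => Measure.pi fun _ => P).prod (Measure.pi fun _ => Measure.pi fun _ => P))
      (Measure.pi fun _ => Measure.pi fun _ => P) := by
  convert measurePreserving_pi_prod (ι := Fin k) (Measure.pi fun _ : Fin n => P)
    fun j => measurePreserving_piecewise P {m | δ m = j} using 1
  ext p j m
  simp [colourMix, Finset.piecewise]

lemma measurePreserving_diag :
    MeasurePreserving (fun (ω : Fin k → Fin n → S) m => ω (δ m) m)
      (Measure.pi fun _ => Measure.pi fun _ => P) (Measure.pi fun _ => P) := by
  have hmeas : Measurable fun (ω : Fin k → Fin n → S) m => ω (δ m) m := by fun_prop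
  refine ⟨hmeas, (Measure.pi_eq fun s hs => ?_).symm⟩
  have hpre : (fun (ω : Fin k → Fin n → S) m => ω (δ m) m) ⁻¹' Set.univ.pi s =
      Set.univ.pi fun j => Set.univ.pi fun m => if δ m = j then s m else Set.univ := by
    ext ω
    simp only [Set.mem_preimage, Set.mem_univ_pi, Set.mem_ite_univ_right]
    exact ⟨fun h j m hj => hj ▸ h m, fun h m => h _ m rfl⟩
  rw [Measure.map_apply hmeas (.univ_pi hs), hpre, Measure.pi_pi]
  simp only [Measure.pi_pi, apply_ite P, measure_univ]
  rw [prod_comm]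
  simp

end MeasurePreserving

end Colouring

namespace IsCanonical

variable {S T B : Type*} [MeasurableSpace S] [MeasurableSpace T] [NormedAddCommGroup B]
  [NormedSpace ℝ B] {P : Measure S} {k n : ℕ} {κ : ℝ}
  {H : (Fin k → Fin n) → T → (Fin k → S) → B}

lemma isCanonical_colourRestrict (h : IsCanonical P H κ) (δ : Fin n → Fin k) :
    IsCanonical P (colourRestrict δ H) κ where
  stronglyMeasurable i := by
    unfold colourRestrict
    split_ifs
    · exact h.stronglyMeasurable i
    · exact stronglyMeasurable_const
  norm_le i t x := by
    unfold colourRestrict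
    split_ifs
    · exact h.norm_le i t x
    · simpa using (norm_nonneg _).trans (h.norm_le i t x)
  integral_update i t j x := by
    unfold colourRestrict
    split_ifs
    · exact h.integral_update i t j x
    · simp

lemma bddNonneg_norm_decoupledSum_apply (h : IsCanonical P H κ) (t : T) :
    BddNonneg fun ω => ‖decoupledSum H ω t‖ :=
  h.bddNonneg_norm_decoupledSum.comp measurable_prodMk_right

variable [IsProbabilityMeasure P]

lemma decoupledSum_colourRestrict_eq_integral [CompleteSpace B] (h : IsCanonical P H κ)
    (δ : Fin n → Fin k) (ω : Fin k → Fin n → S) (t : T) :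
    decoupledSum (colourRestrict δ H) ω t =
      ∫ ω', decoupledSum H (colourMix δ ω ω') t ∂(Measure.pi fun _ => Measure.pi fun _ => P) := by
  have hmeas (i : Fin k → Fin n) :
      StronglyMeasurable fun ω' => H i t fun j => colourMix δ ω ω' j (i j) :=
    (h.stronglyMeasurable i).comp_measurable (measurable_const.prodMk <| measurable_pi_lambda _
      fun j => ((measurePreserving_colourMix P δ).measurable.comp measurable_prodMk_left).eval.eval)
  have hint (i : Fin k → Fin n) : Integrable (fun ω' => H i t fun j => colourMix δ ω ω' j (i j))
      (Measure.pi fun _ => Measure.pi fun _ => P) :=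
    .of_bound (hmeas i).aestronglyMeasurable κ (.of_forall fun _ => h.norm_le i t _)
  simp only [decoupledSum]
  rw [integral_finsetSum _ fun i _ => hint i]
  refine sum_congr rfl fun i _ => ?_
  by_cases hi : Function.LeftInverse δ i
  · simp [colourRestrict, colourMix, hi, hi _]
  · obtain ⟨j₀, hj₀⟩ := not_forall.1 hi
    rw [colourRestrict, if_neg hi]
    refine (integral_pi_eq_zero_of_integral_update (hmeas i) (hint i) j₀ fun ω' => ?_).symm
    have hupdate (y : Fin n → S) : (fun j => colourMix δ ω (Function.update ω' j₀ y) j (i j)) =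
        Function.update (fun j => colourMix δ ω ω' j (i j)) j₀ (y (i j₀)) := by
      ext j
      obtain rfl | hj := eq_or_ne j j₀
      · simp [colourMix, hj₀]
      · simp [colourMix, hj]
    simp only [hupdate]
    rw [integral_comp_eval (μ := fun _ : Fin n => P) (i := i j₀)
      (f := fun y => H i t (Function.update (fun j => colourMix δ ω ω' j (i j)) j₀ y))
      (h.integrable_update i t j₀ _).aestronglyMeasurable, h.integral_update]

lemma integral_norm_decoupledSum_colourRestrict_rpow_le [CompleteSpace B] (h : IsCanonical P H κ)
    (δ : Fin n → Fin k) (t : T) {r : ℝ} (hr : 1 ≤ r) :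
    ∫ x, ‖decoupledSum (colourRestrict δ H) (fun _ => x) t‖ ^ r ∂(Measure.pi fun _ => P) ≤
      ∫ ω, ‖decoupledSum H ω t‖ ^ r ∂(Measure.pi fun _ => Measure.pi fun _ => P) := by
  have hr0 := zero_le_one.trans hr
  have hF := h.bddNonneg_norm_decoupledSum_apply t
  have hG := (h.isCanonical_colourRestrict δ).bddNonneg_norm_decoupledSum_apply t
  have hdiag : BddNonneg fun x : Fin n → S =>
      ‖decoupledSum (colourRestrict δ H) (fun _ => x) t‖ := hG.comp (by fun_prop)
  have hmix := measurePreserving_colourMix P δ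
  rw [← (hdiag.rpow hr0).integral_comp_measurePreserving (measurePreserving_diag P δ),
    ← (hF.rpow hr0).integral_comp_measurePreserving hmix]
  simp only [decoupledSum_colourRestrict_diag]
  refine hG.integral_rpow_le_integral_prod (hF.comp hmix.measurable) (fun ω => ?_) hr
  rw [h.decoupledSum_colourRestrict_eq_integral]
  exact norm_integral_le_integral_norm _

theorem integral_norm_decoupledSum_diag_rpow_le [CompleteSpace B] [NeZero k]
    (h : IsCanonical P H κ) (hH : ∀ i, ¬ Function.Injective i → H i = 0) (t : T) {r : ℝ}
    (hr : 1 ≤ r) :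
    ∫ x, ‖decoupledSum H (fun _ => x) t‖ ^ r ∂(Measure.pi fun _ => P) ≤
      (k ^ k) ^ r * ∫ ω, ‖decoupledSum H ω t‖ ^ r ∂(Measure.pi fun _ => Measure.pi fun _ => P) := by
  have hr0 := zero_le_one.trans hr
  set ν : Measure (Fin n → S) := Measure.pi fun _ => P
  have hdiag {H' : (Fin k → Fin n) → T → (Fin k → S) → B} (h' : IsCanonical P H' κ) :
      BddNonneg fun x : Fin n → S => ‖decoupledSum H' (fun _ => x) t‖ ^ r :=
    ((h'.bddNonneg_norm_decoupledSum_apply t).comp (by fun_prop)).rpow hr0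
  have hδ (δ : Fin n → Fin k) := hdiag (h.isCanonical_colourRestrict δ)
  have hjensen (x : Fin n → S) : ‖decoupledSum H (fun _ => x) t‖ ^ r ≤
      (k ^ k) ^ r * 𝔼 δ, ‖decoupledSum (colourRestrict δ H) (fun _ => x) t‖ ^ r := by
    refine (Real.rpow_le_rpow (norm_nonneg _)
      (norm_decoupledSum_le_expect_colourRestrict hH _ t) hr0).trans ?_
    rw [Real.mul_rpow (by positivity) (expect_nonneg fun _ _ => norm_nonneg _)]
    gcongr
    exact map_expect_le (convexOn_rpow hr) fun _ => norm_nonneg _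
  calc ∫ x, ‖decoupledSum H (fun _ => x) t‖ ^ r ∂ν
    _ ≤ ∫ x, (k ^ k) ^ r * 𝔼 δ, ‖decoupledSum (colourRestrict δ H) (fun _ => x) t‖ ^ r ∂ν :=
      (hdiag h).integral_mono ((BddNonneg.expect hδ).const_mul (by positivity)) hjensen ν
    _ = (k ^ k) ^ r * 𝔼 δ, ∫ x, ‖decoupledSum (colourRestrict δ H) (fun _ => x) t‖ ^ r ∂ν := by
      rw [integral_const_mul, BddNonneg.integral_expect ν hδ]
    _ ≤ (k ^ k) ^ r * ∫ ω, ‖decoupledSum H ω t‖ ^ r ∂(Measure.pi fun _ => ν) := by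
      gcongr
      exact expect_le univ_nonempty fun δ _ =>
        h.integral_norm_decoupledSum_colourRestrict_rpow_le δ t hr

end IsCanonical

/-! ### Undecoupled sums -/

section Undecoupled

universe u v

variable {S : Type u} {B : Type v} {k n : ℕ}

/-- A single kernel `H` as a family of kernels whose sum ranges over the tuples of distinct indices
only; the parameter space is a point. -/
def injKernel [Zero B] (n : ℕ) (H : (Fin k → S) → B) (i : Fin k → Fin n) (_ : PUnit.{u + 1}) :
    (Fin k → S) → B :=
  if Function.Injective i then H else 0

lemma decoupledSum_injKernel [NormedAddCommGroup B] (H : (Fin k → S) → B)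
    (ω : Fin k → Fin n → S) (t : PUnit) :
    decoupledSum (injKernel n H) ω t = ∑ i ∈ injTuples k n, H fun j => ω j (i j) := by
  simp only [decoupledSum, injKernel, injTuples, ite_apply, Pi.zero_apply, sum_filter]

lemma decoupledNorm_dirac [NormedAddCommGroup B] (H : (Fin k → Fin n) → PUnit → (Fin k → S) → B)
    (ω : Fin k → Fin n → S) (t : PUnit) :
    decoupledNorm (Measure.dirac t) H ω = ‖decoupledSum H ω t‖ := by
  rw [decoupledNorm, integral_dirac, Real.sqrt_sq (norm_nonneg _)]

variable [MeasurableSpace S] [NormedAddCommGroup B] [NormedSpace ℝ B] {P : Measure S}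

lemma isCanonical_injKernel {H : (Fin k → S) → B} (hH : StronglyMeasurable H) {κ : ℝ}
    (hκ : ∀ x, ‖H x‖ ≤ κ) (hcan : ∀ j x, ∫ y, H (Function.update x j y) ∂P = 0) :
    IsCanonical P (injKernel n H) κ where
  stronglyMeasurable i := by
    unfold injKernel
    split_ifs
    · exact hH.comp_measurable measurable_snd
    · exact stronglyMeasurable_const
  norm_le i _ x := by
    unfold injKernel
    split_ifs
    · exact hκ x
    · simpa using (norm_nonneg _).trans (hκ x)
  integral_update i _ j x := by
    unfold injKernel
    split_ifs
    · exact hcan j x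
    · simp

variable [CompleteSpace B] [IsProbabilityMeasure P]

theorem integral_norm_sum_injTuples_rpow_le [NeZero k] (hn : n ≠ 0) {H : (Fin k → S) → B}
    (hH : StronglyMeasurable H) {κ : ℝ} (hκ0 : 0 < κ) (hκ : ∀ x, ‖H x‖ ≤ κ)
    (hcan : ∀ j x, ∫ y, H (Function.update x j y) ∂P = 0) {r : ℝ} (hr : 2 ≤ r) :
    ∫ ω : Fin n → S, ‖∑ i ∈ injTuples k n, H (ω ∘ i)‖ ^ r ∂(Measure.pi fun _ => P) ≤
      (k ^ k * decoupledConst k * (√r ^ k * √(∫ ω : Fin k → Fin n → S,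
        ‖∑ i ∈ injTuples k n, H (fun j => ω j (i j))‖ ^ 2
          ∂(Measure.pi fun _ => Measure.pi fun _ => P)) +
        √r ^ (k + 1) * (n ^ (k - 1) * κ))) ^ r := by
  have h : IsCanonical P (injKernel n H) κ := isCanonical_injKernel hH hκ hcan
  have hκR : n ^ k * κ = n * (n ^ (k - 1) * κ) := by
    rw [← mul_assoc, mul_pow_sub_one (NeZero.ne k)]
  have hdiag := h.integral_norm_decoupledSum_diag_rpow_le (fun i hi => funext fun _ => if_neg hi)
    ⟨⟩ (one_le_two.trans hr)
  have hdec := h.integral_decoupledNorm_rpow_le hn (by positivity) hr (Measure.dirac ⟨⟩) hκR.le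
  simp only [decoupledNorm_dirac, decoupledSum_injKernel] at hdiag hdec
  refine hdiag.trans ?_
  rw [mul_assoc, Real.mul_rpow (by positivity)
    (mul_nonneg (decoupledConst_pos k).le (by positivity))]
  gcongr

end Undecoupled

lemma sqrt_pow_rpow {r : ℝ} (hr : 0 ≤ r) (m : ℕ) : (√r ^ m) ^ r = r ^ (m * r / 2) := by
  rw [← Real.rpow_natCast, ← Real.rpow_mul (Real.sqrt_nonneg r), Real.rpow_div_two_eq_sqrt _ hr]

lemma natCast_pow_rpow (n m : ℕ) (r : ℝ) : ((n : ℝ) ^ m) ^ r = (n : ℝ) ^ (m * r) := by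
  rw [← Real.rpow_natCast, ← Real.rpow_mul n.cast_nonneg]

lemma add_rpow_le_two_rpow_mul {a b r : ℝ} (ha : 0 ≤ a) (hb : 0 ≤ b) (hr : 0 ≤ r) :
    (a + b) ^ r ≤ 2 ^ r * (a ^ r + b ^ r) := by
  wlog hab : a ≤ b generalizing a b
  · rw [add_comm a, add_comm (a ^ r)]
    exact this hb ha (le_of_not_ge hab)
  calc (a + b) ^ r ≤ (2 * b) ^ r := by gcongr; linarith
    _ = 2 ^ r * b ^ r := Real.mul_rpow zero_le_two hb
    _ ≤ 2 ^ r * (a ^ r + b ^ r) := by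
      gcongr
      exact le_add_of_nonneg_left (by positivity)

lemma mul_sqrt_pow_add_rpow_le {C r a κ : ℝ} (hC : 0 ≤ C) (hr : 0 ≤ r) (ha : 0 ≤ a) (hκ : 0 ≤ κ)
    {k : ℕ} (hk : 1 ≤ k) (n : ℕ) :
    (C * (√r ^ k * a + √r ^ (k + 1) * (n ^ (k - 1) * κ))) ^ r ≤
      (C * 2) ^ r * (r ^ ((k : ℝ) * r / 2) * a ^ r +
        r ^ (((k : ℝ) + 1) * r / 2) * (n : ℝ) ^ (((k : ℝ) - 1) * r) * κ ^ r) := by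
  rw [Real.mul_rpow hC (by positivity), Real.mul_rpow hC zero_le_two, mul_assoc]
  gcongr
  refine (add_rpow_le_two_rpow_mul (by positivity) (by positivity) hr).trans_eq ?_
  rw [Real.mul_rpow (by positivity) ha, Real.mul_rpow (by positivity) (by positivity),
    Real.mul_rpow (by positivity) hκ, sqrt_pow_rpow hr, sqrt_pow_rpow hr, natCast_pow_rpow,
    Nat.cast_add_one, Nat.cast_sub hk, Nat.cast_one, mul_assoc (r ^ (((k : ℝ) + 1) * r / 2))]

theorem stmt3_general (k : ℕ) (hk : 1 ≤ k) :
    ∃ D0 : ℝ, 0 < D0 ∧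
      ∀ (B : Type*) [NormedAddCommGroup B] [NormedSpace ℝ B] [CompleteSpace B],
      ∀ (S : Type*) [MeasurableSpace S] (P : Measure S) [IsProbabilityMeasure P],
      ∀ H : (Fin k → S) → B, StronglyMeasurable H →
        (∀ (j : Fin k) (x : Fin k → S), (∫ y, H (Function.update x j y) ∂P) = 0) →
      ∀ (n : ℕ) (κ χ : ℝ),
        (∀ x, ‖H x‖ ≤ κ) →
        √(∫ ω : Fin k → Fin n → S, ‖∑ i ∈ injTuples k n, H (fun j => ω j (i j))‖ ^ 2
          ∂(Measure.pi fun _ => Measure.pi fun _ => P)) ≤ χ →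
      ∀ r : ℝ, 2 ≤ r →
        ∫ ω : Fin n → S, ‖∑ i ∈ injTuples k n, H (ω ∘ i)‖ ^ r ∂(Measure.pi fun _ => P) ≤
        D0 ^ r * (r ^ ((k : ℝ) * r / 2) * χ ^ r +
          r ^ (((k : ℝ) + 1) * r / 2) * (n : ℝ) ^ (((k : ℝ) - 1) * r) * κ ^ r) := by
  have : NeZero k := ⟨by omega⟩
  have hC : 0 < k ^ k * decoupledConst k :=
    mul_pos (pow_pos (mod_cast hk) k) (decoupledConst_pos k)
  refine ⟨k ^ k * decoupledConst k * 2, by positivity, ?_⟩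
  intro B _ _ _ S _ P _ H hH hcan n κ χ hκ hχ r hr
  obtain ⟨s⟩ := nonempty_of_isProbabilityMeasure P
  have hκ0 : 0 ≤ κ := (norm_nonneg _).trans (hκ fun _ => s)
  have hχ0 : 0 ≤ χ := (Real.sqrt_nonneg _).trans hχ
  have hr0 : 0 < r := by linarith
  by_cases hzero : ∀ ω : Fin n → S, ∑ i ∈ injTuples k n, H (ω ∘ i) = 0
  · simp only [hzero, norm_zero, Real.zero_rpow hr0.ne', integral_zero]
    positivity
  have hn : n ≠ 0 := by
    rintro rfl
    exact hzero fun ω => sum_eq_zero fun i _ => (i 0).elim0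
  have hκpos : 0 < κ := hκ0.lt_of_ne' fun h => hzero fun ω => sum_eq_zero fun i _ =>
    norm_le_zero_iff.1 ((hκ _).trans_eq h)
  refine (integral_norm_sum_injTuples_rpow_le hn hH hκpos hκ hcan hr).trans ?_
  refine le_trans ?_ (mul_sqrt_pow_add_rpow_le hC.le hr0.le hχ0 hκ0 hk n)
  gcongr

/-- (Theorem 10, undecoupled moment inequality.) Let `B` be a separable Banach
space, `H : S^k → B` bounded, symmetric and `P`-canonical, `X_1,…,X_n` i.i.d. with law `P`,
and let `X_i^{(j)}` be a decoupled i.i.d. array with law `P`. If `κ ≥ sup ‖H‖` and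
`χ_n ≥ (E‖Σ_{i ∈ I_n^k} H(X_{i_1}^{(1)},…,X_{i_k}^{(k)})‖²)^{1/2}`, then there is a constant
`D₀` depending only on `k` such that for all `n` and `r ≥ 2`,
`E‖Σ_{i ∈ I_n^k} H(X_{i_1},…,X_{i_k})‖^r
  ≤ D₀^r [r^{kr/2} χ_n^r + r^{(k+1)r/2} n^{(k−1)r} κ^r + r^{kr} κ^r]`. -/
theorem stmt3 (k : ℕ) (hk : 1 ≤ k) :
    ∃ D0 : ℝ, 0 < D0 ∧
      ∀ (B : Type) [NormedAddCommGroup B] [NormedSpace ℝ B] [CompleteSpace B]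
        [SecondCountableTopology B],
      ∀ (S : Type) (_ : MeasurableSpace S), Nonempty S →
      ∀ (P : Measure S), IsProbabilityMeasure P →
      ∀ H : (Fin k → S) → B, StronglyMeasurable H →
        (∀ (τ : Equiv.Perm (Fin k)) (x : Fin k → S), H (x ∘ τ) = H x) →
        (∀ (j : Fin k) (x : Fin k → S), (∫ y, H (Function.update x j y) ∂P) = 0) →
      ∀ (n : ℕ) (κ χ : ℝ),
        (∀ x, ‖H x‖ ≤ κ) →
        Real.sqrt (∫ ω : Fin k → Fin n → S,
            ‖∑ i ∈ injTuples k n, H (fun j => ω j (i j))‖ ^ 2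
          ∂(Measure.pi fun _ : Fin k => (Measure.pi fun _ : Fin n => P))) ≤ χ →
      ∀ r : ℝ, 2 ≤ r →
        (∫ ω : Fin n → S, ‖∑ i ∈ injTuples k n, H (ω ∘ i)‖ ^ r
          ∂(Measure.pi fun _ : Fin n => P)) ≤
        D0 ^ r * (r ^ ((k : ℝ) * r / 2) * χ ^ r +
          r ^ (((k : ℝ) + 1) * r / 2) * (n : ℝ) ^ (((k : ℝ) - 1) * r) * κ ^ r +
          r ^ ((k : ℝ) * r) * κ ^ r) := by
  obtain ⟨D0, hD0, hmain⟩ := stmt3_general k hk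
  refine ⟨D0, hD0, fun B _ _ _ _ S _ ⟨s⟩ P _ H hH _ hcan n κ χ hκ hχ r hr => ?_⟩
  have hκ0 : 0 ≤ κ := (norm_nonneg _).trans (hκ fun _ => s)
  exact (hmain B S P H hH hcan n κ χ hκ hχ r hr).trans
    (mul_le_mul_of_nonneg_left (le_add_of_nonneg_right (by positivity)) (by positivity))
end
end

section
/- Let (S, 𝒮) be a measurable space, P a probability measure on S, X_1, X_2, … i.i.d. with law P, and g : S^m → ℝ^d measurable such that g(X_1, …, X_m) has a density f_g on ℝ^d. Let 1 ≤ p < 2, s > d(2−p)/p, 0 < b < ∞, and let K be a kernel with K² ∈ L_1(μ_s) and f_g ∈ L_1(μ_s). Then there exists a constant C, depending only on m, d, p, s, b and ‖f_g‖_{L_1(μ_s)}, such that for every 1 ≤ k ≤ m, every n ≥ k and every 0 < h ≤ b, ( E ‖ Σ_{(i_1,…,i_k) ∈ I_n^k} π_k K̄_h(·, X_{i_1}, …, X_{i_k}) ‖_{L_p(ℝ^d)}² )^{1/2} ≤ C ‖K‖_{L_2(μ_s)} n^{k/2} / h^{1/2}. -/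
open MeasureTheory Finset
open scoped ENNReal
noncomputable section

/-- The `k`-th Hoeffding projection `π_k L` of an `m`-variable kernel `L` with respect to `P`:
`π_k L(x_1,…,x_k) = Σ_{A ⊆ {1,…,k}} (−1)^{k−|A|} E L(Y_1,…,Y_m)` where `Y_j = x_j` for
`j ∈ A` and `Y_j` is an independent `P`-distributed variable otherwise. -/
def hproj {S : Type*} [MeasurableSpace S] (P : Measure S) (m k : ℕ)
    (L : (Fin m → S) → ℝ) (x : Fin k → S) : ℝ :=
  ∑ A : Finset (Fin k), (-1 : ℝ) ^ (k - A.card) *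
    ∫ y : Fin m → S,
      L (fun j => if h : (j : ℕ) < k then
          (if (⟨(j : ℕ), h⟩ : Fin k) ∈ A then x ⟨(j : ℕ), h⟩ else y j) else y j)
      ∂(Measure.pi fun _ => P)

/-- The symmetrized dilated kernel
`K̄_h(t, x_1,…,x_m) = (1/m!) Σ_σ K_h(t − g(x_{σ(1)},…,x_{σ(m)}))`, where
`K_h(t) = h^{−1} K(t/h^{1/d})`. -/
def Kbar {S : Type*} (d m : ℕ) (g : (Fin m → S) → EuclideanSpace ℝ (Fin d))
    (K : EuclideanSpace ℝ (Fin d) → ℝ) (h : ℝ) (t : EuclideanSpace ℝ (Fin d))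
    (x : Fin m → S) : ℝ :=
  ((m.factorial : ℝ))⁻¹ * ∑ σ : Equiv.Perm (Fin m),
    h⁻¹ * K ((h ^ ((1 : ℝ) / d))⁻¹ • (t - g (x ∘ σ)))

/-!
Since `s > d (2 - p) / p`, Hölder's inequality against a power of `1 + ‖t‖` bounds the `L_p` norm by
the norm of `L_2(μ_s)`, and in `L_2(μ_s)` Tonelli lets the expectation be taken first, for fixed
`t`. There the projections are degenerate: integrating out a sample point that occurs in only one
of two factors gives zero, so two index tuples contribute to the second moment only if they have the
same entries. Each tuple has at most `k ^ k` such partners, so the second moment is `O(n ^ k)` times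
that of `K̄_h(t, ·)`. Integrating in `t` after the substitution `t = v + h ^ (1 / d) u`, with
`1 + ‖v + r u‖ ≤ (1 + ‖v‖) max(1, r) (1 + ‖u‖)`, produces the factor `1 / h`, the norm of `K` in
`L_2(μ_s)` and the `s`-th moment of `1 + ‖g(X_1, …, X_m)‖`.
-/

section ProductMeasure

lemma measurePreserving_pi_comp_of_injective {ι κ : Type*} [Fintype ι] [Fintype κ]
    {X : ι → Type*} [∀ i, MeasurableSpace (X i)] (μ : ∀ i, Measure (X i))
    [∀ i, IsProbabilityMeasure (μ i)] {e : κ → ι} (he : Function.Injective e) :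
    MeasurePreserving (fun (z : ∀ i, X i) j => z (e j)) (Measure.pi μ)
      (Measure.pi fun j => μ (e j)) := by
  refine ⟨by fun_prop, ?_⟩
  have hindep : ProbabilityTheory.iIndepFun (fun j (z : ∀ i, X i) => z (e j)) (Measure.pi μ) :=
    (ProbabilityTheory.iIndepFun_pi (X := fun _ => id) fun _ => aemeasurable_id).precomp he
  rw [ProbabilityTheory.iIndepFun_iff_map_fun_eq_pi_map
    fun j => (measurable_pi_apply (e j)).aemeasurable] at hindep
  simpa only [(measurePreserving_eval μ _).map_eq] using hindep

lemma measurePreserving_sumElim {S ι κ : Type*} [MeasurableSpace S] [Fintype ι] [Fintype κ]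
    (P : Measure S) [SigmaFinite P] :
    MeasurePreserving (fun q : (ι → S) × (κ → S) => (Sum.elim q.1 q.2 : ι ⊕ κ → S))
      ((Measure.pi fun _ => P).prod (Measure.pi fun _ => P)) (Measure.pi fun _ => P) := by
  convert measurePreserving_sumPiEquivProdPi_symm (X := fun _ : ι ⊕ κ => S) (fun _ => P)
    using 1
  ext q (j | j) <;> rfl

lemma eLpNorm_integral_prod_right_le {α β E : Type*} [MeasurableSpace α] [MeasurableSpace β]
    [NormedAddCommGroup E] [NormedSpace ℝ E] {μ : Measure α} {ν : Measure β} [SFinite μ]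
    [IsProbabilityMeasure ν] {q : ℝ≥0∞} (hq : 1 ≤ q) (hq_top : q ≠ ∞) {f : α × β → E}
    (hf : AEStronglyMeasurable f (μ.prod ν)) :
    eLpNorm (fun x => ∫ y, f (x, y) ∂ν) q μ ≤ eLpNorm f q (μ.prod ν) := by
  have hq0 : q ≠ 0 := (one_pos.trans_le hq).ne'
  have jensen : ∀ᵐ x ∂μ, ‖∫ y, f (x, y) ∂ν‖ₑ ^ q.toReal ≤ ∫⁻ y, ‖f (x, y)‖ₑ ^ q.toReal ∂ν := by
    filter_upwards [hf.prodMk_left] with x hx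
    calc ‖∫ y, f (x, y) ∂ν‖ₑ ^ q.toReal
        ≤ eLpNorm (fun y => f (x, y)) 1 ν ^ q.toReal := by
          rw [eLpNorm_one_eq_lintegral_enorm]
          gcongr
          exact enorm_integral_le_lintegral_enorm _
      _ ≤ eLpNorm (fun y => f (x, y)) q ν ^ q.toReal := by
          gcongr
          exact eLpNorm_le_eLpNorm_of_exponent_le hq hx
      _ = ∫⁻ y, ‖f (x, y)‖ₑ ^ q.toReal ∂ν := by
          rw [eLpNorm_eq_lintegral_rpow_enorm_toReal hq0 hq_top, one_div,
            ENNReal.rpow_inv_rpow (ENNReal.toReal_ne_zero.2 ⟨hq0, hq_top⟩)]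
  rw [eLpNorm_eq_lintegral_rpow_enorm_toReal hq0 hq_top,
    eLpNorm_eq_lintegral_rpow_enorm_toReal hq0 hq_top, lintegral_prod _ (by fun_prop)]
  gcongr 1
  exact lintegral_mono_ae jensen

end ProductMeasure

section SecondMoment

variable {α : Type*} [MeasurableSpace α] {μ : Measure α}

lemma eLpNorm_two_sq {E : Type*} [NormedAddCommGroup E] (f : α → E) :
    eLpNorm f 2 μ ^ 2 = ∫⁻ x, ‖f x‖ₑ ^ 2 ∂μ := by
  simpa using eLpNorm_nnreal_pow_eq_lintegral (f := f) (μ := μ) (p := 2) two_ne_zero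

lemma eLpNorm_two_sq_eq_ofReal_integral {f : α → ℝ} (hf : MemLp f 2 μ) :
    eLpNorm f 2 μ ^ 2 = ENNReal.ofReal (∫ x, f x ^ 2 ∂μ) := by
  rw [eLpNorm_two_sq, ofReal_integral_eq_lintegral_ofReal hf.integrable_sq
    (ae_of_all _ fun x => sq_nonneg _)]
  refine lintegral_congr fun x => ?_
  rw [← enorm_pow, Real.enorm_of_nonneg (sq_nonneg _)]

lemma integral_mul_le_of_integral_sq_le {f g : α → ℝ} {W : ℝ} (hf : MemLp f 2 μ)
    (hg : MemLp g 2 μ) (hfW : ∫ x, f x ^ 2 ∂μ ≤ W) (hgW : ∫ x, g x ^ 2 ∂μ ≤ W) :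
    ∫ x, f x * g x ∂μ ≤ W := by
  have hsum : Integrable (fun x => f x ^ 2 + g x ^ 2) μ := hf.integrable_sq.add hg.integrable_sq
  calc ∫ x, f x * g x ∂μ ≤ ∫ x, 2⁻¹ * (f x ^ 2 + g x ^ 2) ∂μ := by
        refine integral_mono (hf.integrable_mul hg) (hsum.const_mul _) fun x => ?_
        linarith [two_mul_le_add_sq (f x) (g x)]
    _ = 2⁻¹ * (∫ x, f x ^ 2 ∂μ + ∫ x, g x ^ 2 ∂μ) := by
        rw [integral_const_mul, integral_add hf.integrable_sq hg.integrable_sq]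
    _ ≤ W := by linarith

lemma integral_sq_sum_le_of_sparse_correlation {ι : Type*} {s : Finset ι} {f : ι → α → ℝ}
    {W : ℝ} {N : ℕ} (B : ι → Finset ι) (hB : ∀ i ∈ s, #(B i) ≤ N)
    (hf : ∀ i ∈ s, MemLp (f i) 2 μ) (hW : ∀ i ∈ s, ∫ x, f i x ^ 2 ∂μ ≤ W)
    (horth : ∀ i ∈ s, ∀ j ∈ s, j ∉ B i → ∫ x, f j x * f i x ∂μ = 0) :
    ∫ x, (∑ i ∈ s, f i x) ^ 2 ∂μ ≤ #s * (N * W) := by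
  classical
  have hint : ∀ i ∈ s, ∀ j ∈ s, Integrable (fun x => f j x * f i x) μ :=
    fun i hi j hj => (hf j hj).integrable_mul (hf i hi)
  have hrow : ∀ i ∈ s, ∑ j ∈ s, ∫ x, f j x * f i x ∂μ ≤ N * W := by
    intro i hi
    have hW0 : 0 ≤ W := (integral_nonneg fun x => sq_nonneg _).trans (hW i hi)
    calc ∑ j ∈ s, ∫ x, f j x * f i x ∂μ
        = ∑ j ∈ s with j ∈ B i, ∫ x, f j x * f i x ∂μ := by
          refine (sum_filter_of_ne fun j hj hne => ?_).symm
          exact of_not_not fun hjB => hne (horth i hi j hj hjB)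
      _ ≤ ∑ j ∈ s with j ∈ B i, W := by
          refine sum_le_sum fun j hj => ?_
          have hjs := (mem_filter.1 hj).1
          exact integral_mul_le_of_integral_sq_le (hf j hjs) (hf i hi) (hW j hjs) (hW i hi)
      _ = #{j ∈ s | j ∈ B i} * W := by rw [sum_const, nsmul_eq_mul]
      _ ≤ N * W := by
          gcongr
          exact (card_le_card fun j hj => (mem_filter.1 hj).2).trans (hB i hi)
  calc ∫ x, (∑ i ∈ s, f i x) ^ 2 ∂μ = ∑ i ∈ s, ∑ j ∈ s, ∫ x, f j x * f i x ∂μ := by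
        simp_rw [sq, mul_sum, sum_mul]
        rw [integral_finsetSum _ fun i hi => integrable_finsetSum _ (hint i hi)]
        exact sum_congr rfl fun i hi => integral_finsetSum _ (hint i hi)
    _ ≤ ∑ _i ∈ s, N * W := sum_le_sum hrow
    _ = #s * (N * W) := by rw [sum_const, nsmul_eq_mul]

end SecondMoment

section MixIndex

variable {ι : Type*} {m k : ℕ}

/-- The bookkeeping map behind `π_k`: it sends slot `j` of `L` to the sample index `i j` when
`j ∈ A`, and to the `j`-th auxiliary integration variable otherwise. Sample indices sit in the left
summand and auxiliary variables in the right one. -/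
def mixIndex (A : Finset (Fin k)) (i : Fin k → ι) (j : Fin m) : ι ⊕ Fin m :=
  if h : (j : ℕ) < k then if (⟨j, h⟩ : Fin k) ∈ A then .inl (i ⟨j, h⟩) else .inr j else .inr j

lemma mixIndex_injective (A : Finset (Fin k)) {i : Fin k → ι} (hi : Function.Injective i) :
    Function.Injective (mixIndex (m := m) A i) := by
  intro a b hab
  unfold mixIndex at hab
  split_ifs at hab
  · simpa [Fin.ext_iff] using hi (Sum.inl_injective hab)
  all_goals exact Sum.inr_injective hab

lemma swap_comp_mixIndex [DecidableEq ι] (hkm : k ≤ m) {A : Finset (Fin k)} {i : Fin k → ι}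
    (hi : Function.Injective i) {l : Fin k} (hl : l ∉ A) :
    Equiv.swap (.inl (i l)) (.inr (Fin.castLE hkm l)) ∘ mixIndex A i
      = mixIndex (insert l A) i := by
  funext j
  have hjl (h : (j : ℕ) < k) : j = Fin.castLE hkm l ↔ ⟨j, h⟩ = l := by simp [Fin.ext_iff]
  by_cases h : (j : ℕ) < k
  · by_cases hj : (⟨j, h⟩ : Fin k) = l
    · simp [mixIndex, hl, (hjl h).2 hj]
    · by_cases hA : (⟨j, h⟩ : Fin k) ∈ A <;>
        simp [mixIndex, h, hj, hA, hjl, Equiv.swap_apply_def, hi.eq_iff]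
  · have hne : j ≠ Fin.castLE hkm l := fun hj => h (hj ▸ l.2)
    simp [mixIndex, h, Equiv.swap_apply_def, hne]

end MixIndex

section PartialMean

variable {S ι : Type*} [MeasurableSpace S] (P : Measure S) {m k : ℕ}

/-- The mean `E L(Y_1, …, Y_m)` occurring in `π_k L`, where `Y_j` is the sample point `ω (i j)` for
`j ∈ A` and an independent `P`-distributed variable otherwise. It is a function of the whole sample
`ω`, so that terms with different index tuples `i` live on one probability space. -/
def partialMean (L : (Fin m → S) → ℝ) (A : Finset (Fin k)) (i : Fin k → ι) (ω : ι → S) : ℝ :=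
  ∫ y : Fin m → S, L ((Sum.elim ω y : ι ⊕ Fin m → S) ∘ mixIndex A i) ∂(Measure.pi fun _ => P)

lemma hproj_comp_eq_sum_partialMean (L : (Fin m → S) → ℝ) (i : Fin k → ι) (ω : ι → S) :
    hproj P m k L (ω ∘ i)
      = ∑ A : Finset (Fin k), (-1 : ℝ) ^ (k - #A) * partialMean P L A i ω := by
  unfold hproj partialMean
  congr! 5 with A _ y
  funext j
  simp only [Function.comp_apply, mixIndex]
  split_ifs <;> rfl

variable [IsProbabilityMeasure P] [Fintype ι] {L : (Fin m → S) → ℝ} {i : Fin k → ι}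

lemma measurePreserving_sumElim_comp_mixIndex (A : Finset (Fin k)) (hi : Function.Injective i) :
    MeasurePreserving
      (fun q : (ι → S) × (Fin m → S) => (Sum.elim q.1 q.2 : ι ⊕ Fin m → S) ∘ mixIndex A i)
      ((Measure.pi fun _ => P).prod (Measure.pi fun _ => P)) (Measure.pi fun _ => P) :=
  (measurePreserving_pi_comp_of_injective (fun _ => P) (mixIndex_injective A hi)).comp
    (measurePreserving_sumElim P)

lemma eLpNorm_partialMean_le {q : ℝ≥0∞} (hq : 1 ≤ q) (hq_top : q ≠ ∞)
    (hL : AEStronglyMeasurable L (Measure.pi fun _ => P)) (A : Finset (Fin k))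
    (hi : Function.Injective i) :
    eLpNorm (partialMean P L A i) q (Measure.pi fun _ => P)
      ≤ eLpNorm L q (Measure.pi fun _ => P) := by
  have mp := measurePreserving_sumElim_comp_mixIndex P (m := m) A hi
  rw [← eLpNorm_comp_measurePreserving hL mp]
  exact eLpNorm_integral_prod_right_le (β := Fin m → S)
    (f := L ∘ fun q => (Sum.elim q.1 q.2 : ι ⊕ Fin m → S) ∘ mixIndex A i) hq hq_top
    (hL.comp_measurePreserving mp)

lemma aestronglyMeasurable_partialMean (hL : AEStronglyMeasurable L (Measure.pi fun _ => P))
    (A : Finset (Fin k)) (hi : Function.Injective i) :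
    AEStronglyMeasurable (partialMean P L A i) (Measure.pi fun _ => P) :=
  (hL.comp_measurePreserving
    (measurePreserving_sumElim_comp_mixIndex P A hi)).integral_prod_right'

lemma memLp_partialMean {q : ℝ≥0∞} (hq : 1 ≤ q) (hq_top : q ≠ ∞)
    (hL : MemLp L q (Measure.pi fun _ => P)) (A : Finset (Fin k)) (hi : Function.Injective i) :
    MemLp (partialMean P L A i) q (Measure.pi fun _ => P) :=
  ⟨aestronglyMeasurable_partialMean P hL.1 A hi,
    (eLpNorm_partialMean_le P hq hq_top hL.1 A hi).trans_lt hL.2⟩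

lemma integral_partialMean_mul (hL : MemLp L 2 (Measure.pi fun _ => P)) (A : Finset (Fin k))
    (hi : Function.Injective i) {Q : (ι → S) → ℝ} (hQ : MemLp Q 2 (Measure.pi fun _ => P)) :
    ∫ ω, partialMean P L A i ω * Q ω ∂(Measure.pi fun _ => P)
      = ∫ z : ι ⊕ Fin m → S, L (z ∘ mixIndex A i) * Q (z ∘ Sum.inl)
        ∂(Measure.pi fun _ => P) := by
  have mpL := measurePreserving_pi_comp_of_injective (fun _ => P) (mixIndex_injective (m := m) A hi)
  have mpQ := measurePreserving_pi_comp_of_injective (fun _ => P)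
    (Sum.inl_injective (α := ι) (β := Fin m))
  have hint : Integrable (fun z : ι ⊕ Fin m → S => L (z ∘ mixIndex A i) * Q (z ∘ Sum.inl))
      (Measure.pi fun _ => P) :=
    (hL.comp_measurePreserving mpL).integrable_mul (hQ.comp_measurePreserving mpQ)
  have mp := measurePreserving_sumElim (ι := ι) (κ := Fin m) P
  have hint_prod := mp.integrable_comp_of_integrable hint
  simp only [Function.comp_def] at hint_prod
  rw [← mp.map_eq, integral_map mp.measurable.aemeasurable (mp.map_eq ▸ hint.1)]
  refine Eq.trans ?_ (integral_prod _ hint_prod).symm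
  simp only [partialMean, ← integral_mul_const, Function.comp_def, Sum.elim_inl]

-- `L (z ∘ mixIndex A i)` and `L (z ∘ mixIndex (insert l A) i)` differ by exchanging the sample
-- coordinate `i l` with an auxiliary one; the law of `z` is exchangeable and `Q` sees neither.
lemma integral_partialMean_mul_insert (hkm : k ≤ m) (hL : MemLp L 2 (Measure.pi fun _ => P))
    {A : Finset (Fin k)} (hi : Function.Injective i) {l : Fin k} (hl : l ∉ A)
    {Q : (ι → S) → ℝ} (hQ : MemLp Q 2 (Measure.pi fun _ => P)) (hdep : DependsOn Q {i l}ᶜ) :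
    ∫ ω, partialMean P L (insert l A) i ω * Q ω ∂(Measure.pi fun _ => P)
      = ∫ ω, partialMean P L A i ω * Q ω ∂(Measure.pi fun _ => P) := by
  classical
  let τ : Equiv.Perm (ι ⊕ Fin m) := Equiv.swap (.inl (i l)) (.inr (Fin.castLE hkm l))
  have mp : MeasurePreserving (MeasurableEquiv.arrowCongr' τ (.refl S))
      (Measure.pi fun _ => P) (Measure.pi fun _ => P) :=
    measurePreserving_arrowCongr' (fun _ => P) (fun _ => P) τ (.refl S) fun _ => .id P
  have hτ (z : ι ⊕ Fin m → S) : MeasurableEquiv.arrowCongr' τ (.refl S) z = z ∘ τ := rfl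
  have hLτ (z : ι ⊕ Fin m → S) : L ((z ∘ τ) ∘ mixIndex A i) = L (z ∘ mixIndex (insert l A) i) := by
    rw [Function.comp_assoc, swap_comp_mixIndex hkm hi hl]
  have hQτ (z : ι ⊕ Fin m → S) : Q ((z ∘ τ) ∘ Sum.inl) = Q (z ∘ Sum.inl) :=
    hdep fun a ha => by
      have hne : a ≠ i l := ha
      simp [τ, Equiv.swap_apply_def, hne]
  rw [integral_partialMean_mul P hL _ hi hQ, integral_partialMean_mul P hL _ hi hQ]
  refine Eq.symm ((mp.integral_comp' _).symm.trans ?_)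
  simp only [hτ, hLτ, hQτ]

end PartialMean

section HoeffdingProjection

variable {S ι : Type*} [MeasurableSpace S] (P : Measure S) {m k : ℕ}

lemma dependsOn_hproj_comp (L : (Fin m → S) → ℝ) {i : Fin k → ι} {s : Set ι}
    (hs : Set.range i ⊆ s) : DependsOn (fun ω : ι → S => hproj P m k L (ω ∘ i)) s :=
  fun _ _ h => congrArg _ (funext fun j => h _ (hs ⟨j, rfl⟩))

lemma neg_one_pow_sub_card_insert {R : Type*} [Ring R] {A : Finset (Fin k)} {l : Fin k}
    (hl : l ∉ A) : (-1 : R) ^ (k - #(insert l A)) = -(-1) ^ (k - #A) := by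
  have hcard : #(insert l A) ≤ k := by simpa using card_le_univ (insert l A)
  rw [card_insert_of_notMem hl] at hcard ⊢
  rw [show k - #A = k - (#A + 1) + 1 by lia, pow_succ, mul_neg_one, neg_neg]

variable [IsProbabilityMeasure P] [Fintype ι] {L : (Fin m → S) → ℝ} {i : Fin k → ι}

lemma integral_hproj_comp_mul_eq_zero (hkm : k ≤ m) (hL : MemLp L 2 (Measure.pi fun _ => P))
    (hi : Function.Injective i) (l : Fin k) {Q : (ι → S) → ℝ}
    (hQ : MemLp Q 2 (Measure.pi fun _ => P)) (hdep : DependsOn Q {i l}ᶜ) :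
    ∫ ω, hproj P m k L (ω ∘ i) * Q ω ∂(Measure.pi fun _ => P) = 0 := by
  have hterm (A : Finset (Fin k)) : Integrable
      (fun ω => (-1 : ℝ) ^ (k - #A) * (partialMean P L A i ω * Q ω)) (Measure.pi fun _ => P) :=
    ((memLp_partialMean P one_le_two ENNReal.ofNat_ne_top hL A hi).integrable_mul hQ).const_mul _
  have hcancel (A : Finset (Fin k)) (hl : l ∉ A) :
      (-1 : ℝ) ^ (k - #(insert l A))
          * ∫ ω, partialMean P L (insert l A) i ω * Q ω ∂(Measure.pi fun _ => P)
        = -((-1) ^ (k - #A) * ∫ ω, partialMean P L A i ω * Q ω ∂(Measure.pi fun _ => P)) := by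
    rw [neg_one_pow_sub_card_insert hl, integral_partialMean_mul_insert P hkm hL hi hl hQ hdep,
      neg_mul]
  simp_rw [hproj_comp_eq_sum_partialMean, sum_mul, mul_assoc]
  rw [integral_finsetSum _ fun A _ => hterm A]
  simp_rw [integral_const_mul]
  rw [← powerset_univ, ← insert_erase (mem_univ l), sum_powerset_insert (notMem_erase l _),
    ← sum_add_distrib]
  refine sum_eq_zero fun A hA => ?_
  rw [hcancel A (notMem_mono (mem_powerset.1 hA) (notMem_erase l _)), add_neg_cancel]

lemma eLpNorm_hproj_comp_le {q : ℝ≥0∞} (hq : 1 ≤ q) (hq_top : q ≠ ∞)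
    (hL : AEStronglyMeasurable L (Measure.pi fun _ => P)) (hi : Function.Injective i) :
    eLpNorm (fun ω => hproj P m k L (ω ∘ i)) q (Measure.pi fun _ => P)
      ≤ 2 ^ k * eLpNorm L q (Measure.pi fun _ => P) := by
  have hmeas (A : Finset (Fin k)) := aestronglyMeasurable_partialMean P hL A hi
  have hterm (A : Finset (Fin k)) :
      eLpNorm ((-1 : ℝ) ^ (k - #A) • partialMean P L A i) q (Measure.pi fun _ => P)
        ≤ eLpNorm L q (Measure.pi fun _ => P) := by
    rw [eLpNorm_const_smul, enorm_pow, enorm_neg, enorm_one, one_pow, one_mul]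
    exact eLpNorm_partialMean_le P hq hq_top hL A hi
  calc eLpNorm (fun ω => hproj P m k L (ω ∘ i)) q (Measure.pi fun _ => P)
      = eLpNorm (∑ A : Finset (Fin k), (-1 : ℝ) ^ (k - #A) • partialMean P L A i) q
          (Measure.pi fun _ => P) := by
        congr 1
        ext ω
        simp [hproj_comp_eq_sum_partialMean]
    _ ≤ ∑ A : Finset (Fin k), eLpNorm ((-1 : ℝ) ^ (k - #A) • partialMean P L A i) q
          (Measure.pi fun _ => P) := eLpNorm_sum_le (fun A _ => (hmeas A).const_smul _) hq
    _ ≤ ∑ _A : Finset (Fin k), eLpNorm L q (Measure.pi fun _ => P) :=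
        sum_le_sum fun A _ => hterm A
    _ = 2 ^ k * eLpNorm L q (Measure.pi fun _ => P) := by simp

lemma memLp_hproj_comp {q : ℝ≥0∞} (hq : 1 ≤ q) (hq_top : q ≠ ∞)
    (hL : MemLp L q (Measure.pi fun _ => P)) (hi : Function.Injective i) :
    MemLp (fun ω => hproj P m k L (ω ∘ i)) q (Measure.pi fun _ => P) := by
  simp_rw [hproj_comp_eq_sum_partialMean]
  exact memLp_finsetSum _ fun A _ => (memLp_partialMean P hq hq_top hL A hi).const_mul _

lemma integral_sq_hproj_comp_le (hL : MemLp L 2 (Measure.pi fun _ => P))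
    (hi : Function.Injective i) :
    ∫ ω, hproj P m k L (ω ∘ i) ^ 2 ∂(Measure.pi fun _ => P)
      ≤ 4 ^ k * ∫ x, L x ^ 2 ∂(Measure.pi fun _ => P) := by
  have hbound : eLpNorm (fun ω => hproj P m k L (ω ∘ i)) 2 (Measure.pi fun _ => P) ^ 2
      ≤ 4 ^ k * eLpNorm L 2 (Measure.pi fun _ => P) ^ 2 := by
    calc _ ≤ (2 ^ k * eLpNorm L 2 (Measure.pi fun _ => P)) ^ 2 := by
          gcongr
          exact eLpNorm_hproj_comp_le P one_le_two ENNReal.ofNat_ne_top hL.1 hi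
      _ = 4 ^ k * eLpNorm L 2 (Measure.pi fun _ => P) ^ 2 := by
          rw [mul_pow, ← pow_mul, mul_comm k, pow_mul]; norm_num
  rw [eLpNorm_two_sq_eq_ofReal_integral hL, eLpNorm_two_sq_eq_ofReal_integral
    (memLp_hproj_comp P one_le_two ENNReal.ofNat_ne_top hL hi)] at hbound
  refine (ENNReal.ofReal_le_ofReal_iff (by positivity)).1 (hbound.trans_eq ?_)
  rw [ENNReal.ofReal_mul (by positivity), ENNReal.ofReal_pow (by norm_num)]
  simp

lemma integral_sq_sum_hproj_le {n : ℕ} (hkm : k ≤ m) (hL : MemLp L 2 (Measure.pi fun _ => P)) :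
    ∫ ω : Fin n → S, (∑ i ∈ injTuples k n, hproj P m k L (ω ∘ i)) ^ 2 ∂(Measure.pi fun _ => P)
      ≤ (4 * k * n) ^ k * ∫ x, L x ^ 2 ∂(Measure.pi fun _ => P) := by
  have hinj (i : Fin k → Fin n) (hi : i ∈ injTuples k n) : i.Injective := (mem_filter.1 hi).2
  have hmem (i : Fin k → Fin n) (hi : i ∈ injTuples k n) :=
    memLp_hproj_comp P one_le_two ENNReal.ofNat_ne_top hL (hinj i hi)
  let B (i : Fin k → Fin n) : Finset (Fin k → Fin n) := Fintype.piFinset fun _ => univ.image i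
  have hB (i : Fin k → Fin n) (_ : i ∈ injTuples k n) : #(B i) ≤ k ^ k := by
    simpa [B] using Nat.pow_le_pow_left (card_image_le (s := univ) (f := i)) k
  have horth (i : Fin k → Fin n) (hi : i ∈ injTuples k n) (j : Fin k → Fin n)
      (hj : j ∈ injTuples k n) (hjB : j ∉ B i) :
      ∫ ω, hproj P m k L (ω ∘ j) * hproj P m k L (ω ∘ i) ∂(Measure.pi fun _ => P) = 0 := by
    obtain ⟨l, hl⟩ : ∃ l, j l ∉ univ.image i := by simpa [B, Fintype.mem_piFinset] using hjB
    refine integral_hproj_comp_mul_eq_zero P hkm hL (hinj j hj) l (hmem i hi) ?_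
    exact dependsOn_hproj_comp P L (by simpa [Set.subset_def, eq_comm] using hl)
  have hcard : (#(injTuples k n) : ℝ) ≤ n ^ k := by
    exact_mod_cast (card_filter_le _ _).trans_eq (by simp)
  calc _ ≤ #(injTuples k n) * (↑(k ^ k) * (4 ^ k * ∫ x, L x ^ 2 ∂(Measure.pi fun _ => P))) :=
        integral_sq_sum_le_of_sparse_correlation B hB hmem
          (fun i hi => integral_sq_hproj_comp_le P hL (hinj i hi)) horth
    _ ≤ n ^ k * (↑(k ^ k) * (4 ^ k * ∫ x, L x ^ 2 ∂(Measure.pi fun _ => P))) := by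
        gcongr
    _ = (4 * k * n) ^ k * ∫ x, L x ^ 2 ∂(Measure.pi fun _ => P) := by
        push_cast; ring

lemma lintegral_enorm_sq_sum_hproj_le {n : ℕ} (hkm : k ≤ m)
    (hL : AEStronglyMeasurable L (Measure.pi fun _ => P)) :
    ∫⁻ ω : Fin n → S, ‖∑ i ∈ injTuples k n, hproj P m k L (ω ∘ i)‖ₑ ^ 2 ∂(Measure.pi fun _ => P)
      ≤ (4 * k * n) ^ k * ∫⁻ x, ‖L x‖ₑ ^ 2 ∂(Measure.pi fun _ => P) := by
  by_cases hLp : MemLp L 2 (Measure.pi fun _ => P)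
  · have hsum : MemLp (fun ω : Fin n → S => ∑ i ∈ injTuples k n, hproj P m k L (ω ∘ i)) 2
        (Measure.pi fun _ => P) := memLp_finsetSum _ fun i hi =>
      memLp_hproj_comp P one_le_two ENNReal.ofNat_ne_top hLp (mem_filter.1 hi).2
    rw [← eLpNorm_two_sq, ← eLpNorm_two_sq, eLpNorm_two_sq_eq_ofReal_integral hsum,
      eLpNorm_two_sq_eq_ofReal_integral hLp]
    refine (ENNReal.ofReal_le_ofReal (integral_sq_sum_hproj_le P hkm hLp)).trans_eq ?_
    rw [ENNReal.ofReal_mul (by positivity), ENNReal.ofReal_pow (by positivity),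
      ENNReal.ofReal_mul (by positivity), ENNReal.ofReal_mul (by positivity)]
    simp
  · have htop : ∫⁻ x, ‖L x‖ₑ ^ 2 ∂(Measure.pi fun _ => P) = ∞ := by
      rw [← eLpNorm_two_sq]
      simpa [MemLp, hL] using hLp
    obtain hempty | ⟨i, hi⟩ := (injTuples k n).eq_empty_or_nonempty
    · simp [hempty]
    · have hkn : k ≤ n := by
        simpa using Fintype.card_le_of_injective i (mem_filter.1 hi).2
      have hconst : (4 * k * n : ℝ≥0∞) ^ k ≠ 0 := by
        rcases k.eq_zero_or_pos with rfl | hk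
        · simp
        · simp [hk.ne', (hk.trans_le hkn).ne']
      rw [htop, ENNReal.mul_top hconst]
      exact le_top

end HoeffdingProjection

section JointMeasurability

variable {S T : Type*} [MeasurableSpace S] [MeasurableSpace T] {m k : ℕ}

lemma measurable_uncurry_hproj (P : Measure S) [IsProbabilityMeasure P]
    {L : T → (Fin m → S) → ℝ} (hL : Measurable (Function.uncurry L)) :
    Measurable fun q : T × (Fin k → S) => hproj P m k (L q.1) q.2 := by
  refine Finset.measurable_sum _ fun A _ => Measurable.const_mul ?_ _
  have hslot (j : Fin m) : Measurable fun r : (T × (Fin k → S)) × (Fin m → S) =>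
      if h : (j : ℕ) < k then if (⟨j, h⟩ : Fin k) ∈ A then r.1.2 ⟨j, h⟩ else r.2 j else r.2 j := by
    split_ifs <;> fun_prop
  refine (StronglyMeasurable.integral_prod_right (ν := Measure.pi fun _ => P) ?_).measurable
  exact (hL.comp (measurable_fst.fst.prodMk (measurable_pi_lambda _ hslot))).stronglyMeasurable

lemma measurable_uncurry_sum_hproj (P : Measure S) [IsProbabilityMeasure P] {n : ℕ}
    {L : T → (Fin m → S) → ℝ} (hL : Measurable (Function.uncurry L)) :
    Measurable (Function.uncurry fun t (ω : Fin n → S) =>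
      ∑ i ∈ injTuples k n, hproj P m k (L t) (ω ∘ i)) := by
  refine Finset.measurable_sum _ fun i _ => ?_
  have hi : Measurable fun q : T × (Fin n → S) => (q.1, q.2 ∘ i) := by fun_prop
  exact (measurable_uncurry_hproj P hL).comp hi

end JointMeasurability

section SymmetrizedKernel

/-- The dilated kernel `K_h(t) = h⁻¹ K(t / h^{1/d})` on a space of dimension `d`. -/
def dilate {E : Type*} [AddCommGroup E] [Module ℝ E] (d : ℕ) (K : E → ℝ) (h : ℝ) (t : E) : ℝ :=
  h⁻¹ * K ((h ^ ((1 : ℝ) / d))⁻¹ • t)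

variable {S : Type*} [MeasurableSpace S] {d m : ℕ} {g : (Fin m → S) → EuclideanSpace ℝ (Fin d)}
  {K : EuclideanSpace ℝ (Fin d) → ℝ}

lemma measurable_dilate {E : Type*} [AddCommGroup E] [Module ℝ E] [MeasurableSpace E]
    [MeasurableConstSMul ℝ E] {K : E → ℝ} (hK : Measurable K) (d : ℕ) (h : ℝ) :
    Measurable (dilate d K h) :=
  (hK.comp (measurable_const_smul _)).const_mul _

lemma measurable_uncurry_Kbar (hg : Measurable g) (hK : Measurable K) (h : ℝ) :
    Measurable (Function.uncurry (Kbar d m g K h)) := by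
  refine (Finset.measurable_sum _ fun σ _ => (measurable_dilate hK d h).comp ?_).const_mul _
  have hperm : Measurable fun x : Fin m → S => x ∘ σ := by fun_prop
  exact Measurable.sub measurable_fst ((hg.comp hperm).comp measurable_snd)

lemma eLpNorm_Kbar_le (P : Measure S) [IsProbabilityMeasure P] (hg : Measurable g)
    (hK : Measurable K) (h : ℝ) (t : EuclideanSpace ℝ (Fin d)) {q : ℝ≥0∞} (hq : 1 ≤ q) :
    eLpNorm (Kbar d m g K h t) q (Measure.pi fun _ => P)
      ≤ eLpNorm (fun x => dilate d K h (t - g x)) q (Measure.pi fun _ => P) := by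
  have hmeas : Measurable fun x => dilate d K h (t - g x) :=
    (measurable_dilate hK d h).comp (hg.const_sub t)
  have mp (σ : Equiv.Perm (Fin m)) :=
    measurePreserving_pi_comp_of_injective (fun _ : Fin m => P) σ.injective
  calc eLpNorm (Kbar d m g K h t) q (Measure.pi fun _ => P)
      = eLpNorm ((m.factorial : ℝ)⁻¹ • ∑ σ : Equiv.Perm (Fin m),
          fun x : Fin m → S => dilate d K h (t - g (x ∘ σ))) q (Measure.pi fun _ => P) := by
        congr 1
        ext x
        simp [Kbar, dilate]
    _ ≤ (m.factorial : ℝ≥0∞)⁻¹ * ∑ σ : Equiv.Perm (Fin m),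
          eLpNorm (fun x : Fin m → S => dilate d K h (t - g (x ∘ σ))) q
            (Measure.pi fun _ => P) := by
        rw [eLpNorm_const_smul, enorm_inv (by positivity), Real.enorm_natCast]
        gcongr
        exact eLpNorm_sum_le
          (fun σ _ => (hmeas.comp (mp σ).measurable).aestronglyMeasurable) hq
    _ = eLpNorm (fun x => dilate d K h (t - g x)) q (Measure.pi fun _ => P) := by
        have hσ (σ : Equiv.Perm (Fin m)) :
            eLpNorm (fun x : Fin m → S => dilate d K h (t - g (x ∘ σ))) q (Measure.pi fun _ => P)
              = eLpNorm (fun x => dilate d K h (t - g x)) q (Measure.pi fun _ => P) :=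
          eLpNorm_comp_measurePreserving hmeas.aestronglyMeasurable (mp σ)
        simp_rw [hσ]
        rw [sum_const, card_univ, Fintype.card_perm, Fintype.card_fin, nsmul_eq_mul, ← mul_assoc,
          ENNReal.inv_mul_cancel (by positivity) (ENNReal.natCast_ne_top _), one_mul]

end SymmetrizedKernel

section JapaneseBracket

variable {E : Type*} [NormedAddCommGroup E] [NormedSpace ℝ E]

lemma one_add_norm_add_smul_le (v u : E) (r : ℝ) :
    1 + ‖v + r • u‖ ≤ (1 + ‖v‖) * max 1 |r| * (1 + ‖u‖) := by
  have htri : ‖v + r • u‖ ≤ ‖v‖ + |r| * ‖u‖ :=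
    (norm_add_le _ _).trans_eq (by rw [norm_smul, Real.norm_eq_abs])
  have h1 := le_max_left 1 |r|
  have h2 : |r| * ‖u‖ ≤ max 1 |r| * ‖u‖ := by gcongr; exact le_max_right _ _
  have h3 : 0 ≤ max 1 |r| * (‖v‖ * ‖u‖) := by positivity
  nlinarith [mul_le_mul_of_nonneg_right h1 (norm_nonneg v)]

lemma one_add_norm_add_smul_rpow_le {s r M : ℝ} (hs : 0 ≤ s) (hrM : max 1 |r| ≤ M) (v u : E) :
    (1 + ‖v + r • u‖) ^ s ≤ (1 + ‖v‖) ^ s * M ^ s * (1 + ‖u‖) ^ s := by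
  have hM : 0 ≤ M := zero_le_one.trans ((le_max_left _ _).trans hrM)
  rw [← Real.mul_rpow (by positivity) hM, ← Real.mul_rpow (by positivity) (by positivity)]
  gcongr
  exact (one_add_norm_add_smul_le v u r).trans (by gcongr)

lemma weight_mul_enorm_sq_dilate_sub_le {d : ℕ} {s h M : ℝ} (hs : 0 ≤ s) (hh : 0 < h)
    (hM : max 1 (h ^ ((1 : ℝ) / d)) ≤ M) (K : E → ℝ) (v t : E) :
    ENNReal.ofReal ((1 + ‖t‖) ^ s) * ‖dilate d K h (t - v)‖ₑ ^ 2
      ≤ ENNReal.ofReal ((1 + ‖v‖) ^ s * M ^ s * h⁻¹ ^ 2)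
        * (ENNReal.ofReal ((1 + ‖(h ^ ((1 : ℝ) / d))⁻¹ • (t - v)‖) ^ s)
          * ‖K ((h ^ ((1 : ℝ) / d))⁻¹ • (t - v))‖ₑ ^ 2) := by
  have hr : 0 < h ^ ((1 : ℝ) / d) := Real.rpow_pos_of_pos hh _
  have hM0 : 0 ≤ M := zero_le_one.trans ((le_max_left _ _).trans hM)
  obtain ⟨u, hu⟩ : ∃ u, u = (h ^ ((1 : ℝ) / d))⁻¹ • (t - v) := ⟨_, rfl⟩
  have ht : t = v + h ^ ((1 : ℝ) / d) • u := by
    rw [hu, smul_inv_smul₀ hr.ne', add_sub_cancel]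
  have hweight : (1 + ‖t‖) ^ s ≤ (1 + ‖v‖) ^ s * M ^ s * (1 + ‖u‖) ^ s := by
    rw [ht]
    exact one_add_norm_add_smul_rpow_le hs (by rwa [abs_of_pos hr]) v u
  simp only [dilate, ← hu, ← enorm_pow]
  simp only [Real.enorm_of_nonneg (sq_nonneg _)]
  rw [← ENNReal.ofReal_mul (by positivity), ← ENNReal.ofReal_mul (by positivity),
    ← ENNReal.ofReal_mul (by positivity)]
  refine ENNReal.ofReal_le_ofReal ?_
  calc (1 + ‖t‖) ^ s * (h⁻¹ * K u) ^ 2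
      ≤ (1 + ‖v‖) ^ s * M ^ s * (1 + ‖u‖) ^ s * (h⁻¹ * K u) ^ 2 := by gcongr
    _ = (1 + ‖v‖) ^ s * M ^ s * h⁻¹ ^ 2 * ((1 + ‖u‖) ^ s * K u ^ 2) := by ring

variable [FiniteDimensional ℝ E] [MeasurableSpace E] [BorelSpace E]

lemma lintegral_comp_inv_smul_sub (μ : Measure E) [μ.IsAddHaarMeasure] {r : ℝ} (hr : 0 < r)
    (v : E) {G : E → ℝ≥0∞} (hG : Measurable G) :
    ∫⁻ t, G (r⁻¹ • (t - v)) ∂μ = ENNReal.ofReal (r ^ Module.finrank ℝ E) * ∫⁻ u, G u ∂μ := by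
  have hsmul : Measurable fun t : E => r⁻¹ • t := measurable_const_smul _
  rw [lintegral_sub_right_eq_self (fun t => G (r⁻¹ • t)) v, ← lintegral_map hG hsmul,
    Measure.map_addHaar_smul μ (inv_ne_zero hr.ne'), lintegral_smul_measure, smul_eq_mul,
    inv_pow, inv_inv, abs_of_pos (by positivity)]

lemma memLp_one_add_norm_rpow_neg (μ : Measure E) [μ.IsAddHaarMeasure] {a q : ℝ} (hq : 0 < q)
    (haq : Module.finrank ℝ E < a * q) :
    MemLp (fun t => (1 + ‖t‖) ^ (-a)) (ENNReal.ofReal q) μ := by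
  refine ⟨Measurable.aestronglyMeasurable (by fun_prop), ?_⟩
  rw [eLpNorm_lt_top_iff_lintegral_rpow_enorm_lt_top (by simpa using hq) ENNReal.ofReal_ne_top,
    ENNReal.toReal_ofReal hq.le]
  refine (lintegral_congr fun t => ?_).trans_lt (finite_integral_one_add_norm (μ := μ) haq)
  rw [Real.enorm_of_nonneg (by positivity), ENNReal.ofReal_rpow_of_nonneg (by positivity) hq.le,
    ← Real.rpow_mul (by positivity), neg_mul]

end JapaneseBracket

section WeightedVolume

variable {E F : Type*} [NormedAddCommGroup E] [MeasureSpace E] [NormedAddCommGroup F]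

/-- The measure `μ_s`, with density `(1 + ‖t‖) ^ s` with respect to Lebesgue measure. -/
def weightedVolume (E : Type*) [NormedAddCommGroup E] [MeasureSpace E] (s : ℝ) : Measure E :=
  volume.withDensity fun t => ENNReal.ofReal ((1 + ‖t‖) ^ s)

instance [SFinite (volume : Measure E)] (s : ℝ) : SFinite (weightedVolume E s) := by
  unfold weightedVolume
  infer_instance

lemma lintegral_weightedVolume [OpensMeasurableSpace E] (s : ℝ) (f : E → ℝ≥0∞) :
    ∫⁻ t, f t ∂weightedVolume E s = ∫⁻ t, ENNReal.ofReal ((1 + ‖t‖) ^ s) * f t :=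
  lintegral_withDensity_eq_lintegral_mul_non_measurable _ (by fun_prop)
    (ae_of_all _ fun _ => ENNReal.ofReal_lt_top) f

lemma eLpNorm_two_sq_weightedVolume [OpensMeasurableSpace E] {s : ℝ} {f : E → ℝ}
    (hf : Integrable fun t => (1 + ‖t‖) ^ s * f t ^ 2) :
    eLpNorm f 2 (weightedVolume E s) ^ 2 = ENNReal.ofReal (∫ t, (1 + ‖t‖) ^ s * f t ^ 2) := by
  rw [eLpNorm_two_sq, lintegral_weightedVolume,
    ofReal_integral_eq_lintegral_ofReal hf (ae_of_all _ fun t => by positivity)]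
  refine lintegral_congr fun t => ?_
  rw [ENNReal.ofReal_mul (by positivity), ← enorm_pow, Real.enorm_of_nonneg (sq_nonneg _)]

lemma eLpNorm_two_weightedVolume [OpensMeasurableSpace E] [NormedSpace ℝ F] (s : ℝ) (f : E → F) :
    eLpNorm f 2 (weightedVolume E s)
      = eLpNorm (fun t => (1 + ‖t‖) ^ (s / 2) • f t) 2 volume := by
  refine (ENNReal.pow_right_strictMono two_ne_zero).injective ?_
  rw [eLpNorm_two_sq, eLpNorm_two_sq, lintegral_weightedVolume]
  refine lintegral_congr fun t => ?_
  rw [enorm_smul, mul_pow, ← enorm_pow, Real.enorm_of_nonneg (by positivity),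
    ← Real.rpow_natCast, ← Real.rpow_mul (by positivity), Nat.cast_ofNat,
    div_mul_cancel₀ _ two_ne_zero]

variable [NormedSpace ℝ E] [FiniteDimensional ℝ E] [BorelSpace E]
  [(volume : Measure E).IsAddHaarMeasure]

-- The substitution `t = v + r • u` has Jacobian `r ^ d = h`, against the factor `h⁻²` from `K_h²`.
lemma lintegral_enorm_sq_dilate_sub_le [Nontrivial E] {s h M : ℝ} (hs : 0 ≤ s) (hh : 0 < h)
    (hM : max 1 (h ^ ((1 : ℝ) / Module.finrank ℝ E)) ≤ M) {K : E → ℝ} (hK : Measurable K)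
    (v : E) :
    ∫⁻ t, ‖dilate (Module.finrank ℝ E) K h (t - v)‖ₑ ^ 2 ∂weightedVolume E s
      ≤ ENNReal.ofReal ((1 + ‖v‖) ^ s)
        * (ENNReal.ofReal (M ^ s / h) * ∫⁻ u, ‖K u‖ₑ ^ 2 ∂weightedVolume E s) := by
  have hr : 0 < h ^ ((1 : ℝ) / Module.finrank ℝ E) := Real.rpow_pos_of_pos hh _
  have hrd : (h ^ ((1 : ℝ) / Module.finrank ℝ E)) ^ Module.finrank ℝ E = h := by
    rw [one_div, Real.rpow_inv_natCast_pow hh.le Module.finrank_pos.ne']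
  have hM0 : 0 ≤ M := zero_le_one.trans ((le_max_left _ _).trans hM)
  have hfactor : (1 + ‖v‖) ^ s * M ^ s * h⁻¹ ^ 2 * h = (1 + ‖v‖) ^ s * (M ^ s / h) := by
    field_simp
  rw [lintegral_weightedVolume, lintegral_weightedVolume]
  refine (lintegral_mono fun t => weight_mul_enorm_sq_dilate_sub_le hs hh hM K v t).trans_eq ?_
  rw [lintegral_const_mul _ (by fun_prop), lintegral_comp_inv_smul_sub volume hr v
    (G := fun u => ENNReal.ofReal ((1 + ‖u‖) ^ s) * ‖K u‖ₑ ^ 2) (by fun_prop), hrd,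
    ← mul_assoc, ← ENNReal.ofReal_mul (by positivity), hfactor,
    ENNReal.ofReal_mul (by positivity), mul_assoc]

lemma exists_eLpNorm_le_mul_eLpNorm_two_weightedVolume [NormedSpace ℝ F] {p s : ℝ}
    (hp0 : 0 < p) (hp2 : p < 2) (hs : Module.finrank ℝ E * (2 - p) / p < s) :
    ∃ W : NNReal, ∀ f : E → F, AEStronglyMeasurable f →
      eLpNorm f (ENNReal.ofReal p) volume ≤ W * eLpNorm f 2 (weightedVolume E s) := by
  have h2p : 0 < 2 - p := sub_pos.2 hp2
  obtain ⟨q, hq⟩ : ∃ q, q = 2 * p / (2 - p) := ⟨_, rfl⟩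
  have hq0 : 0 < q := by rw [hq]; positivity
  have hweight : MemLp (fun t : E => (1 + ‖t‖) ^ (-(s / 2))) (ENNReal.ofReal q) := by
    refine memLp_one_add_norm_rpow_neg volume hq0 ?_
    rw [div_lt_iff₀ hp0] at hs
    rw [hq, div_mul_div_comm, lt_div_iff₀ (by positivity)]
    linarith
  have : ENNReal.HolderTriple (ENNReal.ofReal q) 2 (ENNReal.ofReal p) := by
    constructor
    rw [← ENNReal.ofReal_ofNat 2, ← ENNReal.ofReal_inv_of_pos hq0,
      ← ENNReal.ofReal_inv_of_pos two_pos, ← ENNReal.ofReal_inv_of_pos hp0,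
      ← ENNReal.ofReal_add (by positivity) (by positivity), hq]
    congr 1
    field_simp
    ring
  refine ⟨(eLpNorm (fun t : E => (1 + ‖t‖) ^ (-(s / 2))) (ENNReal.ofReal q) volume).toNNReal,
    fun f hf => ?_⟩
  have hsplit : f = (fun t : E => (1 + ‖t‖) ^ (-(s / 2))) •
      fun t => (1 + ‖t‖) ^ (s / 2) • f t := by
    ext t
    simp [smul_smul, ← Real.rpow_add (show 0 < 1 + ‖t‖ by positivity)]
  rw [eLpNorm_two_weightedVolume, ENNReal.coe_toNNReal hweight.2.ne]
  nth_rw 1 [hsplit]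
  exact eLpNorm_smul_le_mul_eLpNorm ((Measurable.aestronglyMeasurable (by fun_prop)).smul hf)
    hweight.1

end WeightedVolume

section Tonelli

variable {α β : Type*} [MeasurableSpace α] [MeasurableSpace β]

lemma lintegral_eLpNorm_two_sq_swap (μ : Measure α) (ν : Measure β) [SFinite μ] [SFinite ν]
    {E : Type*} [NormedAddCommGroup E] [MeasurableSpace E] [OpensMeasurableSpace E]
    {F : α → β → E} (hF : Measurable (Function.uncurry F)) :
    ∫⁻ y, eLpNorm (fun x => F x y) 2 μ ^ 2 ∂ν = ∫⁻ x, eLpNorm (F x) 2 ν ^ 2 ∂μ := by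
  simp only [eLpNorm_two_sq]
  exact (lintegral_lintegral_swap (hF.enorm.pow_const 2).aemeasurable).symm

lemma lintegral_eLpNorm_two_sq_sum_hproj_le {S T : Type*} [MeasurableSpace S] [MeasurableSpace T]
    (P : Measure S) [IsProbabilityMeasure P] (μ : Measure T) [SFinite μ] {m k n : ℕ} (hkm : k ≤ m)
    {L : T → (Fin m → S) → ℝ} (hL : Measurable (Function.uncurry L)) :
    ∫⁻ ω : Fin n → S, eLpNorm (fun t => ∑ i ∈ injTuples k n, hproj P m k (L t) (ω ∘ i)) 2 μ ^ 2
        ∂(Measure.pi fun _ => P)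
      ≤ (4 * k * n) ^ k * ∫⁻ x, eLpNorm (fun t => L t x) 2 μ ^ 2 ∂(Measure.pi fun _ => P) := by
  have hU : Measurable (Function.uncurry fun t (ω : Fin n → S) =>
      ∑ i ∈ injTuples k n, hproj P m k (L t) (ω ∘ i)) :=
    measurable_uncurry_sum_hproj P hL
  rw [lintegral_eLpNorm_two_sq_swap μ _ hU, lintegral_eLpNorm_two_sq_swap μ _ hL,
    ← lintegral_const_mul' _ _ (by finiteness)]
  refine lintegral_mono fun t => ?_
  simp only [eLpNorm_two_sq]
  exact lintegral_enorm_sq_sum_hproj_le P hkm (hL.of_uncurry_left.aestronglyMeasurable)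

end Tonelli

section KernelBound

variable {S : Type*} [MeasurableSpace S] (P : Measure S) [IsProbabilityMeasure P] {d m : ℕ}
  {g : (Fin m → S) → EuclideanSpace ℝ (Fin d)} {K : EuclideanSpace ℝ (Fin d) → ℝ}

lemma lintegral_eLpNorm_two_sq_Kbar_le (hd : d ≠ 0) {s h M : ℝ} (hs : 0 ≤ s) (hh : 0 < h)
    (hM : max 1 (h ^ ((1 : ℝ) / d)) ≤ M) (hg : Measurable g) (hK : Measurable K) :
    ∫⁻ x, eLpNorm (fun t => Kbar d m g K h t x) 2 (weightedVolume _ s) ^ 2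
        ∂(Measure.pi fun _ => P)
      ≤ (∫⁻ x, ENNReal.ofReal ((1 + ‖g x‖) ^ s) ∂(Measure.pi fun _ => P))
        * (ENNReal.ofReal (M ^ s / h) * eLpNorm K 2 (weightedVolume _ s) ^ 2) := by
  have : NeZero d := ⟨hd⟩
  have hshift : Measurable (Function.uncurry fun t x => dilate d K h (t - g x)) :=
    (measurable_dilate hK d h).comp (measurable_fst.sub (hg.comp measurable_snd))
  calc _ = ∫⁻ t, eLpNorm (Kbar d m g K h t) 2 (Measure.pi fun _ => P) ^ 2
          ∂weightedVolume _ s :=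
        lintegral_eLpNorm_two_sq_swap _ _ (measurable_uncurry_Kbar hg hK h)
    _ ≤ ∫⁻ t, eLpNorm (fun x => dilate d K h (t - g x)) 2 (Measure.pi fun _ => P) ^ 2
          ∂weightedVolume _ s := by
        gcongr with t
        exact eLpNorm_Kbar_le P hg hK h t one_le_two
    _ = ∫⁻ x, eLpNorm (fun t => dilate d K h (t - g x)) 2 (weightedVolume _ s) ^ 2
          ∂(Measure.pi fun _ => P) :=
        (lintegral_eLpNorm_two_sq_swap _ _ hshift).symm
    _ ≤ ∫⁻ x, ENNReal.ofReal ((1 + ‖g x‖) ^ s)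
          * (ENNReal.ofReal (M ^ s / h) * eLpNorm K 2 (weightedVolume _ s) ^ 2)
          ∂(Measure.pi fun _ => P) := by
        gcongr with x
        have := lintegral_enorm_sq_dilate_sub_le (M := M) hs hh
          (by rwa [finrank_euclideanSpace_fin]) hK (g x)
        rwa [finrank_euclideanSpace_fin, ← eLpNorm_two_sq, ← eLpNorm_two_sq] at this
    _ = _ := lintegral_mul_const _ (by fun_prop)

lemma lintegral_eLpNorm_two_sq_sum_hproj_Kbar_le {k n : ℕ} (hkm : k ≤ m) (hd : d ≠ 0)
    {s h M : ℝ} (hs : 0 ≤ s) (hh : 0 < h) (hM : max 1 (h ^ ((1 : ℝ) / d)) ≤ M)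
    (hg : Measurable g) (hK : Measurable K) :
    ∫⁻ ω : Fin n → S, eLpNorm
        (fun t => ∑ i ∈ injTuples k n, hproj P m k (Kbar d m g K h t) (ω ∘ i)) 2
        (weightedVolume _ s) ^ 2 ∂(Measure.pi fun _ => P)
      ≤ (4 * k * n) ^ k * ((∫⁻ x, ENNReal.ofReal ((1 + ‖g x‖) ^ s) ∂(Measure.pi fun _ => P))
        * (ENNReal.ofReal (M ^ s / h) * eLpNorm K 2 (weightedVolume _ s) ^ 2)) := by
  refine (lintegral_eLpNorm_two_sq_sum_hproj_le P _ hkm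
    (measurable_uncurry_Kbar hg hK h)).trans ?_
  gcongr
  exact lintegral_eLpNorm_two_sq_Kbar_le P hd hs hh hM hg hK

lemma lintegral_eLpNorm_sq_sum_hproj_Kbar_le {q : ℝ≥0∞} {W : NNReal} {k n : ℕ} (hkm : k ≤ m)
    (hd : d ≠ 0) {s h M : ℝ} (hs : 0 ≤ s) (hh : 0 < h) (hM : max 1 (h ^ ((1 : ℝ) / d)) ≤ M)
    (hW : ∀ f : EuclideanSpace ℝ (Fin d) → ℝ, AEStronglyMeasurable f →
      eLpNorm f q volume ≤ W * eLpNorm f 2 (weightedVolume _ s))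
    (hg : Measurable g) (hK : Measurable K) :
    ∫⁻ ω : Fin n → S, eLpNorm
        (fun t => ∑ i ∈ injTuples k n, hproj P m k (Kbar d m g K h t) (ω ∘ i)) q volume ^ 2
        ∂(Measure.pi fun _ => P)
      ≤ W ^ 2 * ((4 * k * n) ^ k * ((∫⁻ x, ENNReal.ofReal ((1 + ‖g x‖) ^ s)
        ∂(Measure.pi fun _ => P))
        * (ENNReal.ofReal (M ^ s / h) * eLpNorm K 2 (weightedVolume _ s) ^ 2))) := by
  calc _ ≤ ∫⁻ ω : Fin n → S, (W * eLpNorm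
          (fun t => ∑ i ∈ injTuples k n, hproj P m k (Kbar d m g K h t) (ω ∘ i)) 2
          (weightedVolume _ s)) ^ 2 ∂(Measure.pi fun _ => P) := by
        gcongr with ω
        exact hW _ (measurable_uncurry_sum_hproj P
          (measurable_uncurry_Kbar hg hK h)).of_uncurry_right.aestronglyMeasurable
    _ = W ^ 2 * ∫⁻ ω : Fin n → S, eLpNorm
          (fun t => ∑ i ∈ injTuples k n, hproj P m k (Kbar d m g K h t) (ω ∘ i)) 2
          (weightedVolume _ s) ^ 2 ∂(Measure.pi fun _ => P) := by
        simp_rw [mul_pow]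
        exact lintegral_const_mul' _ _ (by finiteness)
    _ ≤ _ := by
        gcongr
        exact lintegral_eLpNorm_two_sq_sum_hproj_Kbar_le P hkm hd hs hh hM hg hK

end KernelBound

section ScalarBounds

lemma four_mul_mul_pow_le {k m n : ℕ} (hkm : k ≤ m) :
    (4 * k * n : ℝ) ^ k ≤ (4 * (m + 1)) ^ m * n ^ k := by
  have hbase : (4 * k : ℝ) ≤ 4 * (m + 1) := by
    have : (k : ℝ) ≤ m := by exact_mod_cast hkm
    linarith
  rw [mul_pow]
  gcongr
  calc (4 * k : ℝ) ^ k ≤ (4 * (m + 1)) ^ k := by gcongr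
    _ ≤ (4 * (m + 1)) ^ m := pow_le_pow_right₀ (by linarith [m.cast_nonneg (α := ℝ)]) hkm

lemma sq_sqrt_mul_sqrt_mul_rpow_div_sqrt {a b x h : ℝ} (ha : 0 ≤ a) (hb : 0 ≤ b) (hx : 0 ≤ x)
    (hh : 0 ≤ h) (k : ℕ) :
    (√a * √b * x ^ ((k : ℝ) / 2) / √h) ^ 2 = a * b * x ^ k / h := by
  have hpow : (x ^ ((k : ℝ) / 2)) ^ 2 = x ^ k := by
    rw [← Real.rpow_mul_natCast hx, Nat.cast_ofNat, div_mul_cancel₀ _ two_ne_zero,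
      Real.rpow_natCast]
  rw [div_pow, mul_pow, mul_pow, Real.sq_sqrt ha, Real.sq_sqrt hb, Real.sq_sqrt hh, hpow]

lemma mul_pow_mul_ofReal_le_sq_of_le {W : NNReal} {k m n : ℕ} (hkm : k ≤ m) {A c h J : ℝ}
    (hA : 0 ≤ A) (hc : 0 ≤ c) (hh : 0 < h) (hJ : 0 ≤ J) :
    (W : ℝ≥0∞) ^ 2 * ((4 * k * n) ^ k
        * (ENNReal.ofReal A * (ENNReal.ofReal (c / h) * ENNReal.ofReal J)))
      ≤ ENNReal.ofReal ((√(W ^ 2 * (4 * (m + 1)) ^ m * A * c + 1) * √J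
        * (n : ℝ) ^ ((k : ℝ) / 2) / √h) ^ 2) := by
  have hW : (W : ℝ≥0∞) ^ 2 = ENNReal.ofReal (W ^ 2) := by simp [ENNReal.ofReal_pow]
  have hpow : (4 * k * n : ℝ≥0∞) ^ k = ENNReal.ofReal ((4 * k * n) ^ k) := by
    rw [ENNReal.ofReal_pow (by positivity), ENNReal.ofReal_mul (by positivity),
      ENNReal.ofReal_mul (by positivity)]
    simp
  rw [hW, hpow, ← ENNReal.ofReal_mul (by positivity), ← ENNReal.ofReal_mul (by positivity),
    ← ENNReal.ofReal_mul (by positivity), ← ENNReal.ofReal_mul (by positivity),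
    sq_sqrt_mul_sqrt_mul_rpow_div_sqrt (by positivity) hJ (by positivity) hh.le]
  refine ENNReal.ofReal_le_ofReal ?_
  calc W ^ 2 * ((4 * k * n) ^ k * (A * (c / h * J)))
      ≤ W ^ 2 * ((4 * (m + 1)) ^ m * n ^ k * (A * (c / h * J))) := by
        gcongr
        exact four_mul_mul_pow_le hkm
    _ = W ^ 2 * (4 * (m + 1)) ^ m * A * c * J * n ^ k / h := by ring
    _ ≤ (W ^ 2 * (4 * (m + 1)) ^ m * A * c + 1) * J * n ^ k / h := by
        gcongr
        exact le_add_of_nonneg_right zero_le_one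

lemma rpow_half_le_ofReal {x : ℝ≥0∞} {B : ℝ} (hB : 0 ≤ B) (hx : x ≤ ENNReal.ofReal (B ^ 2)) :
    x ^ (1 / 2 : ℝ) ≤ ENNReal.ofReal B := by
  rw [one_div, ENNReal.rpow_inv_le_iff two_pos, ENNReal.rpow_ofNat, ← ENNReal.ofReal_pow hB]
  exact hx

lemma sqrt_integral_sq_rpow_integral_le {α β : Type*} [MeasurableSpace α] [MeasurableSpace β]
    {μ : Measure α} {ν : Measure β} {u : β → α → ℝ} {p B : ℝ} (hp : 0 < p) (hB : 0 ≤ B)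
    (h : (∫⁻ ω, eLpNorm (u ω) (ENNReal.ofReal p) μ ^ 2 ∂ν) ^ (1 / 2 : ℝ) ≤ ENNReal.ofReal B) :
    √(∫ ω, ((∫ t, |u ω t| ^ p ∂μ) ^ (1 / p)) ^ 2 ∂ν) ≤ B := by
  have hpoint (ω : β) : ‖((∫ t, |u ω t| ^ p ∂μ) ^ (1 / p)) ^ 2‖ₑ
      ≤ eLpNorm (u ω) (ENNReal.ofReal p) μ ^ 2 := by
    have hI : 0 ≤ ∫ t, |u ω t| ^ p ∂μ := integral_nonneg fun t => by positivity
    rw [eLpNorm_eq_lintegral_rpow_enorm_toReal (by simpa using hp) ENNReal.ofReal_ne_top,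
      ENNReal.toReal_ofReal hp.le, enorm_pow, Real.enorm_rpow_of_nonneg hI (by positivity)]
    gcongr
    refine (enorm_integral_le_lintegral_enorm _).trans_eq (lintegral_congr fun t => ?_)
    rw [Real.enorm_rpow_of_nonneg (abs_nonneg _) hp.le, Real.enorm_abs]
  rw [one_div, ENNReal.rpow_inv_le_iff two_pos, ENNReal.rpow_ofNat, ← ENNReal.ofReal_pow hB] at h
  refine Real.sqrt_le_iff.2 ⟨hB, (ENNReal.ofReal_le_ofReal_iff (sq_nonneg B)).1 ?_⟩
  rw [← Real.enorm_of_nonneg (integral_nonneg fun ω => sq_nonneg _)]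
  exact (enorm_integral_le_lintegral_enorm _).trans ((lintegral_mono hpoint).trans h)

lemma lintegral_ofReal_comp_of_map_eq_withDensity {Ω E : Type*} [MeasurableSpace Ω]
    [MeasurableSpace E] {μ : Measure Ω} {ν : Measure E} {X : Ω → E} {f w : E → ℝ}
    (hX : Measurable X) (hf : Measurable f) (hw : Measurable w) (hf0 : 0 ≤ f) (hw0 : 0 ≤ w)
    (hmap : μ.map X = ν.withDensity fun t => ENNReal.ofReal (f t))
    (hint : Integrable (fun t => w t * f t) ν) :
    ∫⁻ x, ENNReal.ofReal (w (X x)) ∂μ = ENNReal.ofReal (∫ t, w t * f t ∂ν) := by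
  rw [← lintegral_map (f := fun t => ENNReal.ofReal (w t)) (by fun_prop) hX, hmap,
    lintegral_withDensity_eq_lintegral_mul _ (by fun_prop) (by fun_prop),
    ofReal_integral_eq_lintegral_ofReal hint (ae_of_all _ fun t => mul_nonneg (hw0 t) (hf0 t))]
  refine lintegral_congr fun t => ?_
  rw [Pi.mul_apply, ENNReal.ofReal_mul (hw0 t), mul_comm]

end ScalarBounds

theorem stmt7_general.{u} (m d : ℕ) (hd : d ≠ 0) (p s b Fn : ℝ) (hp0 : 0 < p) (hp2 : p < 2)
    (hs : (d : ℝ) * (2 - p) / p < s) :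
    ∃ C : ℝ, 0 < C ∧ ∀ (S : Type u) [MeasurableSpace S] (P : Measure S) [IsProbabilityMeasure P]
      (g : (Fin m → S) → EuclideanSpace ℝ (Fin d)), Measurable g →
      ∫⁻ x, ENNReal.ofReal ((1 + ‖g x‖) ^ s) ∂(Measure.pi fun _ => P) ≤ ENNReal.ofReal Fn →
      ∀ K : EuclideanSpace ℝ (Fin d) → ℝ, Measurable K →
      Integrable (fun t => (1 + ‖t‖) ^ s * K t ^ 2) →
      ∀ k ≤ m, ∀ (n : ℕ) (h : ℝ), 0 < h → h ≤ b →
      (∫⁻ ω : Fin n → S, eLpNorm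
          (fun t => ∑ i ∈ injTuples k n, hproj P m k (Kbar d m g K h t) (ω ∘ i))
          (ENNReal.ofReal p) volume ^ 2 ∂(Measure.pi fun _ => P)) ^ (1 / 2 : ℝ)
        ≤ ENNReal.ofReal (C * √(∫ t, (1 + ‖t‖) ^ s * K t ^ 2) * (n : ℝ) ^ ((k : ℝ) / 2) / √h) := by
  have hs0 : 0 ≤ s := hs.le.trans' (by have := sub_pos.2 hp2; positivity)
  obtain ⟨W, hW⟩ := exists_eLpNorm_le_mul_eLpNorm_two_weightedVolume
    (E := EuclideanSpace ℝ (Fin d)) (F := ℝ) hp0 hp2 (by rwa [finrank_euclideanSpace_fin])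
  obtain ⟨M, hM⟩ : ∃ M : ℝ, M = max 1 (b ^ ((1 : ℝ) / d)) := ⟨_, rfl⟩
  have hM0 : 0 ≤ M := zero_le_one.trans (hM ▸ le_max_left _ _)
  refine ⟨√(W ^ 2 * (4 * (m + 1)) ^ m * |Fn| * M ^ s + 1), by positivity,
    fun S _ P _ g hg hmoment K hK hKi k hkm n h hh hhb => rpow_half_le_ofReal (by positivity) ?_⟩
  have hhM : max 1 (h ^ ((1 : ℝ) / d)) ≤ M := hM ▸ by gcongr
  have hI : 0 ≤ ∫ t : EuclideanSpace ℝ (Fin d), (1 + ‖t‖) ^ s * K t ^ 2 :=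
    integral_nonneg fun t => by positivity
  refine le_trans ?_ (mul_pow_mul_ofReal_le_sq_of_le (W := W) (n := n) hkm (abs_nonneg Fn)
    (by positivity : 0 ≤ M ^ s) hh hI)
  rw [← eLpNorm_two_sq_weightedVolume hKi]
  refine (lintegral_eLpNorm_sq_sum_hproj_Kbar_le P hkm hd hs0 hh hhM hW hg hK).trans ?_
  gcongr
  exact hmoment.trans (ENNReal.ofReal_le_ofReal (le_abs_self _))

/-- (Second part of Lemma 2.) Let `1 ≤ p < 2`, `s > d(2−p)/p`, `0 < b < ∞` and
`Fn ≥ ‖f_g‖_{L_1(μ_s)}`. There is a constant `C`, depending only on `m, d, p, s, b` and `Fn`,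
such that whenever `g(X_1,…,X_m)` has a density `f_g ∈ L_1(μ_s)` with `‖f_g‖_{L_1(μ_s)} ≤ Fn`
and `K² ∈ L_1(μ_s)`, for every `1 ≤ k ≤ m`, `n ≥ k` and `0 < h ≤ b`,
`(E ‖Σ_{i ∈ I_n^k} π_k K̄_h(·, X_{i_1},…,X_{i_k})‖_{L_p}²)^{1/2}
  ≤ C ‖K‖_{L_2(μ_s)} n^{k/2} / h^{1/2}`. -/
theorem stmt7 (m d : ℕ) (hm : 1 ≤ m) (hd : 1 ≤ d) (p s b Fn : ℝ)
    (hp1 : 1 ≤ p) (hp2 : p < 2) (hs : (d : ℝ) * (2 - p) / p < s) (hb : 0 < b) :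
    ∃ C : ℝ, 0 < C ∧
      ∀ (S : Type) (_ : MeasurableSpace S) (P : Measure S), IsProbabilityMeasure P →
      ∀ g : (Fin m → S) → EuclideanSpace ℝ (Fin d), Measurable g →
      ∀ fg : EuclideanSpace ℝ (Fin d) → ℝ, Measurable fg → (∀ t, 0 ≤ fg t) →
        (Measure.pi fun _ : Fin m => P).map g =
          (volume.withDensity fun t => ENNReal.ofReal (fg t)) →
        Integrable (fun t : EuclideanSpace ℝ (Fin d) => (1 + ‖t‖) ^ s * fg t) →
        (∫ t : EuclideanSpace ℝ (Fin d), (1 + ‖t‖) ^ s * fg t) ≤ Fn →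
      ∀ K : EuclideanSpace ℝ (Fin d) → ℝ, Measurable K →
        Integrable (fun t : EuclideanSpace ℝ (Fin d) => (1 + ‖t‖) ^ s * (K t) ^ 2) →
      ∀ k : ℕ, 1 ≤ k → k ≤ m → ∀ n : ℕ, k ≤ n → ∀ h : ℝ, 0 < h → h ≤ b →
        Real.sqrt (∫ ω : Fin n → S,
            ((∫ t : EuclideanSpace ℝ (Fin d),
                |∑ i ∈ injTuples k n, hproj P m k (Kbar d m g K h t) (ω ∘ i)| ^ p) ^ (1 / p)) ^ 2
          ∂(Measure.pi fun _ : Fin n => P)) ≤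
        C * Real.sqrt (∫ t : EuclideanSpace ℝ (Fin d), (1 + ‖t‖) ^ s * (K t) ^ 2) *
          (n : ℝ) ^ ((k : ℝ) / 2) / Real.sqrt h := by
  obtain ⟨C, hC, H⟩ := stmt7_general m d (by lia) p s b Fn (by linarith) hp2 hs
  refine ⟨C, hC, fun S _ P _ g hg fg hfg hfg0 hmap hfi hFn K hK hKi k _ hkm n _ h hh hhb =>
    sqrt_integral_sq_rpow_integral_le (by linarith) (by positivity)
      (H S P g hg ?_ K hK hKi k hkm n h hh hhb)⟩
  rw [lintegral_ofReal_comp_of_map_eq_withDensity (w := fun t => (1 + ‖t‖) ^ s) hg hfg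
    (by fun_prop) hfg0 (fun t => by positivity) hmap hfi]
  exact ENNReal.ofReal_le_ofReal hFn
end
end
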